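/- The immediate parabolic basin of P_ω consists of exactly q components permuted cyclically with combinatorial rotation number p/q: there are exactly q distinct connected components of Λ_ω whose closure contains 0, and they can be indexed B_0, B_1, …, B_{q−1} so that P_ω maps B_j into B_{(j+p) mod q} for every j; in particular each B_j is invariant under the q-th iterate P_ω^q. -/

import Mathlib

open Complex Filter Topology Set

/-- The quadratic polynomial `P_ω(z) = ω z + z²`. -/
noncomputable def Pq (ω : ℂ) : ℂ → ℂ := fun z => ω * z + z ^ 2

/-- The augmented parabolic basin `Λ̃_ω`: points whose orbit converges to `0`. -/
def basinAug (ω : ℂ) : Set ℂ := {z | Tendsto (fun n => (Pq ω)^[n] z) atTop (𝓝 0)}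

/-- The backward orbit of the parabolic fixed point `0`. -/
def preFixed (ω : ℂ) : Set ℂ := {z | ∃ n : ℕ, (Pq ω)^[n] z = 0}

/-- The parabolic basin `Λ_ω`. -/
def basin (ω : ℂ) : Set ℂ := basinAug ω \ preFixed ω


section

def LocSub (v : ℂ → ℝ) : Prop :=
  Continuous v ∧ (∀ z, 0 ≤ v z) ∧
    ∀ z, 0 < v z → ∃ ρ > 0, ∀ r, 0 < r → r < ρ → v z ≤ Real.circleAverage v z r

lemma circleAverage_re_entire {p : ℂ → ℂ} (hp : Differentiable ℂ p) (z : ℂ) (r : ℝ) :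
    Real.circleAverage (fun x => (p x).re) z r = (p z).re := by
  have h1 : Real.circleAverage p z r = p z := hp.diffContOnCl.circleAverage
  have h2 := ContinuousLinearMap.circleAverage_comp_comm (f := p) (c := z) (R := r) Complex.reCLM
    hp.continuous.continuousOn.circleIntegrable'
  rw [h1] at h2
  exact h2

lemma LocSub.max_principle {v : ℂ → ℝ} (hv : LocSub v) {p : ℂ → ℂ} (hp : Differentiable ℂ p)
    (Z : ℂ) {R : ℝ} (hR : 0 < R) (hle : ∀ x ∈ Metric.sphere Z R, v x ≤ (p x).re) :
    v Z ≤ (p Z).re := by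
  obtain ⟨hc, h0, hl⟩ := hv
  by_contra hcon
  push Not at hcon
  set δ := v Z - (p Z).re with hδ
  have hδ0 : 0 < δ := by linarith
  set ε := δ / (2 * R ^ 2) with hε
  have hε0 : 0 < ε := by positivity
  have hεR : ε * R ^ 2 = δ / 2 := by rw [hε]; field_simp
  set w : ℂ → ℝ := fun x => v x - (p x).re + ε * ‖x - Z‖ ^ 2 with hw
  have hpc := hp.continuous
  have hwc : Continuous w := by
    rw [hw]; fun_prop
  obtain ⟨x0, hx0, hmax⟩ := (isCompact_closedBall Z R).exists_isMaxOn
    (Metric.nonempty_closedBall.2 hR.le) hwc.continuousOn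
  have hwZ : w Z ≤ w x0 := hmax (Metric.mem_closedBall_self hR.le)
  have hwZ' : w Z = δ := by simp [hw, hδ]
  have hint : dist x0 Z < R := by
    rcases lt_or_eq_of_le (Metric.mem_closedBall.1 hx0) with h | h
    · exact h
    · exfalso
      have := hle x0 h
      have h2 : w x0 ≤ ε * R ^ 2 := by
        rw [dist_eq_norm] at h
        simp only [hw, h]; linarith
      linarith
  have hsub : ∃ ρ > 0, ∀ r, 0 < r → r < ρ → v x0 ≤ Real.circleAverage v x0 r := by
    rcases (h0 x0).lt_or_eq with h | h
    · exact hl x0 h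
    · refine ⟨1, one_pos, fun r _ _ => ?_⟩
      rw [← h]
      exact Real.circleAverage_nonneg_of_nonneg (fun x _ => h0 x)
  obtain ⟨ρ, hρ, hsub⟩ := hsub
  set r := min (ρ / 2) ((R - dist x0 Z) / 2) with hr
  have hr0 : 0 < r := lt_min (by positivity) (by linarith)
  have hr1 : r < ρ := lt_of_le_of_lt (min_le_left _ _) (by linarith)
  have hr2 : r ≤ (R - dist x0 Z) / 2 := min_le_right _ _
  have hs := hsub r hr0 hr1
  set P : ℂ → ℂ := fun x => p x - ε * (2 * (x - x0) * (starRingEnd ℂ) (x0 - Z) + (‖x0 - Z‖ : ℂ) ^ 2)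
    + ((w x0 - ε * r ^ 2 : ℝ) : ℂ) with hP
  have hPd : Differentiable ℂ P := by rw [hP]; fun_prop
  have hcomp : ∀ x ∈ Metric.sphere x0 |r|, v x ≤ (P x).re := by
    intro x hx
    rw [abs_of_pos hr0, mem_sphere_iff_norm] at hx
    have hxb : x ∈ Metric.closedBall Z R := by
      rw [Metric.mem_closedBall]
      have := dist_triangle x x0 Z
      rw [dist_eq_norm x x0, hx] at this
      linarith
    have h1 : w x ≤ w x0 := hmax hxb
    have h2 : ‖x - Z‖ ^ 2 = r ^ 2 + (2 * (x - x0) * (starRingEnd ℂ) (x0 - Z)).re + ‖x0 - Z‖ ^ 2 := by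
      rw [← hx, ← Complex.normSq_eq_norm_sq, ← Complex.normSq_eq_norm_sq, ← Complex.normSq_eq_norm_sq]
      simp [Complex.normSq_apply]
      ring
    have h3 : (P x).re = (p x).re - ε * ((2 * (x - x0) * (starRingEnd ℂ) (x0 - Z)).re + ‖x0 - Z‖ ^ 2)
      + (w x0 - ε * r ^ 2) := by
      have : (ε * (2 * (x - x0) * (starRingEnd ℂ) (x0 - Z) + (‖x0 - Z‖ : ℂ) ^ 2) : ℂ).re
        = ε * ((2 * (x - x0) * (starRingEnd ℂ) (x0 - Z)).re + ‖x0 - Z‖ ^ 2) := by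
        rw [Complex.re_ofReal_mul, Complex.add_re, ← Complex.ofReal_pow, Complex.ofReal_re]
      simp only [hP]
      rw [Complex.add_re, Complex.sub_re, this, Complex.ofReal_re]
    have h4 : w x = v x - (p x).re + ε * ‖x - Z‖ ^ 2 := rfl
    rw [h2] at h4
    rw [h3]
    linarith
  have h5 : Real.circleAverage v x0 r ≤ Real.circleAverage (fun x => (P x).re) x0 r :=
    Real.circleAverage_mono hc.continuousOn.circleIntegrable'
      (Complex.continuous_re.comp hPd.continuous).continuousOn.circleIntegrable' hcomp
  rw [circleAverage_re_entire hPd] at h5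
  have h6 : (P x0).re = (p x0).re - ε * ‖x0 - Z‖ ^ 2 + (w x0 - ε * r ^ 2) := by
    simp only [hP]
    rw [Complex.add_re, Complex.sub_re, Complex.re_ofReal_mul, Complex.ofReal_re]
    simp [← Complex.ofReal_pow]
  have h7 : w x0 = v x0 - (p x0).re + ε * ‖x0 - Z‖ ^ 2 := rfl
  have : 0 < ε * r ^ 2 := by positivity
  linarith

lemma fourier_approx (v : ℂ → ℝ) (hv : Continuous v) (Z : ℂ) {R : ℝ} (hR : 0 < R) {ε : ℝ}
    (hε : 0 < ε) : ∃ p : ℂ → ℂ, Differentiable ℂ p ∧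
      ∀ x ∈ Metric.sphere Z R, |v x - (p x).re| ≤ ε := by
  have : Fact (0 < 2 * Real.pi) := ⟨Real.two_pi_pos⟩
  -- parametrization
  let e : AddCircle (2 * Real.pi) → ℂ := fun t => Z + R * fourier 1 t
  have he : Continuous e := by fun_prop
  let V : C(AddCircle (2 * Real.pi), ℂ) := ⟨fun t => ((v (e t) : ℝ) : ℂ), by fun_prop⟩
  have hV : V ∈ (Submodule.span ℂ (Set.range (fourier (T := 2 * Real.pi)))).topologicalClosure := by
    rw [span_fourier_closure_eq_top]; trivial
  rw [← SetLike.mem_coe, Submodule.topologicalClosure_coe, Metric.mem_closure_iff] at hV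
  obtain ⟨F, hF, hd⟩ := hV ε hε
  have key : ∀ F ∈ Submodule.span ℂ (Set.range (fourier (T := 2 * Real.pi))),
      ∃ p q : ℂ → ℂ, Differentiable ℂ p ∧ Differentiable ℂ q ∧
        ∀ t, F t = p (e t) + (starRingEnd ℂ) (q (e t)) := by
    intro F hF
    induction hF using Submodule.span_induction with
    | mem x h =>
      obtain ⟨n, rfl⟩ := h
      have hx : ∀ t, (e t - Z) / R = fourier 1 t := by
        intro t; simp only [e]
        have : (R : ℂ) ≠ 0 := by exact_mod_cast hR.ne'
        field_simp; ring
      have hpow : ∀ (k : ℕ) (t : AddCircle (2 * Real.pi)), fourier (k : ℤ) t = (fourier 1 t) ^ k := by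
        intro k t
        induction k with
        | zero => simp
        | succ k ih => rw [pow_succ, ← ih, ← fourier_add]; simp
      obtain ⟨k, rfl | rfl⟩ := n.eq_nat_or_neg
      · refine ⟨fun x => ((x - Z) / R) ^ k, fun _ => 0, by fun_prop, by fun_prop, fun t => ?_⟩
        simp only [hx, hpow]; simp
      · refine ⟨fun _ => 0, fun x => ((x - Z) / R) ^ k, by fun_prop, by fun_prop, fun t => ?_⟩
        simp only [hx]; rw [fourier_neg, hpow]; simp
    | zero => exact ⟨fun _ => 0, fun _ => 0, by fun_prop, by fun_prop, fun t => by simp⟩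
    | add x y _ _ hx hy =>
      obtain ⟨p, q, hp, hq, h⟩ := hx
      obtain ⟨p', q', hp', hq', h'⟩ := hy
      refine ⟨fun x => p x + p' x, fun x => q x + q' x, by fun_prop, by fun_prop, fun t => ?_⟩
      simp [h, h']; ring
    | smul a x _ hx =>
      obtain ⟨p, q, hp, hq, h⟩ := hx
      refine ⟨fun x => a * p x, fun x => (starRingEnd ℂ) a * q x, by fun_prop, by fun_prop, fun t => ?_⟩
      simp [h]; ring
  obtain ⟨p, q, hp, hq, h⟩ := key F hF
  refine ⟨fun x => p x + q x, by fun_prop, fun x hx => ?_⟩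
  have : ∃ t, e t = x := by
    rw [mem_sphere_iff_norm] at hx
    refine ⟨((x - Z).arg : ℝ), ?_⟩
    simp only [e]
    rw [fourier_coe_apply]
    have h1 : (2 * Real.pi * Complex.I * ((1 : ℤ) : ℂ) * ((x - Z).arg : ℂ) / ((2 * Real.pi : ℝ) : ℂ)) = (x - Z).arg * Complex.I := by
      push_cast
      field_simp
    rw [h1, ← hx, Complex.norm_mul_exp_arg_mul_I]; ring
  obtain ⟨t, rfl⟩ := this
  have h2 : ‖V t - F t‖ ≤ ε := by
    rw [← dist_eq_norm]
    exact (ContinuousMap.dist_apply_le_dist t).trans hd.le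
  have h3 : v (e t) - (p (e t) + q (e t)).re = (V t - F t).re := by
    rw [h]; simp [V]
  rw [h3]
  exact (Complex.abs_re_le_norm _).trans h2

lemma LocSub.le_circleAverage {v : ℂ → ℝ} (hv : LocSub v) (Z : ℂ) {R : ℝ} (hR : 0 < R) :
    v Z ≤ Real.circleAverage v Z R := by
  apply le_of_forall_pos_le_add
  intro ε hε
  obtain ⟨p, hp, hpe⟩ := fourier_approx v hv.1 Z hR (half_pos hε)
  have h1 := hv.max_principle (p := fun x => p x + (ε / 2 : ℝ)) (by fun_prop) Z hR (by
    intro x hx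
    have := abs_le.1 (hpe x hx)
    rw [Complex.add_re, Complex.ofReal_re]
    linarith [this.2])
  have h2 : Real.circleAverage (fun x => (p x - (ε / 2 : ℝ)).re) Z R ≤ Real.circleAverage v Z R := by
    refine Real.circleAverage_mono ?_ hv.1.continuousOn.circleIntegrable' ?_
    · apply Continuous.continuousOn _ |>.circleIntegrable'
      have := hp.continuous
      fun_prop
    · intro x hx
      rw [abs_of_pos hR] at hx
      have := abs_le.1 (hpe x hx)
      rw [Complex.sub_re, Complex.ofReal_re]
      linarith [this.1]
  rw [circleAverage_re_entire (by fun_prop)] at h2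
  rw [Complex.add_re, Complex.ofReal_re] at h1
  rw [Complex.sub_re, Complex.ofReal_re] at h2
  linarith

end

section

lemma LocSub.area {v : ℂ → ℝ} (hv : LocSub v) (Z : ℂ) {R : ℝ} (hR : 0 < R) :
    v Z * (Real.pi * R ^ 2) ≤ ∫ x in Metric.ball Z R, v x := by
  have hc := hv.1
  have h1 : ∫ x in Metric.ball Z R, v x = ∫ x, (Metric.ball (0:ℂ) R).indicator (fun y => v (Z + y)) x := by
    rw [← MeasureTheory.integral_indicator measurableSet_ball,
      ← MeasureTheory.integral_add_left_eq_self _ Z]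
    congr 1
    ext x
    simp [indicator]
  rw [h1, ← Complex.integral_comp_polarCoord_symm, polarCoord_target]
  have h2 : ∫ p in Ioi (0:ℝ) ×ˢ Ioo (-Real.pi) Real.pi, p.1 • (Metric.ball (0:ℂ) R).indicator (fun y => v (Z + y)) (Complex.polarCoord.symm p)
     = ∫ p in Ioo (0:ℝ) R ×ˢ Ioo (-Real.pi) Real.pi, p.1 * v (Z + p.1 * (Real.cos p.2 + Real.sin p.2 * I)) := by
    rw [← MeasureTheory.integral_indicator (measurableSet_Ioi.prod measurableSet_Ioo),
      ← MeasureTheory.integral_indicator (measurableSet_Ioo.prod measurableSet_Ioo)]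
    congr 1
    ext ⟨t, θ⟩
    simp only [indicator, mem_prod, mem_Ioi, mem_Ioo, Metric.mem_ball, dist_zero_right, Complex.polarCoord_symm_apply]
    by_cases ht : 0 < t
    · simp only [ht, true_and]
      by_cases h : t < R <;> simp [h, abs_of_pos ht]
    · simp [ht]
  rw [h2, MeasureTheory.Measure.volume_eq_prod, MeasureTheory.setIntegral_prod]
  · have h3 : ∀ t ∈ Ioo 0 R, t * (2 * Real.pi * v Z) ≤ ∫ θ in Ioo (-Real.pi) Real.pi, t * v (Z + t * (Real.cos θ + Real.sin θ * I)) := by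
      intro t ht
      rw [MeasureTheory.integral_const_mul]
      refine mul_le_mul_of_nonneg_left ?_ ht.1.le
      have h4 := hv.le_circleAverage Z ht.1
      have h5 : ∫ θ in Ioo (-Real.pi) Real.pi, v (Z + t * (Real.cos θ + Real.sin θ * I)) =
          ∫ θ in (0:ℝ)..(2 * Real.pi), v (circleMap Z t θ) := by
        rw [← MeasureTheory.integral_Ioc_eq_integral_Ioo, ← intervalIntegral.integral_of_le (by linarith [Real.pi_pos])]
        have hper : Function.Periodic (fun θ => v (circleMap Z t θ)) (2 * Real.pi) := fun θ => by
          simp [periodic_circleMap Z t θ]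
        have := hper.intervalIntegral_add_eq (-Real.pi) 0
        rw [show -Real.pi + 2 * Real.pi = Real.pi by ring, zero_add] at this
        rw [← this]
        congr 1
        ext θ
        rw [circleMap, Complex.exp_mul_I]
        simp
      rw [h5]
      rw [Real.circleAverage, smul_eq_mul, inv_mul_eq_div, le_div_iff₀ (by positivity)] at h4
      linarith
    have h6 : v Z * (Real.pi * R ^ 2) = ∫ t in Ioo 0 R, t * (2 * Real.pi * v Z) := by
      rw [← MeasureTheory.integral_Ioc_eq_integral_Ioo, ← intervalIntegral.integral_of_le hR.le,
        intervalIntegral.integral_mul_const, integral_id]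
      ring
    rw [h6]
    refine MeasureTheory.setIntegral_mono_on ?_ ?_ measurableSet_Ioo h3
    · exact (Continuous.integrableOn_Icc (by fun_prop)).mono_set Ioo_subset_Icc_self
    · have : MeasureTheory.IntegrableOn (fun p : ℝ × ℝ => p.1 * v (Z + p.1 * (Real.cos p.2 + Real.sin p.2 * I))) (Ioo (0:ℝ) R ×ˢ Ioo (-Real.pi) Real.pi) (MeasureTheory.volume.prod MeasureTheory.volume) := by
        refine MeasureTheory.IntegrableOn.mono_set (t := Icc (0:ℝ) R ×ˢ Icc (-Real.pi) Real.pi) ?_ (prod_mono Ioo_subset_Icc_self Ioo_subset_Icc_self)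
        exact ContinuousOn.integrableOn_compact (isCompact_Icc.prod isCompact_Icc) (Continuous.continuousOn (by fun_prop))
      rw [MeasureTheory.IntegrableOn, ← MeasureTheory.Measure.prod_restrict] at this
      exact this.integral_prod_left
  · refine MeasureTheory.IntegrableOn.mono_set (t := Icc (0:ℝ) R ×ˢ Icc (-Real.pi) Real.pi) ?_ (prod_mono Ioo_subset_Icc_self Ioo_subset_Icc_self)
    exact ContinuousOn.integrableOn_compact (isCompact_Icc.prod isCompact_Icc) (Continuous.continuousOn (by fun_prop))

lemma LocSub.area_le {v : ℂ → ℝ} (hv : LocSub v) (Z : ℂ) {R S : ℝ} (hR : 0 < R) {E : Set ℂ}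
    (hE : MeasurableSet E) (hE0 : ∀ x ∉ E, v x = 0) (hS : ∀ x ∈ Metric.ball Z R, v x ≤ S) :
    v Z * (Real.pi * R ^ 2) ≤ S * MeasureTheory.volume.real (E ∩ Metric.ball Z R) := by
  refine (hv.area Z hR).trans ?_
  have hc := hv.1
  have h1 : ∫ x in Metric.ball Z R, v x = ∫ x in Metric.ball Z R, E.indicator v x := by
    congr 1; ext x
    by_cases h : x ∈ E <;> simp [h, hE0]
  rw [h1, MeasureTheory.setIntegral_indicator hE, inter_comm]
  have hfin : MeasureTheory.volume (E ∩ Metric.ball Z R) < ⊤ :=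
    (MeasureTheory.measure_mono inter_subset_right).trans_lt MeasureTheory.measure_ball_lt_top
  have h2 : ∫ x in E ∩ Metric.ball Z R, v x ≤ ∫ x in E ∩ Metric.ball Z R, S := by
    refine MeasureTheory.setIntegral_mono_on ?_ ?_ (hE.inter measurableSet_ball) (fun x hx => hS x hx.2)
    · refine MeasureTheory.IntegrableOn.mono_set (t := Metric.closedBall Z R) ?_ (inter_subset_right.trans Metric.ball_subset_closedBall)
      exact ContinuousOn.integrableOn_compact (isCompact_closedBall Z R) hc.continuousOn
    · simp [MeasureTheory.integrableOn_const_iff, hfin]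
  refine h2.trans ?_
  simp [mul_comm]

end

section

lemma vol_translates {E : Set ℂ} (hE : MeasurableSet E) {M : ℝ} (hM : ∀ z ∈ E, |z.im| ≤ M)
    (hd : ∀ k : ℕ, 1 ≤ k → ∀ z ∈ E, z + k ∉ E) : MeasureTheory.volume E < ⊤ := by
  set S : ℤ → Set ℂ := fun n => {z | z ∈ E ∧ ⌊z.re⌋ = n} with hS
  have hSm : ∀ n, MeasurableSet (S n) := fun n =>
    hE.inter ((Int.measurable_floor.comp Complex.measurable_re) (measurableSet_singleton n))
  have hU : E = ⋃ n, S n := by ext z; simp [hS]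
  have hdis : Pairwise (Function.onFun Disjoint S) := by
    intro a b hab
    refine Set.disjoint_left.2 fun z ha hb => hab (ha.2.symm.trans hb.2)
  set T : ℤ → Set ℂ := fun n => (fun z : ℂ => z + (n : ℂ)) ⁻¹' (S n) with hT
  have hTm : ∀ n, MeasurableSet (T n) := fun n => (measurable_add_const _) (hSm n)
  have hdisT : Pairwise (Function.onFun Disjoint T) := by
    have key : ∀ a b : ℤ, a < b → ∀ z, z ∈ T a → z ∈ T b → False := by
      intro a b hab z ha hb
      obtain ⟨k, hk⟩ := Int.eq_ofNat_of_zero_le (sub_nonneg.2 hab.le)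
      refine hd k (by omega) _ ha.1 ?_
      have : z + (a:ℂ) + (k:ℂ) = z + (b:ℂ) := by
        have : (b:ℂ) = a + k := by
          have : b = a + k := by omega
          rw [this]; push_cast; ring
        rw [this]; ring
      rw [this]; exact hb.1
    intro a b hab
    refine Set.disjoint_left.2 fun z ha hb => ?_
    rcases lt_or_gt_of_ne hab with h | h
    · exact key a b h z ha hb
    · exact key b a h z hb ha
  have hv : MeasureTheory.volume E = MeasureTheory.volume (⋃ n, T n) := by
    rw [hU, MeasureTheory.measure_iUnion hdis hSm, MeasureTheory.measure_iUnion hdisT hTm]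
    congr 1; ext n
    exact (MeasureTheory.measure_preimage_add_right _ _ _).symm
  rw [hv]
  refine lt_of_le_of_lt (MeasureTheory.measure_mono (t := Metric.closedBall (0:ℂ) (1 + M)) ?_)
    MeasureTheory.measure_closedBall_lt_top
  intro z hz
  obtain ⟨n, hn⟩ := mem_iUnion.1 hz
  have h1 := hM _ hn.1
  have h2 : ⌊(z + (n:ℂ)).re⌋ = n := hn.2
  simp at h1 h2
  rw [mem_closedBall_zero_iff]
  refine (Complex.norm_le_abs_re_add_abs_im z).trans ?_
  rw [abs_of_nonneg h2.1]
  linarith [h2.2]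

lemma strip_bound {u : ℂ → ℝ} (hc : Continuous u) {D : ℝ} (hD : 1 < D)
    (hu : ∀ Z, u Z = D * u (Z + 1)) {M : ℝ} (hM : ∀ Z, M ≤ |Z.im| → u Z = 0) :
    ∃ C > 0, ∀ Z, u Z ≤ C * D ^ (-Z.re) := by
  have hD0 : 0 < D := by linarith
  set h : ℂ → ℝ := fun Z => u Z * D ^ (Z.re) with hh
  have hhc : Continuous h := by
    refine hc.mul ?_
    exact (Real.continuous_const_rpow hD0.ne').comp Complex.continuous_re
  have hper : Function.Periodic h 1 := by
    intro Z
    simp only [hh]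
    rw [hu Z, Complex.add_re, Complex.one_re, Real.rpow_add hD0, Real.rpow_one]
    ring
  obtain ⟨C, hC⟩ := (isCompact_closedBall (0:ℂ) (1 + M)).exists_bound_of_continuousOn hhc.continuousOn
  refine ⟨max C 1, by positivity, fun Z => ?_⟩
  have h1 : h Z ≤ max C 1 := by
    by_cases hZ : M ≤ |Z.im|
    · simp [hh, hM Z hZ]
    · push Not at hZ
      have h2 := hper.sub_zsmul_eq ⌊Z.re⌋ (x := Z)
      rw [← h2]
      refine le_max_of_le_left ((le_abs_self _).trans (hC _ ?_))
      rw [mem_closedBall_zero_iff]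
      refine (Complex.norm_le_abs_re_add_abs_im _).trans ?_
      have h3 : |(Z - ⌊Z.re⌋ • (1:ℂ)).re| ≤ 1 := by
        simp
        exact abs_le.2 ⟨by linarith [Int.fract_nonneg Z.re], (Int.fract_lt_one Z.re).le⟩
      have h4 : |(Z - ⌊Z.re⌋ • (1:ℂ)).im| ≤ M := by
        simp; exact hZ.le
      linarith
  rw [Real.rpow_neg hD0.le, ← div_eq_mul_inv, le_div_iff₀ (by positivity)]
  exact h1

lemma comp_pos_locSub {u : ℂ → ℝ} (hc : Continuous u) (h0 : ∀ z, 0 ≤ u z)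
    (hl : ∀ z, 0 < u z → ∃ ρ > 0, ∀ r, 0 < r → r < ρ → u z ≤ Real.circleAverage u z r) (Z0 : ℂ) :
    LocSub ((connectedComponentIn {z | 0 < u z} Z0).indicator u) := by
  set U := {z | 0 < u z} with hU
  have hUo : IsOpen U := isOpen_lt continuous_const hc
  set E := connectedComponentIn U Z0 with hE
  have hEo : IsOpen E := hUo.connectedComponentIn
  have hEU : E ⊆ U := connectedComponentIn_subset _ _
  refine ⟨?_, fun z => indicator_nonneg (fun z _ => h0 z) z, ?_⟩
  · refine continuous_indicator ?_ hc.continuousOn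
    intro a ha
    by_contra hne
    have haU : a ∈ U := lt_of_le_of_ne (h0 a) (Ne.symm hne)
    have hao : IsOpen (connectedComponentIn U a) := hUo.connectedComponentIn
    obtain ⟨b, hb1, hb2⟩ := mem_closure_iff.1 ha.1 _ hao (mem_connectedComponentIn haU)
    have e1 := connectedComponentIn_eq hb1
    have e2 := connectedComponentIn_eq hb2
    have : a ∈ E := by
      rw [hE, e2, ← e1]; exact mem_connectedComponentIn haU
    rw [frontier, hEo.interior_eq] at ha
    exact ha.2 this
  · intro z hz
    have hzE : z ∈ E := by
      by_contra h
      simp [h] at hz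
    obtain ⟨ρ, hρ, hr⟩ := hl z (hEU hzE)
    obtain ⟨ρ', hρ', hr'⟩ := Metric.isOpen_iff.1 hEo z hzE
    refine ⟨min ρ ρ', lt_min hρ hρ', fun r hr0 hr1 => ?_⟩
    rw [indicator_of_mem hzE]
    refine (hr r hr0 (hr1.trans_le (min_le_left _ _))).trans_eq ?_
    refine Real.circleAverage_congr_sphere ?_
    intro x hx
    rw [indicator_of_mem]
    refine hr' ?_
    rw [abs_of_pos hr0, mem_sphere_iff_norm] at hx
    rw [mem_ball_iff_norm, hx]
    exact hr1.trans_le (min_le_right _ _)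

lemma strip_lemma {u : ℂ → ℝ} (hc : Continuous u) (h0 : ∀ z, 0 ≤ u z)
    (hl : ∀ z, 0 < u z → ∃ ρ > 0, ∀ r, 0 < r → r < ρ → u z ≤ Real.circleAverage u z r)
    {D : ℝ} (hD : 1 < D)
    (hu : ∀ Z, u Z = D * u (Z + 1)) {M : ℝ} (hM : ∀ Z, M ≤ |Z.im| → u Z = 0)
    {Z0 : ℂ} (hZ0 : 0 < u Z0) :
    ∃ k : ℕ, 1 ≤ k ∧ Z0 + k ∈ connectedComponentIn {z | 0 < u z} Z0 := by
  by_contra hcon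
  push Not at hcon
  have hD0 : 0 < D := by linarith
  have hv := comp_pos_locSub hc h0 hl Z0
  set U := {z | 0 < u z} with hU
  have hUo : IsOpen U := isOpen_lt continuous_const hc
  set E := connectedComponentIn U Z0 with hE
  have hEo : IsOpen E := hUo.connectedComponentIn
  have hEU : E ⊆ U := connectedComponentIn_subset _ _
  have hZE : Z0 ∈ E := mem_connectedComponentIn hZ0
  set v := E.indicator u with hvdef
  have hvu : ∀ z, v z ≤ u z := fun z => indicator_le_self' (fun z _ => h0 z) z
  have huk : ∀ (k : ℕ) Z, u Z = D ^ k * u (Z + k) := by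
    intro k
    induction k with
    | zero => simp
    | succ k ih =>
      intro Z
      rw [ih, hu]; push_cast; rw [add_assoc, pow_succ]; ring
  have hd : ∀ k : ℕ, 1 ≤ k → ∀ z ∈ E, z + k ∉ E := by
    intro k hk z hz hzk
    apply hcon k hk
    have himg : (fun x : ℂ => x + (k:ℂ)) '' E ⊆ E := by
      have h1 : IsPreconnected ((fun x : ℂ => x + (k:ℂ)) '' E) :=
        isPreconnected_connectedComponentIn.image _ (by fun_prop)
      have h2 : (fun x : ℂ => x + (k:ℂ)) '' E ⊆ U := by
        rintro _ ⟨x, hx, rfl⟩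
        have h3 : 0 < u x := hEU hx
        rw [huk k x] at h3
        exact pos_of_mul_pos_right h3 (by positivity)
      have h4 := h1.subset_connectedComponentIn (mem_image_of_mem _ hz) h2
      exact h4.trans (connectedComponentIn_eq hzk).symm.subset
    exact himg (mem_image_of_mem _ hZE)
  have hvol : MeasureTheory.volume E < ⊤ := by
    refine vol_translates hEo.measurableSet (M := M) ?_ hd
    intro z hz
    by_contra h
    push Not at h
    have : 0 < u z := hEU hz
    rw [hM z h.le] at this
    exact lt_irrefl _ this
  obtain ⟨C, hC0, hC⟩ := strip_bound hc hD hu hM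
  have hvout : ∀ x ∉ E, v x = 0 := fun x hx => indicator_of_notMem hx u
  -- unbounded
  have hunb : ∀ S, ∃ Z, S < v Z := by
    intro S
    by_contra h
    push Not at h
    have h1 : ∀ R : ℝ, 0 < R → u Z0 * (Real.pi * R ^ 2) ≤ S * MeasureTheory.volume.real E := by
      intro R hR
      have := hv.area_le Z0 hR hEo.measurableSet hvout (S := S) (fun x _ => h x)
      rw [hvdef, indicator_of_mem hZE] at this
      refine this.trans (mul_le_mul_of_nonneg_left ?_ ?_)
      · exact MeasureTheory.measureReal_mono inter_subset_left hvol.ne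
      · exact (hv.2.1 Z0).trans (h Z0)
    have hS : 0 ≤ S * MeasureTheory.volume.real E :=
      mul_nonneg ((hv.2.1 Z0).trans (h Z0)) (by positivity)
    set A := S * MeasureTheory.volume.real E
    set B := u Z0 * Real.pi with hB
    have hB0 : 0 < B := by positivity
    have h2 := h1 (A / B + 1) (by positivity)
    have h3 : B * (A/B+1)^2 ≤ A := by rw [hB] at *; linarith
    have h4 : B * (A / B) = A := by field_simp
    have h5 : 0 ≤ A / B := by positivity
    nlinarith
  -- tail
  have htail : ∃ n : ℕ, MeasureTheory.volume.real (E ∩ {z | z.re < -n}) < Real.pi / (2 * D) := by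
    have ht := MeasureTheory.tendsto_measure_iInter_atTop (μ := MeasureTheory.volume)
      (s := fun n : ℕ => E ∩ {z | z.re < -n})
      (fun n => (hEo.inter (isOpen_lt Complex.continuous_re continuous_const)).measurableSet.nullMeasurableSet)
      (by
        intro a b hab z hz
        refine ⟨hz.1, ?_⟩
        have h2 : z.re < -(b:ℝ) := hz.2
        have : (a:ℝ) ≤ b := by exact_mod_cast hab
        change z.re < -(a:ℝ)
        linarith)
      ⟨0, ((MeasureTheory.measure_mono inter_subset_left).trans_lt hvol).ne⟩
    have he : ⋂ n : ℕ, E ∩ {z : ℂ | z.re < -n} = ∅ := by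
      refine eq_empty_of_forall_notMem fun z hz => ?_
      obtain ⟨n, hn⟩ := exists_nat_gt (-z.re)
      have := (mem_iInter.1 hz n).2
      simp at this
      linarith
    rw [he, MeasureTheory.measure_empty] at ht
    have ht2 := (ENNReal.tendsto_toReal ENNReal.zero_ne_top).comp ht
    have := ht2.eventually_lt_const (u := Real.pi / (2 * D)) (by rw [ENNReal.toReal_zero]; positivity)
    exact this.exists
  obtain ⟨X, hX⟩ := htail
  obtain ⟨Z1, hZ1⟩ := hunb (C * D ^ ((X:ℝ) + 2))
  have hZ1pos : 0 < v Z1 := lt_trans (by positivity) hZ1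
  have hre : ∀ Z, v Z1 ≤ v Z → Z.re < -(X + 2) := by
    intro Z hZ
    have h1 := hZ1.trans_le (hZ.trans ((hvu Z).trans (hC Z)))
    have h2 := lt_of_mul_lt_mul_left h1 hC0.le
    have := (Real.rpow_lt_rpow_left_iff hD).1 h2
    linarith
  have hstep : ∀ Z, v Z1 ≤ v Z → ∃ Z', 2 * D * v Z ≤ v Z' ∧ Z.re - 1 ≤ Z'.re := by
    intro Z hZ
    by_contra h
    push Not at h
    have hsub : Metric.ball Z 1 ⊆ {z | Z.re - 1 ≤ z.re ∧ z.re < Z.re + 1} := by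
      intro z hz
      rw [mem_ball_iff_norm] at hz
      have := (Complex.abs_re_le_norm (z - Z)).trans_lt hz
      rw [Complex.sub_re, abs_lt] at this
      exact ⟨by linarith, by linarith⟩
    have h1 := hv.area_le Z one_pos hEo.measurableSet hvout (S := 2 * D * v Z) (fun x hx => by
      by_contra h'
      push Not at h'
      have := h x h'.le
      linarith [(hsub hx).1])
    have h2 : MeasureTheory.volume.real (E ∩ Metric.ball Z 1) < Real.pi / (2 * D) := by
      refine lt_of_le_of_lt (MeasureTheory.measureReal_mono ?_ ((MeasureTheory.measure_mono inter_subset_left).trans_lt hvol).ne) hX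
      intro z hz
      have h3 := (hsub hz.2).2
      have := hre Z hZ
      exact ⟨hz.1, by simp; linarith⟩
    have h3 : 0 < v Z := hZ1pos.trans_le hZ
    have h4 : 2 * D * v Z * MeasureTheory.volume.real (E ∩ Metric.ball Z 1) < 2 * D * v Z * (Real.pi / (2 * D)) :=
      mul_lt_mul_of_pos_left h2 (by positivity)
    have h5 : 2 * D * v Z * (Real.pi / (2 * D)) = v Z * Real.pi := by field_simp
    linarith
  have hind : ∀ n : ℕ, ∃ Z, (2 * D) ^ n * v Z1 ≤ v Z ∧ Z1.re - n ≤ Z.re := by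
    intro n
    induction n with
    | zero => exact ⟨Z1, by simp⟩
    | succ n ih =>
      obtain ⟨Z, hZ, hZr⟩ := ih
      have h1 : v Z1 ≤ v Z := le_trans (by
        have : 1 ≤ (2 * D) ^ n := one_le_pow₀ (by linarith)
        nlinarith) hZ
      obtain ⟨Z', h2, h3⟩ := hstep Z h1
      refine ⟨Z', le_trans ?_ h2, by push_cast; linarith⟩
      rw [pow_succ]
      nlinarith
  obtain ⟨n, hn⟩ := pow_unbounded_of_one_lt (C * D ^ (-Z1.re) / v Z1) (one_lt_two)
  obtain ⟨Z, hZ, hZr⟩ := hind n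
  have h1 := hZ.trans ((hvu Z).trans (hC Z))
  have h2 : D ^ (-Z.re) ≤ D ^ (-Z1.re) * D ^ n := by
    rw [← Real.rpow_natCast, ← Real.rpow_add hD0]
    exact Real.rpow_le_rpow_of_exponent_le hD.le (by linarith)
  rw [div_lt_iff₀ hZ1pos] at hn
  have h3 : (2 * D) ^ n * v Z1 ≤ C * (D ^ (-Z1.re) * D ^ n) := h1.trans (mul_le_mul_of_nonneg_left h2 hC0.le)
  rw [mul_pow] at h3
  have h4 : 0 < D ^ n := by positivity
  have : D ^ n * (2 ^ n * v Z1) ≤ D ^ n * (C * D ^ (-Z1.re)) := by linarith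
  have := le_of_mul_le_mul_left this h4
  linarith

end

section

noncomputable def gseq (ω : ℂ) (n : ℕ) (z : ℂ) : ℝ := Real.posLog ‖(Pq ω)^[n] z‖ / 2 ^ n

noncomputable def Gr (ω : ℂ) (z : ℂ) : ℝ := limUnder atTop (fun n => gseq ω n z)

lemma Pq_diff (ω : ℂ) : Differentiable ℂ (Pq ω) := by unfold Pq; fun_prop

lemma Pq_iter_diff (ω : ℂ) (n : ℕ) : Differentiable ℂ (Pq ω)^[n] := (Pq_diff ω).iterate n

lemma Pq_iter_cont (ω : ℂ) (n : ℕ) : Continuous (Pq ω)^[n] := (Pq_iter_diff ω n).continuous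

lemma Pq_fac (ω z : ℂ) : Pq ω z = z * (ω + z) := by unfold Pq; ring

lemma Pq_posLog {ω : ℂ} (hω : ‖ω‖ = 1) (w : ℂ) :
    |Real.posLog ‖Pq ω w‖ - 2 * Real.posLog ‖w‖| ≤ 2 * Real.log 2 := by
  have hl2 : 0 < Real.log 2 := Real.log_pos one_lt_two
  have h1 : Real.posLog ‖Pq ω w‖ ≤ Real.log 2 + 2 * Real.posLog ‖w‖ := by
    rw [Pq_fac, norm_mul]
    have h2 := Real.posLog_norm_add_le ω w
    have h3 := Real.posLog_mul (x := ‖w‖) (y := ‖ω + w‖)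
    rw [hω, Real.posLog_one] at h2
    linarith
  have h2 : 2 * Real.posLog ‖w‖ ≤ Real.posLog ‖Pq ω w‖ + 2 * Real.log 2 := by
    by_cases hw : ‖w‖ ≤ 2
    · have h3 : Real.posLog ‖w‖ ≤ Real.posLog 2 := Real.posLog_le_posLog (norm_nonneg _) hw
      rw [Real.posLog_eq_log (x := 2) (by simp)] at h3
      linarith [Real.posLog_nonneg (x := ‖Pq ω w‖)]
    · push Not at hw
      have h3 : ‖w‖ ^ 2 ≤ 2 * ‖Pq ω w‖ := by
        rw [Pq_fac, norm_mul]
        have := norm_sub_le_norm_add w ω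
        rw [hω, add_comm w ω] at this
        nlinarith
      have h4 := Real.posLog_le_posLog (by positivity) h3
      rw [Real.posLog_pow] at h4
      have h5 := Real.posLog_mul (x := 2) (y := ‖Pq ω w‖)
      rw [Real.posLog_eq_log (x := 2) (by simp)] at h5
      push_cast at h4
      linarith
  rw [abs_le]; constructor <;> linarith

lemma gseq_dist {ω : ℂ} (hω : ‖ω‖ = 1) (z : ℂ) (n : ℕ) :
    dist (gseq ω n z) (gseq ω (n+1) z) ≤ (2 * Real.log 2) / 2 / 2 ^ n := by
  have h := Pq_posLog hω ((Pq ω)^[n] z)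
  rw [dist_comm, Real.dist_eq, gseq, gseq, Function.iterate_succ_apply', div_div, ← pow_succ',
    show Real.posLog ‖Pq ω ((Pq ω)^[n] z)‖ / 2 ^ (n+1) - Real.posLog ‖(Pq ω)^[n] z‖ / 2 ^ n =
     (Real.posLog ‖Pq ω ((Pq ω)^[n] z)‖ - 2 * Real.posLog ‖(Pq ω)^[n] z‖) / 2 ^ (n+1) by
      rw [pow_succ]; field_simp, abs_div, abs_of_pos (a := (2:ℝ)^(n+1)) (by positivity)]
  exact div_le_div_of_nonneg_right h (by positivity)

lemma gseq_tendsto {ω : ℂ} (hω : ‖ω‖ = 1) (z : ℂ) :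
    Tendsto (fun n => gseq ω n z) atTop (𝓝 (Gr ω z)) :=
  (cauchySeq_of_le_geometric_two (gseq_dist hω z)).tendsto_limUnder

lemma gseq_close {ω : ℂ} (hω : ‖ω‖ = 1) (z : ℂ) (n : ℕ) :
    |gseq ω n z - Gr ω z| ≤ (2 * Real.log 2) / 2 ^ n := by
  rw [← Real.dist_eq]
  exact dist_le_of_le_geometric_two_of_tendsto (gseq_dist hω z) (gseq_tendsto hω z) n

lemma gseq_cont (ω : ℂ) (n : ℕ) : Continuous (gseq ω n) := by
  unfold gseq
  have := Pq_iter_cont ω n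
  fun_prop

lemma Gr_cont {ω : ℂ} (hω : ‖ω‖ = 1) : Continuous (Gr ω) := by
  have : TendstoUniformly (fun n z => gseq ω n z) (Gr ω) atTop := by
    rw [Metric.tendstoUniformly_iff]
    intro ε hε
    have h1 : Tendsto (fun n : ℕ => (2 * Real.log 2) / 2 ^ n) atTop (𝓝 0) := by
      refine Tendsto.div_atTop tendsto_const_nhds (tendsto_pow_atTop_atTop_of_one_lt one_lt_two)
    filter_upwards [h1.eventually_lt_const hε] with n hn z
    rw [dist_comm, Real.dist_eq]
    exact (gseq_close hω z n).trans_lt hn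
  exact this.continuous (Frequently.of_forall fun n => gseq_cont ω n)

lemma Gr_nonneg {ω : ℂ} (hω : ‖ω‖ = 1) (z : ℂ) : 0 ≤ Gr ω z :=
  ge_of_tendsto' (gseq_tendsto hω z) fun n => div_nonneg Real.posLog_nonneg (by positivity)

lemma Gr_Pq {ω : ℂ} (hω : ‖ω‖ = 1) (z : ℂ) : Gr ω (Pq ω z) = 2 * Gr ω z := by
  have h1 := gseq_tendsto hω (Pq ω z)
  have h2 := ((tendsto_add_atTop_iff_nat 1).2 (gseq_tendsto hω z)).const_mul 2
  refine tendsto_nhds_unique h1 (h2.congr fun n => ?_)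
  unfold gseq
  rw [Function.iterate_succ_apply, pow_succ]
  field_simp

lemma Gr_iter {ω : ℂ} (hω : ‖ω‖ = 1) (n : ℕ) (z : ℂ) : Gr ω ((Pq ω)^[n] z) = 2 ^ n * Gr ω z := by
  induction n with
  | zero => simp
  | succ n ih => rw [Function.iterate_succ_apply', Gr_Pq hω, ih, pow_succ]; ring

lemma Gr_eq_zero {ω : ℂ} (hω : ‖ω‖ = 1) (z : ℂ) {K : ℝ} (hK : ∀ n, ‖(Pq ω)^[n] z‖ ≤ K) :
    Gr ω z = 0 := by
  have h1 : Tendsto (fun n : ℕ => Real.posLog K / 2 ^ n) atTop (𝓝 0) :=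
    Tendsto.div_atTop tendsto_const_nhds (tendsto_pow_atTop_atTop_of_one_lt one_lt_two)
  have h2 : Tendsto (fun n => gseq ω n z) atTop (𝓝 0) :=
    squeeze_zero (fun n => div_nonneg Real.posLog_nonneg (by positivity))
      (fun n => div_le_div_of_nonneg_right (Real.posLog_le_posLog (norm_nonneg _) (hK n)) (by positivity)) h1
  exact tendsto_nhds_unique (gseq_tendsto hω z) h2

lemma Gr_close {ω : ℂ} (hω : ‖ω‖ = 1) (z : ℂ) :
    |Real.posLog ‖z‖ - Gr ω z| ≤ 2 * Real.log 2 := by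
  have := gseq_close hω z 0
  simpa [gseq] using this

lemma Gr_mean {ω : ℂ} (hω : ‖ω‖ = 1) {Ψ : ℂ → ℂ} {z : ℂ} (hΨ : ∀ᶠ x in 𝓝 z, DifferentiableAt ℂ Ψ x)
    (hz : 0 < Gr ω (Ψ z)) :
    ∃ ρ > 0, ∀ r, 0 < r → r < ρ → Gr ω (Ψ z) ≤ Real.circleAverage (fun x => Gr ω (Ψ x)) z r := by
  have hcont : ContinuousAt (fun x => Gr ω (Ψ x)) z :=
    (Gr_cont hω).continuousAt.comp hΨ.self_of_nhds.continuousAt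
  have h1 : ∀ᶠ x in 𝓝 z, Gr ω (Ψ z) / 2 < Gr ω (Ψ x) := hcont.eventually_const_lt (by linarith)
  obtain ⟨ρ, hρ, hb⟩ := Metric.eventually_nhds_iff_ball.1 (hΨ.and h1)
  refine ⟨ρ, hρ, fun r hr0 hr1 => ?_⟩
  have hcb : Metric.closedBall z |r| ⊆ Metric.ball z ρ := by
    rw [abs_of_pos hr0]; exact Metric.closedBall_subset_ball hr1
  have hcS : ContinuousOn Ψ (Metric.sphere z |r|) := fun x hx =>
    (hb x (hcb (Metric.sphere_subset_closedBall hx))).1.continuousAt.continuousWithinAt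
  have hev : Tendsto (fun n : ℕ => (2 * Real.log 2) / 2 ^ n) atTop (𝓝 0) :=
    Tendsto.div_atTop tendsto_const_nhds (tendsto_pow_atTop_atTop_of_one_lt one_lt_two)
  have hmain : ∀ᶠ n : ℕ in atTop, Gr ω (Ψ z) ≤ Real.circleAverage (fun x => Gr ω (Ψ x)) z r + 2 * ((2 * Real.log 2) / 2 ^ n) := by
    filter_upwards [hev.eventually_lt_const (show 0 < Gr ω (Ψ z) / 2 by linarith)] with n hn
    have hpos : ∀ x ∈ Metric.ball z ρ, 0 < gseq ω n (Ψ x) := by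
      intro x hx
      have h2 := (hb x hx).2
      have h3 := abs_le.1 (gseq_close hω (Ψ x) n)
      linarith [h3.1]
    have hgt : ∀ x ∈ Metric.ball z ρ, 1 < ‖(Pq ω)^[n] (Ψ x)‖ := by
      intro x hx
      by_contra hle
      push Not at hle
      have := hpos x hx
      rw [gseq, (Real.posLog_eq_zero_iff _).2 (by rwa [abs_norm])] at this
      simp at this
    have hg : ∀ x ∈ Metric.ball z ρ, gseq ω n (Ψ x) = Real.log ‖(Pq ω)^[n] (Ψ x)‖ / 2 ^ n := by
      intro x hx
      rw [gseq, Real.posLog_eq_log (by rw [abs_norm]; exact (hgt x hx).le)]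
    have hharm : InnerProductSpace.HarmonicOnNhd (fun x => Real.log ‖(Pq ω)^[n] (Ψ x)‖) (Metric.closedBall z |r|) := by
      intro x hx
      refine AnalyticAt.harmonicAt_log_norm (f := fun x => (Pq ω)^[n] (Ψ x)) ?_ ?_
      · refine DifferentiableOn.analyticAt (s := Metric.ball z ρ) ?_ (Metric.isOpen_ball.mem_nhds (hcb hx))
        intro y hy
        exact ((Pq_iter_diff ω n).differentiableAt.comp y (hb y hy).1).differentiableWithinAt
      · exact norm_pos_iff.1 (one_pos.trans (hgt x (hcb hx)))
    have hav := hharm.circleAverage_eq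
    have hav2 : gseq ω n (Ψ z) = Real.circleAverage (fun x => gseq ω n (Ψ x)) z r := by
      have e : Real.circleAverage (fun x => gseq ω n (Ψ x)) z r =
          Real.circleAverage ((1 / 2 ^ n : ℝ) • (fun x => Real.log ‖(Pq ω)^[n] (Ψ x)‖)) z r := by
        refine Real.circleAverage_congr_sphere fun x hx => ?_
        simp only [Pi.smul_apply, smul_eq_mul]
        rw [hg x (hcb (Metric.sphere_subset_closedBall hx))]
        ring
      rw [e, Real.circleAverage_smul, hav, hg z (Metric.mem_ball_self hρ), smul_eq_mul]
      ring
    have hi1 : CircleIntegrable (fun x => gseq ω n (Ψ x)) z r :=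
      ((gseq_cont ω n).comp_continuousOn hcS).circleIntegrable'
    have hi2 : CircleIntegrable (fun x => Gr ω (Ψ x)) z r :=
      ((Gr_cont hω).comp_continuousOn hcS).circleIntegrable'
    have hi3 : CircleIntegrable (fun x => (2 * Real.log 2) / 2 ^ n : ℂ → ℝ) z r :=
      continuousOn_const.circleIntegrable'
    have hle : Real.circleAverage (fun x => gseq ω n (Ψ x)) z r ≤
        Real.circleAverage ((fun x => Gr ω (Ψ x)) + (fun x => (2 * Real.log 2) / 2 ^ n)) z r := by
      refine Real.circleAverage_mono hi1 (hi2.add hi3) fun x hx => ?_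
      simp only [Pi.add_apply]
      linarith [(abs_le.1 (gseq_close hω (Ψ x) n)).2]
    rw [Real.circleAverage_add hi2 hi3, Real.circleAverage_const, ← hav2] at hle
    linarith [(abs_le.1 (gseq_close hω (Ψ z) n)).1]
  have hlim : Tendsto (fun n : ℕ => Real.circleAverage (fun x => Gr ω (Ψ x)) z r + 2 * ((2 * Real.log 2) / 2 ^ n)) atTop
      (𝓝 (Real.circleAverage (fun x => Gr ω (Ψ x)) z r)) := by
    have := (hev.const_mul 2).const_add (Real.circleAverage (fun x => Gr ω (Ψ x)) z r)
    simpa using this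
  exact ge_of_tendsto hlim hmain

/-- escape outside radius 2 -/
lemma Pq_escape {ω : ℂ} (hω : ‖ω‖ = 1) {z : ℂ} (hz : 2 < ‖z‖) : ‖z‖ < ‖Pq ω z‖ := by
  rw [Pq_fac, norm_mul]
  have := norm_sub_le_norm_add z ω
  rw [hω, add_comm z ω] at this
  nlinarith

lemma Gr_zero_norm_le {ω : ℂ} (hω : ‖ω‖ = 1) {z : ℂ} {K : ℝ} (hK : ∀ n, ‖(Pq ω)^[n] z‖ ≤ K) :
    ‖z‖ ≤ 2 := by
  by_contra hz
  push Not at hz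
  have hstep : ∀ w : ℂ, ‖z‖ ≤ ‖w‖ → (‖z‖ - 1) * ‖w‖ ≤ ‖Pq ω w‖ := by
    intro w hw
    rw [Pq_fac, norm_mul]
    have := norm_sub_le_norm_add w ω
    rw [hω, add_comm w ω] at this
    nlinarith [norm_nonneg w]
  have : ∀ n : ℕ, ‖z‖ * (‖z‖ - 1) ^ n ≤ ‖(Pq ω)^[n] z‖ := by
    intro n
    induction n with
    | zero => simp
    | succ n ih =>
      rw [Function.iterate_succ_apply']
      have h1 : ‖z‖ ≤ ‖(Pq ω)^[n] z‖ := by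
        refine le_trans ?_ ih
        have : 1 ≤ (‖z‖ - 1) ^ n := one_le_pow₀ (by linarith)
        nlinarith
      refine le_trans ?_ (hstep _ h1)
      rw [pow_succ]
      nlinarith
  obtain ⟨n, hn⟩ := pow_unbounded_of_one_lt K (show 1 < ‖z‖ - 1 by linarith)
  have h2 := this n
  have h3 := hK n
  have : 0 < (‖z‖ - 1) ^ n := pow_pos (by linarith) n
  nlinarith

lemma basin_bdd {ω : ℂ} {z : ℂ} (hz : z ∈ basinAug ω) :
    ∃ K, ∀ n, ‖(Pq ω)^[n] z‖ ≤ K := by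
  have h : Tendsto (fun n => (Pq ω)^[n] z) atTop (𝓝 0) := hz
  obtain ⟨K, hK⟩ := (Metric.isBounded_range_of_tendsto _ h).exists_norm_le
  exact ⟨K, fun n => hK _ (mem_range_self n)⟩

lemma Gr_basin {ω : ℂ} (hω : ‖ω‖ = 1) {z : ℂ} (hz : z ∈ basinAug ω) : Gr ω z = 0 := by
  obtain ⟨K, hK⟩ := basin_bdd hz
  exact Gr_eq_zero hω z hK

lemma basin_norm_le {ω : ℂ} (hω : ‖ω‖ = 1) {z : ℂ} (hz : z ∈ basinAug ω) : ‖z‖ ≤ 2 := by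
  obtain ⟨K, hK⟩ := basin_bdd hz
  exact Gr_zero_norm_le hω hK

lemma Gr_pos_of_large {ω : ℂ} (hω : ‖ω‖ = 1) (z : ℂ) (hz : 0 = Gr ω z) (n : ℕ) : ‖(Pq ω)^[n] z‖ ≤ 4 := by
  have h1 := Gr_close hω ((Pq ω)^[n] z)
  rw [Gr_iter hω, ← hz] at h1
  have h2 := (le_abs_self _).trans h1
  simp only [mul_zero, sub_zero] at h2
  by_contra h
  push Not at h
  rw [Real.posLog_eq_log (by rw [abs_norm]; linarith)] at h2
  have h3 : 2 * Real.log 2 = Real.log 4 := by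
    rw [show (4:ℝ) = 2 ^ 2 by norm_num, Real.log_pow]; norm_num
  rw [h3] at h2
  exact absurd ((Real.log_le_log_iff (by linarith) (by norm_num)).1 h2) (by linarith)

lemma Gr_zero_iff_norm {ω : ℂ} (hω : ‖ω‖ = 1) (z : ℂ) (hz : Gr ω z = 0) : ‖z‖ ≤ 2 :=
  Gr_zero_norm_le hω (fun n => Gr_pos_of_large hω z hz.symm n)

end

section

noncomputable def zet (m : ℕ) (a z : ℂ) : ℂ := -1 / (m * a * z ^ m)

noncomputable def phi (m : ℕ) (v ζ : ℂ) : ℂ := v * exp (-(log ζ) / m)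

structure Par (f : ℂ → ℂ) (m : ℕ) (a : ℂ) : Prop where
  hm : 1 ≤ m
  ha : a ≠ 0
  diff : ∀ᶠ z in 𝓝 (0:ℂ), DifferentiableAt ℂ f z
  asym : ∃ K : ℝ, ∀ᶠ z in 𝓝 (0:ℂ), ‖f z - z - a * z ^ (m+1)‖ ≤ K * ‖z‖ ^ (m+2)

lemma one_add_pow_bound (m : ℕ) : ∃ c : ℝ, 0 ≤ c ∧ ∀ t : ℂ, ‖t‖ ≤ 1 → ‖(1 + t) ^ m - 1 - m * t‖ ≤ c * ‖t‖ ^ 2 := by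
  induction m with
  | zero => exact ⟨0, le_rfl, fun t _ => by simp⟩
  | succ m ih =>
    obtain ⟨c, hc, h⟩ := ih
    refine ⟨2 * c + m, by positivity, fun t ht => ?_⟩
    have e : (1 + t) ^ (m+1) - 1 - ((m+1 : ℕ) : ℂ) * t = (1 + t) * ((1+t)^m - 1 - m * t) + m * t ^ 2 := by
      push_cast; ring
    rw [e]
    refine (norm_add_le _ _).trans ?_
    rw [norm_mul, norm_mul, norm_pow]
    have h1 : ‖1 + t‖ ≤ 2 := (norm_add_le _ _).trans (by simp; linarith)
    have h2 := h t ht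
    have h3 : ‖1 + t‖ * ‖(1+t)^m - 1 - m * t‖ ≤ 2 * (c * ‖t‖ ^ 2) :=
      mul_le_mul h1 h2 (norm_nonneg _) (by norm_num)
    simp only [Complex.norm_natCast]
    nlinarith

lemma inv_pow_bound (m : ℕ) : ∃ c : ℝ, 0 ≤ c ∧ ∀ x : ℂ, ‖x‖ ≤ 1/2 → ‖((1 + x) ^ m)⁻¹ - 1 + m * x‖ ≤ c * ‖x‖ ^ 2 := by
  obtain ⟨c, hc, h⟩ := one_add_pow_bound m
  refine ⟨4 * c + 2 * m, by positivity, fun x hx => ?_⟩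
  have h1 : 1/2 ≤ ‖1 + x‖ := by
    have := norm_sub_le_norm_add (1:ℂ) x
    simp at this; linarith
  have hne : 1 + x ≠ 0 := norm_pos_iff.1 (by linarith)
  have ht : ‖-x / (1 + x)‖ ≤ 2 * ‖x‖ := by
    rw [norm_div, norm_neg, div_le_iff₀ (by linarith)]
    nlinarith [norm_nonneg x]
  have h2 := h (-x / (1+x)) (by linarith)
  have e1 : 1 + -x / (1+x) = (1+x)⁻¹ := by field_simp; ring
  rw [e1, inv_pow] at h2
  have e2 : ((1 + x) ^ m)⁻¹ - 1 + m * x = (((1 + x) ^ m)⁻¹ - 1 - m * (-x / (1+x))) + m * (x ^ 2 / (1+x)) := by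
    have : m * (-x/(1+x)) + m * x = m * (x^2/(1+x)) := by field_simp; ring
    linear_combination this
  rw [e2]
  refine (norm_add_le _ _).trans ?_
  have h3 : ‖(m:ℂ) * (x ^ 2 / (1+x))‖ ≤ m * (2 * ‖x‖ ^ 2) := by
    rw [norm_mul, Complex.norm_natCast, norm_div, norm_pow]
    refine mul_le_mul_of_nonneg_left ?_ (by positivity)
    rw [div_le_iff₀ (by linarith)]
    nlinarith [sq_nonneg ‖x‖]
  have h4 : ‖-x / (1 + x)‖ ^ 2 ≤ 4 * ‖x‖ ^ 2 := by
    have := pow_le_pow_left₀ (norm_nonneg _) ht 2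
    nlinarith
  nlinarith

lemma Par.step {f : ℂ → ℂ} {m : ℕ} {a : ℂ} (h : Par f m a) :
    ∃ r > 0, ∃ C : ℝ, 0 ≤ C ∧ ∀ z, z ≠ 0 → ‖z‖ < r → DifferentiableAt ℂ f z ∧ f z ≠ 0 ∧
      ‖f z / z - 1‖ ≤ 1 / (2 * m) ∧ ‖zet m a (f z) - zet m a z - 1‖ ≤ C * ‖z‖ ∧ C * ‖z‖ ≤ 1/4 := by
  obtain ⟨hm, ha, hd, K', hK'⟩ := h
  obtain ⟨c, hc, hcb⟩ := inv_pow_bound m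
  set K := max K' 0 with hK
  have hK0 : 0 ≤ K := le_max_right _ _
  obtain ⟨r0, hr0, hb⟩ := Metric.eventually_nhds_iff_ball.1 (hd.and hK')
  have ha0 : 0 < ‖a‖ := norm_pos_iff.2 ha
  have hm0 : (1:ℝ) ≤ m := by exact_mod_cast hm
  set A := ‖a‖ + K with hA
  have hA0 : 0 < A := by positivity
  set C := K / ‖a‖ + c * A ^ 2 / ‖a‖ with hC
  have hC0 : 0 ≤ C := by positivity
  refine ⟨min (min r0 1) (min (1 / (2 * m) / A) (1 / 4 / (C + 1))), by positivity, C, hC0, ?_⟩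
  intro z hz hzr
  obtain ⟨hz1, hz2⟩ := lt_min_iff.1 hzr
  obtain ⟨hzr0, hz1⟩ := lt_min_iff.1 hz1
  obtain ⟨hz2, hz3⟩ := lt_min_iff.1 hz2
  have hzp : 0 < ‖z‖ := norm_pos_iff.2 hz
  rw [lt_div_iff₀ hA0] at hz2
  rw [lt_div_iff₀ (by positivity)] at hz3
  obtain ⟨hdz, hKz⟩ := hb z (by simpa using hzr0)
  have hzm : z ^ m ≠ 0 := pow_ne_zero _ hz
  set x := f z / z - 1 with hx
  have hfz : f z = z * (1 + x) := by rw [hx]; field_simp; ring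
  have hx1 : ‖x - a * z ^ m‖ ≤ K * ‖z‖ ^ (m+1) := by
    have e : x - a * z ^ m = (f z - z - a * z ^ (m+1)) / z := by rw [hx, pow_succ]; field_simp
    rw [e, norm_div, div_le_iff₀ hzp]
    refine hKz.trans ?_
    rw [mul_assoc, ← pow_succ]
    exact mul_le_mul_of_nonneg_right (le_max_left _ _) (by positivity)
  have hzmle : ‖z‖ ^ m ≤ ‖z‖ := pow_le_of_le_one (norm_nonneg _) hz1.le (by omega)
  have hx2 : ‖x‖ ≤ A * ‖z‖ ^ m := by
    have e : x = (x - a * z ^ m) + a * z ^ m := by ring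
    rw [e]
    refine (norm_add_le _ _).trans ?_
    rw [norm_mul, norm_pow]
    have h1 : K * ‖z‖ ^ (m+1) ≤ K * ‖z‖ ^ m :=
      mul_le_mul_of_nonneg_left (pow_le_pow_of_le_one (norm_nonneg _) hz1.le (by omega)) hK0
    rw [hA]; linarith
  have hx3 : ‖x‖ ≤ 1 / (2 * m) := by
    refine hx2.trans ((mul_le_mul_of_nonneg_left hzmle hA0.le).trans ?_)
    linarith
  have hx4 : ‖x‖ ≤ 1/2 := hx3.trans (by
    rw [div_le_div_iff₀ (by positivity) (by norm_num)]; linarith)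
  have h1x : 1 + x ≠ 0 := by
    intro h0
    have : x = -1 := by linear_combination h0
    rw [this] at hx4; norm_num at hx4
  refine ⟨hdz, ?_, hx3, ?_, by nlinarith⟩
  · rw [hfz]; exact mul_ne_zero hz h1x
  · have hmc : (m:ℂ) ≠ 0 := by exact_mod_cast (by omega : m ≠ 0)
    set e := ((1 + x) ^ m)⁻¹ - 1 + m * x with he
    have heb : ‖e‖ ≤ c * ‖x‖ ^ 2 := hcb x hx4
    have hz' : zet m a (f z) - zet m a z - 1 = (x - a * z ^ m) / (a * z ^ m) - e / (m * a * z ^ m) := by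
      unfold zet
      rw [hfz, he, mul_pow]
      have : (1+x)^m ≠ 0 := pow_ne_zero _ h1x
      field_simp
      ring
    rw [hz']
    refine (norm_sub_le _ _).trans ?_
    rw [norm_div, norm_div, norm_mul, norm_mul, norm_mul, norm_pow, Complex.norm_natCast]
    have hzmp : 0 < ‖z‖ ^ m := by positivity
    have t1 : ‖x - a * z ^ m‖ / (‖a‖ * ‖z‖ ^ m) ≤ K / ‖a‖ * ‖z‖ := by
      rw [div_le_iff₀ (by positivity)]
      refine hx1.trans_eq ?_
      rw [pow_succ]; field_simp
    have t2 : ‖e‖ / (m * ‖a‖ * ‖z‖ ^ m) ≤ c * A ^ 2 / ‖a‖ * ‖z‖ := by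
      rw [div_le_iff₀ (by positivity)]
      have : ‖x‖ ^ 2 ≤ (A * ‖z‖ ^ m) ^ 2 := pow_le_pow_left₀ (norm_nonneg _) hx2 2
      calc ‖e‖ ≤ c * (A * ‖z‖ ^ m) ^ 2 := heb.trans (mul_le_mul_of_nonneg_left this hc)
        _ = c * A ^ 2 * ‖z‖ ^ m * ‖z‖ ^ m := by ring
        _ ≤ c * A ^ 2 * ‖z‖ ^ m * ‖z‖ := mul_le_mul_of_nonneg_left hzmle (by positivity)
        _ ≤ c * A ^ 2 * ‖z‖ ^ m * ‖z‖ * m := le_mul_of_one_le_right (by positivity) hm0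
        _ = c * A ^ 2 / ‖a‖ * ‖z‖ * (m * ‖a‖ * ‖z‖ ^ m) := by field_simp
    rw [hC]
    linarith

lemma zet_phi {m : ℕ} {a v ζ : ℂ} (hm : 1 ≤ m) (ha : a ≠ 0) (hv : v ^ m = -1 / (m * a)) (hζ : ζ ≠ 0) :
    zet m a (phi m v ζ) = ζ := by
  have hmc : (m:ℂ) ≠ 0 := by exact_mod_cast (by omega : m ≠ 0)
  unfold zet phi
  rw [mul_pow, hv, ← Complex.exp_nat_mul, mul_div_cancel₀ _ hmc, Complex.exp_neg, Complex.exp_log hζ]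
  field_simp

lemma phi_ne_zero {m : ℕ} {a v ζ : ℂ} (hm : 1 ≤ m) (ha : a ≠ 0) (hv : v ^ m = -1 / (m * a)) : phi m v ζ ≠ 0 := by
  have hmc : (m:ℂ) ≠ 0 := by exact_mod_cast (by omega : m ≠ 0)
  refine mul_ne_zero ?_ (Complex.exp_ne_zero _)
  rintro rfl
  rw [zero_pow (by omega)] at hv
  have : (-1:ℂ) / (m * a) ≠ 0 := div_ne_zero (by norm_num) (mul_ne_zero hmc ha)
  exact this hv.symm

lemma norm_phi (m : ℕ) (v : ℂ) {ζ : ℂ} (hζ : ζ ≠ 0) :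
    ‖phi m v ζ‖ = ‖v‖ * ‖ζ‖ ^ (-(1 / m : ℝ)) := by
  unfold phi
  rw [norm_mul, Complex.norm_exp, Real.rpow_def_of_pos (norm_pos_iff.2 hζ)]
  congr 2
  have : (-(log ζ) / (m:ℂ)) = ((1/m : ℝ) : ℂ) * (-(log ζ)) := by push_cast; ring
  rw [this, Complex.re_ofReal_mul, Complex.neg_re, Complex.log_re]
  ring

lemma phi_diff (m : ℕ) (v : ℂ) {ζ : ℂ} (hζ : ζ ∈ slitPlane) : DifferentiableAt ℂ (phi m v) ζ := by
  unfold phi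
  have := (differentiableAt_id (𝕜 := ℂ) (x := ζ)).clog hζ
  fun_prop (disch := assumption)

lemma phi_conj {m : ℕ} {a v ζ w : ℂ} (hm : 1 ≤ m) (ha : a ≠ 0) (hv : v ^ m = -1 / (m * a))
    (hζ : 0 < ζ.re) (hw : ‖w / phi m v ζ - 1‖ ≤ 1 / (2 * m)) :
    phi m v (zet m a w) = w := by
  have hmc : (m:ℂ) ≠ 0 := by exact_mod_cast (by omega : m ≠ 0)
  have hm0 : (1:ℝ) ≤ m := by exact_mod_cast hm
  have hζ0 : ζ ≠ 0 := by rintro rfl; simp at hζ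
  have hφ := phi_ne_zero (ζ := ζ) hm ha hv
  set x := w / phi m v ζ - 1 with hx
  have hwx : w = phi m v ζ * (1 + x) := by rw [hx]; field_simp; ring
  have hx2 : ‖x‖ ≤ 1/2 := hw.trans (by
    rw [div_le_div_iff₀ (by positivity) (by norm_num)]; linarith)
  have h1x : 1 + x ≠ 0 := by
    intro h0
    have : x = -1 := by linear_combination h0
    rw [this] at hx2; norm_num at hx2
  have hlog := Complex.norm_log_one_add_half_le_self hx2
  have e1 : zet m a w = exp (log ζ - m * log (1 + x)) := by
    rw [Complex.exp_sub, Complex.exp_log hζ0, Complex.exp_nat_mul, Complex.exp_log h1x]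
    have := zet_phi hm ha hv hζ0
    rw [← this] 
    conv_lhs => rw [hwx]
    conv_rhs => rw [this]
    unfold zet at this ⊢
    rw [mul_pow]
    conv_rhs => rw [← this]
    field_simp
  have him : |(m * log (1 + x)).im| ≤ 3/4 := by
    refine (Complex.abs_im_le_norm _).trans ?_
    rw [norm_mul, Complex.norm_natCast]
    calc (m:ℝ) * ‖log (1+x)‖ ≤ m * (3/2 * (1 / (2*m))) := by
          refine mul_le_mul_of_nonneg_left (hlog.trans ?_) (by positivity)
          linarith
      _ = 3/4 := by field_simp; norm_num
  have harg : |(log ζ).im| < Real.pi / 2 := by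
    rw [Complex.log_im]; exact Complex.abs_arg_lt_pi_div_two_iff.2 (Or.inl hζ)
  have e2 : log (zet m a w) = log ζ - m * log (1 + x) := by
    rw [e1]
    have hp := Real.pi_gt_three
    obtain ⟨h1, h2⟩ := abs_le.1 him
    obtain ⟨h3, h4⟩ := abs_lt.1 harg
    refine Complex.log_exp ?_ ?_ <;> rw [Complex.sub_im] <;> linarith
  rw [phi, e2, show -(log ζ - m * log (1 + x)) / (m:ℂ) = -(log ζ)/m + log (1+x) by field_simp; ring,
    Complex.exp_add, Complex.exp_log h1x, ← mul_assoc]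
  exact hwx.symm

end

section

lemma re_step {F : ℂ → ℂ} {ζ : ℂ} (h : ‖F ζ - ζ - 1‖ ≤ 1/4) : ζ.re + 3/4 ≤ (F ζ).re := by
  have := (Complex.abs_re_le_norm _).trans h
  simp only [Complex.sub_re, Complex.one_re] at this
  linarith [(abs_le.1 this).1]

lemma re_iter {F : ℂ → ℂ} {R : ℝ} (h : ∀ ζ : ℂ, R < ζ.re → ‖F ζ - ζ - 1‖ ≤ 1/4) {ζ : ℂ} (hζ : R < ζ.re) (n : ℕ) :
    ζ.re + 3/4 * n ≤ (F^[n] ζ).re := by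
  induction n with
  | zero => simp
  | succ n ih =>
    rw [Function.iterate_succ_apply']
    have h1 : R < (F^[n] ζ).re := lt_of_lt_of_le hζ (le_trans (by linarith [(Nat.cast_nonneg n : (0:ℝ) ≤ n)]) ih)
    have := re_step (h _ h1)
    push_cast
    linarith

lemma re_iter_lt {F : ℂ → ℂ} {R : ℝ} (h : ∀ ζ : ℂ, R < ζ.re → ‖F ζ - ζ - 1‖ ≤ 1/4) {ζ : ℂ} (hζ : R < ζ.re) (n : ℕ) :
    R < (F^[n] ζ).re :=
  lt_of_lt_of_le hζ (le_trans (by linarith [(Nat.cast_nonneg n : (0:ℝ) ≤ n)]) (re_iter h hζ n))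

lemma iter_diff {F : ℂ → ℂ} {R : ℝ} (h : ∀ ζ : ℂ, R < ζ.re → ‖F ζ - ζ - 1‖ ≤ 1/4)
    (hd : ∀ ζ : ℂ, R < ζ.re → DifferentiableAt ℂ F ζ) {ζ : ℂ} (hζ : R < ζ.re) (n : ℕ) :
    DifferentiableAt ℂ F^[n] ζ := by
  induction n with
  | zero => exact differentiableAt_id
  | succ n ih =>
    rw [Function.iterate_succ']
    exact (hd _ (re_iter_lt h hζ n)).comp ζ ih

lemma fatou_lip {F : ℂ → ℂ} {C β R0 S : ℝ} (hβ : 0 < β) (hC : 0 ≤ C) (hR0 : 1 ≤ R0)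
    (hd : ∀ ζ : ℂ, R0 < ζ.re → DifferentiableAt ℂ F ζ)
    (hF : ∀ ζ : ℂ, R0 < ζ.re → ‖F ζ - ζ - 1‖ ≤ C * ζ.re ^ (-β)) (hS : 2 * R0 ≤ S) {ζ ζ' : ℂ}
    (hζ : S < ζ.re) (hζ' : S < ζ'.re) :
    ‖(F ζ - F ζ') - (ζ - ζ')‖ ≤ C * (S / 2) ^ (-(β + 1)) * ‖ζ - ζ'‖ := by
  have hconv : Convex ℝ {x : ℂ | S < x.re} := convex_halfSpace_re_gt S
  have hb : ∀ x : ℂ, S < x.re → ‖deriv (fun x => F x - x - 1) x‖ ≤ C * (S / 2) ^ (-(β + 1)) := by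
    intro x hx
    have hx0 : 0 < x.re / 2 := by linarith
    have hre : ∀ y ∈ Metric.closedBall x (x.re/2), x.re / 2 ≤ y.re := by
      intro y hy
      rw [mem_closedBall_iff_norm] at hy
      have := (Complex.abs_re_le_norm _).trans hy
      rw [Complex.sub_re] at this
      linarith [(abs_le.1 this).1]
    have hdd : ∀ y ∈ Metric.closedBall x (x.re/2), DifferentiableAt ℂ (fun x => F x - x - 1) y := by
      intro y hy
      have := hd y (by linarith [hre y hy])
      fun_prop
    have h1 := Complex.norm_deriv_le_of_forall_mem_sphere_norm_le (f := fun x => F x - x - 1) (c := x)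
      (C := C * (x.re/2) ^ (-β)) hx0
      (DifferentiableOn.diffContOnCl (fun y hy => (hdd y (Metric.closure_ball_subset_closedBall hy)).differentiableWithinAt))
      (by
        intro y hy
        have hy' := hre y (Metric.sphere_subset_closedBall hy)
        refine (hF y (by linarith)).trans (mul_le_mul_of_nonneg_left ?_ hC)
        exact Real.rpow_le_rpow_of_nonpos hx0 hy' (by linarith))
    refine h1.trans ?_
    rw [mul_div_assoc, ← Real.rpow_sub_one hx0.ne', show -β - 1 = -(β+1) by ring]
    refine mul_le_mul_of_nonneg_left ?_ hC
    exact Real.rpow_le_rpow_of_nonpos (by linarith) (by linarith) (by linarith)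
  have := hconv.norm_image_sub_le_of_norm_deriv_le (f := fun x => F x - x - 1) (x := ζ') (y := ζ)
    (fun x hx => by
      have := hd x (by have : S < x.re := hx
                       linarith)
      fun_prop) hb hζ' hζ
  have e : (F ζ - F ζ') - (ζ - ζ') = (F ζ - ζ - 1) - (F ζ' - ζ' - 1) := by ring
  rw [e]
  exact this

lemma fatou {C β R0 : ℝ} (hβ : 0 < β) (hC : 0 ≤ C) (hR0 : 1 ≤ R0) :
    ∃ R ≥ R0, ∀ F : ℂ → ℂ, (∀ ζ : ℂ, R0 < ζ.re → DifferentiableAt ℂ F ζ) →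
      (∀ ζ : ℂ, R0 < ζ.re → ‖F ζ - ζ - 1‖ ≤ C * ζ.re ^ (-β)) →
      (∀ ζ : ℂ, R0 < ζ.re → ‖F ζ - ζ - 1‖ ≤ 1/4) →
      (∀ ζ ζ' : ℂ, R < ζ.re → R < ζ'.re → ∀ n, ‖(F^[n] ζ - F^[n] ζ') - (ζ - ζ')‖ ≤ 1/2 * ‖ζ - ζ'‖) ∧
      ∃ Φ : ℂ → ℂ, (∀ ζ : ℂ, R < ζ.re → DifferentiableAt ℂ Φ ζ) ∧
        (∀ ζ : ℂ, R < ζ.re → Φ (F ζ) = Φ ζ + 1) ∧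
        (∀ ζ ζ' : ℂ, R < ζ.re → R < ζ'.re → ‖(Φ ζ - Φ ζ') - (ζ - ζ')‖ ≤ 1/2 * ‖ζ - ζ'‖) := by
  set e0 : ℕ → ℝ := fun n => C * (3/8) ^ (-(β+1)) * (n:ℝ) ^ (-(β+1)) with he0
  have hs : Summable e0 := by
    refine Summable.mul_left _ ?_
    rw [Real.summable_nat_rpow]; linarith
  have ht := tendsto_sum_nat_add e0
  obtain ⟨N, hN1, hN2⟩ := ((ht.eventually_lt_const (show (0:ℝ) < 1/4 by norm_num)).and
    (tendsto_natCast_atTop_atTop.eventually_ge_atTop (8/3 * R0))).exists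
  set R : ℝ := 3/4 * N with hR
  have hRR : 2 * R0 ≤ R := by rw [hR]; linarith
  set e : ℕ → ℝ := fun n => e0 (n + N) with he
  have hes : Summable e := (summable_nat_add_iff N).2 hs
  have he_nn : ∀ n, 0 ≤ e n := fun n => by simp only [he, he0]; positivity
  refine ⟨R, by linarith, fun F hd hF h4 => ?_⟩
  have h4R : ∀ ζ : ℂ, R < ζ.re → ‖F ζ - ζ - 1‖ ≤ 1/4 := fun ζ h => h4 ζ (by linarith)
  have hdR : ∀ ζ : ℂ, R < ζ.re → DifferentiableAt ℂ F ζ := fun ζ h => hd ζ (by linarith)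
  have hlip : ∀ ζ ζ' : ℂ, R < ζ.re → R < ζ'.re → ∀ n,
      ‖(F^[n+1] ζ - F^[n+1] ζ') - (F^[n] ζ - F^[n] ζ')‖ ≤ e n * ‖F^[n] ζ - F^[n] ζ'‖ := by
    intro ζ ζ' hζ hζ' n
    rw [Function.iterate_succ_apply', Function.iterate_succ_apply']
    have hn : (0:ℝ) ≤ n := Nat.cast_nonneg n
    have := fatou_lip (S := R + 3/4 * n) hβ hC hR0 hd hF (by linarith)
      (ζ := F^[n] ζ) (ζ' := F^[n] ζ') (by linarith [re_iter h4R hζ n]) (by linarith [re_iter h4R hζ' n])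
    convert this using 2
    simp only [he, he0, hR]
    rw [mul_assoc, ← Real.mul_rpow (by norm_num) (by positivity)]
    congr 2
    push_cast; ring
  have hsum_le : ∀ n, ∑ k ∈ Finset.range n, e k ≤ 1/4 := fun n =>
    (hes.sum_le_tsum _ (fun k _ => he_nn k)).trans hN1.le
  have hb' : ∀ ζ ζ' : ℂ, R < ζ.re → R < ζ'.re → ∀ n, ‖(F^[n] ζ - F^[n] ζ') - (ζ - ζ')‖ ≤
      (∑ k ∈ Finset.range n, e k) * (2 * ‖ζ - ζ'‖) := by
    intro ζ ζ' hζ hζ' n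
    induction n with
    | zero => simp
    | succ n ih =>
      have h1 : ‖F^[n] ζ - F^[n] ζ'‖ ≤ 2 * ‖ζ - ζ'‖ := by
        have h2 : F^[n] ζ - F^[n] ζ' = ((F^[n] ζ - F^[n] ζ') - (ζ - ζ')) + (ζ - ζ') := by ring
        rw [h2]
        refine (norm_add_le _ _).trans ?_
        have := hsum_le n
        nlinarith [norm_nonneg (ζ - ζ')]
      have h3 : (F^[n+1] ζ - F^[n+1] ζ') - (ζ - ζ') = ((F^[n+1] ζ - F^[n+1] ζ') - (F^[n] ζ - F^[n] ζ')) +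
        ((F^[n] ζ - F^[n] ζ') - (ζ - ζ')) := by ring
      rw [h3, Finset.sum_range_succ]
      refine (norm_add_le _ _).trans ?_
      have := hlip ζ ζ' hζ hζ' n
      have := mul_le_mul_of_nonneg_left h1 (he_nn n)
      linarith
  have hb : ∀ ζ ζ' : ℂ, R < ζ.re → R < ζ'.re → ∀ n, ‖(F^[n] ζ - F^[n] ζ') - (ζ - ζ')‖ ≤ 1/2 * ‖ζ - ζ'‖ := by
    intro ζ ζ' hζ hζ' n
    refine (hb' ζ ζ' hζ hζ' n).trans ?_
    have := hsum_le n
    nlinarith [norm_nonneg (ζ - ζ')]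
  have hb2 : ∀ ζ ζ' : ℂ, R < ζ.re → R < ζ'.re → ∀ n, ‖F^[n] ζ - F^[n] ζ'‖ ≤ 2 * ‖ζ - ζ'‖ := by
    intro ζ ζ' hζ hζ' n
    have h2 : F^[n] ζ - F^[n] ζ' = ((F^[n] ζ - F^[n] ζ') - (ζ - ζ')) + (ζ - ζ') := by ring
    rw [h2]
    refine (norm_add_le _ _).trans ?_
    linarith [hb ζ ζ' hζ hζ' n, norm_nonneg (ζ - ζ')]
  refine ⟨hb, ?_⟩
  set ζ0 : ℂ := ((R + 1 : ℝ) : ℂ) with hζ0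
  have hζ0R : R < ζ0.re := by simp [hζ0]
  set s : ℕ → ℂ → ℂ := fun n ζ => F^[n] ζ - F^[n] ζ0 with hsdef
  have hsd : ∀ ζ : ℂ, R < ζ.re → ∀ n, dist (s n ζ) (s (n+1) ζ) ≤ e n * (2 * ‖ζ - ζ0‖) := by
    intro ζ hζ n
    rw [dist_comm, dist_eq_norm]
    exact (hlip ζ ζ0 hζ hζ0R n).trans (mul_le_mul_of_nonneg_left (hb2 ζ ζ0 hζ hζ0R n) (he_nn n))
  have hcs : ∀ ζ : ℂ, R < ζ.re → CauchySeq (fun n => s n ζ) := fun ζ hζ =>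
    cauchySeq_of_dist_le_of_summable _ (hsd ζ hζ) (hes.mul_right _)
  set Φ : ℂ → ℂ := fun ζ => limUnder atTop (fun n => s n ζ) with hΦ
  have hlim : ∀ ζ : ℂ, R < ζ.re → Tendsto (fun n => s n ζ) atTop (𝓝 (Φ ζ)) := fun ζ hζ => (hcs ζ hζ).tendsto_limUnder
  have hTo : IsOpen {ζ : ℂ | R < ζ.re} := isOpen_lt continuous_const Complex.continuous_re
  refine ⟨Φ, ?_, ?_, ?_⟩
  · have hloc : TendstoLocallyUniformlyOn s Φ atTop {ζ : ℂ | R < ζ.re} := by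
      rw [Metric.tendstoLocallyUniformlyOn_iff]
      intro ε hε x hx
      refine ⟨Metric.ball x 1 ∩ {ζ : ℂ | R < ζ.re}, inter_mem (mem_nhdsWithin_of_mem_nhds (Metric.ball_mem_nhds x one_pos)) self_mem_nhdsWithin, ?_⟩
      have h1 := (tendsto_sum_nat_add e).mul_const (2 * (‖x - ζ0‖ + 1))
      rw [zero_mul] at h1
      filter_upwards [h1.eventually_lt_const hε] with n hn y hy
      rw [dist_comm]
      have h2 := dist_le_tsum_of_dist_le_of_tendsto _ (hsd y hy.2) (hes.mul_right _) (hlim y hy.2) n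
      refine h2.trans_lt (lt_of_le_of_lt ?_ hn)
      rw [tsum_mul_right]
      have h3 : ‖y - ζ0‖ ≤ ‖x - ζ0‖ + 1 := by
        have : y - ζ0 = (y - x) + (x - ζ0) := by ring
        rw [this]
        refine (norm_add_le _ _).trans ?_
        have := mem_ball_iff_norm.1 hy.1
        linarith
      have h5 : ∑' k, e (n + k) = ∑' k, e (k + n) := by simp_rw [add_comm]
      rw [h5]
      refine mul_le_mul_of_nonneg_left (by linarith) (tsum_nonneg fun k => he_nn _)
    have hdo := hloc.differentiableOn (Eventually.of_forall fun n ζ hζ =>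
      ((iter_diff h4R hdR hζ n).sub_const _).differentiableWithinAt) hTo
    exact fun ζ hζ => hdo.differentiableAt (hTo.mem_nhds hζ)
  · intro ζ hζ
    have hFζ : R < (F ζ).re := re_iter_lt h4R hζ 1
    have h1 := (hlim (F ζ) hFζ).sub (hlim ζ hζ)
    have h2 : Tendsto (fun n => s n (F ζ) - s n ζ) atTop (𝓝 1) := by
      rw [tendsto_iff_norm_sub_tendsto_zero]
      have h3 : Tendsto (fun n : ℕ => C * (3/4 * (n:ℝ)) ^ (-β)) atTop (𝓝 0) := by
        have := ((tendsto_rpow_neg_atTop hβ).comp (tendsto_natCast_atTop_atTop.const_mul_atTop (show (0:ℝ) < 3/4 by norm_num))).const_mul C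
        simpa using this
      refine squeeze_zero' (Eventually.of_forall fun n => norm_nonneg _) ?_ h3
      filter_upwards [eventually_gt_atTop 0] with n hn
      have e1 : s n (F ζ) - s n ζ - 1 = F (F^[n] ζ) - F^[n] ζ - 1 := by
        simp only [hsdef]
        rw [← Function.iterate_succ_apply, Function.iterate_succ_apply']
        ring
      rw [e1]
      have hn' : (0:ℝ) < n := by exact_mod_cast hn
      have hre := re_iter h4R hζ n
      refine (hF _ (by linarith)).trans (mul_le_mul_of_nonneg_left ?_ hC)
      exact Real.rpow_le_rpow_of_nonpos (by positivity) (by linarith) (by linarith)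
    have := tendsto_nhds_unique h1 h2
    linear_combination this
  · intro ζ ζ' hζ hζ'
    have h1 := (((hlim ζ hζ).sub (hlim ζ' hζ')).sub_const (ζ - ζ')).norm
    refine le_of_tendsto' h1 fun n => ?_
    have := hb ζ ζ' hζ hζ' n
    simpa [hsdef] using this

end

section

noncomputable def Fz (f : ℂ → ℂ) (m : ℕ) (a v ζ : ℂ) : ℂ := zet m a (f (phi m v ζ))

structure Petal (f : ℂ → ℂ) (m : ℕ) (a v : ℂ) (R r : ℝ) : Prop where
  hv : v ^ m = -1 / (m * a)
  hR : 1 ≤ R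
  small : ∀ ζ : ℂ, R < ζ.re → ‖phi m v ζ‖ < r
  diffF : ∀ ζ : ℂ, R < ζ.re → DifferentiableAt ℂ (Fz f m a v) ζ
  near : ∀ ζ : ℂ, R < ζ.re → ‖Fz f m a v ζ - ζ - 1‖ ≤ 1/4
  conj : ∀ ζ : ℂ, R < ζ.re → phi m v (Fz f m a v ζ) = f (phi m v ζ)
  lip : ∀ ζ ζ' : ℂ, R < ζ.re → R < ζ'.re → ∀ n,
    ‖((Fz f m a v)^[n] ζ - (Fz f m a v)^[n] ζ') - (ζ - ζ')‖ ≤ 1/2 * ‖ζ - ζ'‖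
  fat : ∃ Φ : ℂ → ℂ, (∀ ζ : ℂ, R < ζ.re → DifferentiableAt ℂ Φ ζ) ∧
        (∀ ζ : ℂ, R < ζ.re → Φ (Fz f m a v ζ) = Φ ζ + 1) ∧
        (∀ ζ ζ' : ℂ, R < ζ.re → R < ζ'.re → ‖(Φ ζ - Φ ζ') - (ζ - ζ')‖ ≤ 1/2 * ‖ζ - ζ'‖)

lemma Par.petal {f : ℂ → ℂ} {m : ℕ} {a : ℂ} (h : Par f m a) {r : ℝ} (hr : 0 < r) :
    ∃ R : ℝ, 1 ≤ R ∧ ∀ v, v ^ m = -1 / (m * a) → Petal f m a v R r := by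
  obtain ⟨r1, hr1, C, hC, hstep⟩ := h.step
  have hm := h.hm
  have ha := h.ha
  have hm0 : (1:ℝ) ≤ m := by exact_mod_cast hm
  have ha0 : 0 < ‖a‖ := norm_pos_iff.2 ha
  set V : ℝ := max 1 (1 / (m * ‖a‖)) with hV
  have hV0 : 0 < V := by positivity
  have hvV : ∀ v : ℂ, v ^ m = -1 / (m * a) → ‖v‖ ≤ V := by
    intro v hv
    have : ‖v‖ ^ m = 1 / (m * ‖a‖) := by
      rw [← norm_pow, hv]; simp
    by_contra hlt
    push Not at hlt
    have h1 : 1 ≤ ‖v‖ := (le_max_left _ _).trans hlt.le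
    have h2 : ‖v‖ ≤ ‖v‖ ^ m := le_self_pow₀ h1 (by omega)
    rw [this] at h2
    exact absurd (h2.trans (le_max_right 1 _)) (not_le.2 hlt)
  set β : ℝ := 1 / m with hβ
  have hβ0 : 0 < β := by positivity
  obtain ⟨R0, hR01, hR02⟩ : ∃ R0 : ℝ, 1 ≤ R0 ∧ V * R0 ^ (-β) < min r r1 := by
    have h1 : Tendsto (fun x : ℝ => V * x ^ (-β)) atTop (𝓝 0) := by
      simpa using (tendsto_rpow_neg_atTop hβ0).const_mul V
    exact ((eventually_ge_atTop 1).and (h1.eventually_lt_const (lt_min hr hr1))).exists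
  have hre0 : ∀ ζ : ℂ, R0 < ζ.re → ζ ≠ 0 := by
    rintro ζ hζ rfl; simp at hζ; linarith
  have hnorm : ∀ v : ℂ, v ^ m = -1 / (m * a) → ∀ ζ : ℂ, R0 < ζ.re → ‖phi m v ζ‖ ≤ V * ζ.re ^ (-β) := by
    intro v hv ζ hζ
    rw [norm_phi m v (hre0 ζ hζ)]
    refine mul_le_mul (hvV v hv) ?_ (by positivity) hV0.le
    exact Real.rpow_le_rpow_of_nonpos (by linarith) (Complex.re_le_norm ζ) (by linarith)
  have hsmall : ∀ v : ℂ, v ^ m = -1 / (m * a) → ∀ ζ : ℂ, R0 < ζ.re → ‖phi m v ζ‖ < min r r1 := by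
    intro v hv ζ hζ
    refine (hnorm v hv ζ hζ).trans_lt (lt_of_le_of_lt ?_ hR02)
    refine mul_le_mul_of_nonneg_left ?_ hV0.le
    exact Real.rpow_le_rpow_of_nonpos (by linarith) hζ.le (by linarith)
  obtain ⟨R, hR, hfat⟩ := fatou (C := C * V) (β := β) (R0 := R0) hβ0 (by positivity) hR01
  refine ⟨R, by linarith, fun v hv => ?_⟩
  have hst := fun ζ (hζ : R0 < (ζ:ℂ).re) => hstep (phi m v ζ) (phi_ne_zero hm ha hv)
    ((hsmall v hv ζ hζ).trans_le (min_le_right _ _))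
  have hzp : ∀ ζ : ℂ, R0 < ζ.re → zet m a (phi m v ζ) = ζ := fun ζ hζ => zet_phi hm ha hv (hre0 ζ hζ)
  have hd : ∀ ζ : ℂ, R0 < ζ.re → DifferentiableAt ℂ (Fz f m a v) ζ := by
    intro ζ hζ
    obtain ⟨h1, h2, -⟩ := hst ζ hζ
    have hp : DifferentiableAt ℂ (phi m v) ζ := phi_diff m v (Or.inl (by linarith))
    have hfp : DifferentiableAt ℂ (fun ζ => f (phi m v ζ)) ζ := h1.comp ζ hp
    have hmc : (m:ℂ) ≠ 0 := by exact_mod_cast (by omega : m ≠ 0)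
    unfold Fz zet
    refine DifferentiableAt.div (by fun_prop) (by fun_prop) ?_
    exact mul_ne_zero (mul_ne_zero hmc ha) (pow_ne_zero _ h2)
  have hn1 : ∀ ζ : ℂ, R0 < ζ.re → ‖Fz f m a v ζ - ζ - 1‖ ≤ C * ‖phi m v ζ‖ := by
    intro ζ hζ
    obtain ⟨-, -, -, h4, -⟩ := hst ζ hζ
    rw [hzp ζ hζ] at h4
    exact h4
  have hn2 : ∀ ζ : ℂ, R0 < ζ.re → ‖Fz f m a v ζ - ζ - 1‖ ≤ 1/4 := fun ζ hζ =>
    (hn1 ζ hζ).trans (hst ζ hζ).2.2.2.2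
  have hn3 : ∀ ζ : ℂ, R0 < ζ.re → ‖Fz f m a v ζ - ζ - 1‖ ≤ C * V * ζ.re ^ (-β) := by
    intro ζ hζ
    rw [mul_assoc]
    exact (hn1 ζ hζ).trans (mul_le_mul_of_nonneg_left (hnorm v hv ζ hζ) hC)
  obtain ⟨hl, hf⟩ := hfat (Fz f m a v) hd hn3 hn2
  refine ⟨hv, by linarith, fun ζ hζ => (hsmall v hv ζ (by linarith)).trans_le (min_le_left _ _),
    fun ζ hζ => hd ζ (by linarith), fun ζ hζ => hn2 ζ (by linarith), fun ζ hζ => ?_, hl, hf⟩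
  exact phi_conj hm ha hv (by linarith) (hst ζ (by linarith)).2.2.1

namespace Petal
variable {f : ℂ → ℂ} {m : ℕ} {a v : ℂ} {R r : ℝ}

lemma iter_re (h : Petal f m a v R r) {ζ : ℂ} (hζ : R < ζ.re) (n : ℕ) :
    ζ.re + 3/4 * n ≤ ((Fz f m a v)^[n] ζ).re := re_iter h.near hζ n

lemma iter_lt (h : Petal f m a v R r) {ζ : ℂ} (hζ : R < ζ.re) (n : ℕ) :
    R < ((Fz f m a v)^[n] ζ).re := re_iter_lt h.near hζ n

lemma conj_iter (h : Petal f m a v R r) {ζ : ℂ} (hζ : R < ζ.re) (n : ℕ) :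
    phi m v ((Fz f m a v)^[n] ζ) = f^[n] (phi m v ζ) := by
  induction n with
  | zero => rfl
  | succ n ih =>
    rw [Function.iterate_succ_apply', Function.iterate_succ_apply', h.conj _ (h.iter_lt hζ n), ih]

/-- `(F^n)'` is bounded by 3/2. -/
lemma deriv_iter (h : Petal f m a v R r) {ζ : ℂ} (hζ : R < ζ.re) (n : ℕ) :
    ‖deriv (Fz f m a v)^[n] ζ‖ ≤ 3/2 := by
  refine norm_deriv_le_of_lip' (by norm_num) ?_
  have ho : IsOpen {ζ : ℂ | R < ζ.re} := isOpen_lt continuous_const Complex.continuous_re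
  filter_upwards [ho.mem_nhds hζ] with x hx
  have := h.lip x ζ hx hζ n
  have h2 : (Fz f m a v)^[n] x - (Fz f m a v)^[n] ζ =
    (((Fz f m a v)^[n] x - (Fz f m a v)^[n] ζ) - (x - ζ)) + (x - ζ) := by ring
  rw [h2]
  refine (norm_add_le _ _).trans ?_
  linarith

lemma diff_iter (h : Petal f m a v R r) {ζ : ℂ} (hζ : R < ζ.re) (n : ℕ) :
    DifferentiableAt ℂ (Fz f m a v)^[n] ζ := iter_diff h.near h.diffF hζ n

/-- Koebe-free contradiction: the maps `H k` cannot all stay bounded. -/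
lemma no_bdd (h : Petal f m a v R r) (hm : 1 ≤ m) (ha : a ≠ 0) {ζ0 : ℂ} (hζ : R < ζ0.re) (H : ℕ → ℂ → ℂ)
    (hd : ∀ k, ∀ ζ ∈ Metric.ball ((Fz f m a v)^[k] ζ0) (((Fz f m a v)^[k] ζ0).re - R), DifferentiableAt ℂ (H k) ζ)
    (hb : ∀ k, ∀ ζ ∈ Metric.ball ((Fz f m a v)^[k] ζ0) (((Fz f m a v)^[k] ζ0).re - R), ‖H k ζ‖ ≤ 4)
    (hder : ∀ k, deriv (H k) ((Fz f m a v)^[k] ζ0) * deriv (Fz f m a v)^[k] ζ0 = deriv (phi m v) ζ0) : False := by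
  have hζ00 : ζ0 ≠ 0 := by rintro rfl; simp at hζ; linarith [h.hR]
  have hmc : (m:ℂ) ≠ 0 := by exact_mod_cast (by omega : m ≠ 0)
  have hne : deriv (phi m v) ζ0 ≠ 0 := by
    have hsl : ζ0 ∈ slitPlane := Or.inl (by linarith [h.hR])
    have h1 := (((Complex.hasDerivAt_log hsl).neg.div_const (m:ℂ)).cexp.const_mul v)
    have h2 : deriv (phi m v) ζ0 = v * (exp (-log ζ0 / m) * (-ζ0⁻¹ / m)) := h1.deriv
    rw [h2, ← mul_assoc]
    refine mul_ne_zero (phi_ne_zero (ζ := ζ0) hm ha h.hv) ?_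
    exact div_ne_zero (neg_ne_zero.2 (inv_ne_zero hζ00)) hmc
  have hle : ∀ k : ℕ, 1 ≤ k → ‖deriv (phi m v) ζ0‖ * (3/8 * k) ≤ 6 := by
    intro k hk
    have hk' : (1:ℝ) ≤ k := by exact_mod_cast hk
    set c := (Fz f m a v)^[k] ζ0 with hc
    have hre : R + 3/4 * k < c.re := by linarith [h.iter_re hζ k]
    have hs : Metric.closedBall c (3/8 * k) ⊆ Metric.ball c (c.re - R) :=
      Metric.closedBall_subset_ball (by linarith)
    have h1 := Complex.norm_deriv_le_of_forall_mem_sphere_norm_le (f := H k) (c := c) (R := 3/8*k) (C := 4)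
      (by positivity)
      (DifferentiableOn.diffContOnCl (fun y hy => (hd k y (hs (Metric.closure_ball_subset_closedBall hy))).differentiableWithinAt))
      (fun y hy => hb k y (hs (Metric.sphere_subset_closedBall hy)))
    have h2 := h.deriv_iter hζ k
    rw [← hder k, norm_mul]
    rw [le_div_iff₀ (by positivity)] at h1
    calc ‖deriv (H k) c‖ * ‖deriv (Fz f m a v)^[k] ζ0‖ * (3/8*k) = (‖deriv (H k) c‖ * (3/8*k)) * ‖deriv (Fz f m a v)^[k] ζ0‖ := by ring
      _ ≤ 4 * (3/2) := mul_le_mul h1 h2 (norm_nonneg _) (by norm_num)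
      _ = 6 := by norm_num
  have hpos : 0 < ‖deriv (phi m v) ζ0‖ := norm_pos_iff.2 hne
  obtain ⟨k, hk⟩ := exists_nat_gt (16 / ‖deriv (phi m v) ζ0‖)
  rw [div_lt_iff₀ hpos] at hk
  have hk1 : 1 ≤ k := by
    by_contra h0
    have : k = 0 := by omega
    subst this
    simp at hk
    linarith
  have := hle k hk1
  linarith

end Petal

end

section

lemma surj_half {h : ℂ → ℂ} {b : ℂ} {ρ : ℝ} (hρ : 0 ≤ ρ)
    (hl : ∀ x ∈ Metric.closedBall b ρ, ∀ y ∈ Metric.closedBall b ρ, ‖(h x - h y) - (x - y)‖ ≤ 1/2 * ‖x - y‖)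
    {w : ℂ} (hw : ‖w - h b‖ ≤ ρ / 2) : ∃ x ∈ Metric.closedBall b ρ, h x = w := by
  have ha : ApproximatesLinearOn h ((ContinuousLinearEquiv.refl ℂ ℂ : ℂ ≃L[ℂ] ℂ) : ℂ →L[ℂ] ℂ) (Metric.closedBall b ρ) (1/2) := by
    intro x hx y hy
    have := hl x hx y hy
    simpa using this
  have := ha.surjOn_closedBall_of_nonlinearRightInverse
    (ContinuousLinearEquiv.toNonlinearRightInverse (ContinuousLinearEquiv.refl ℂ ℂ)) hρ subset_rfl
  have hn : ((ContinuousLinearEquiv.toNonlinearRightInverse (ContinuousLinearEquiv.refl ℂ ℂ)).nnnorm : ℝ) = 1 := by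
    simp [ContinuousLinearEquiv.toNonlinearRightInverse]
  have hw' : w ∈ Metric.closedBall (h b) ((((ContinuousLinearEquiv.toNonlinearRightInverse (ContinuousLinearEquiv.refl ℂ ℂ)).nnnorm : ℝ)⁻¹ - ((1/2 : NNReal) : ℝ)) * ρ) := by
    rw [hn, mem_closedBall_iff_norm]
    refine hw.trans_eq ?_
    push_cast; ring
  exact this hw'

def FatC (f : ℂ → ℂ) (m : ℕ) (a v : ℂ) (R : ℝ) (Φ : ℂ → ℂ) : Prop :=
  (∀ ζ : ℂ, R < ζ.re → DifferentiableAt ℂ Φ ζ) ∧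
        (∀ ζ : ℂ, R < ζ.re → Φ (Fz f m a v ζ) = Φ ζ + 1) ∧
        (∀ ζ ζ' : ℂ, R < ζ.re → R < ζ'.re → ‖(Φ ζ - Φ ζ') - (ζ - ζ')‖ ≤ 1/2 * ‖ζ - ζ'‖)

namespace Petal
variable {f : ℂ → ℂ} {m : ℕ} {a v : ℂ} {R r : ℝ}

lemma F_surj (h : Petal f m a v R r) {ζ : ℂ} (hζ : R + 3/2 < ζ.re) :
    ∃ x : ℂ, R < x.re ∧ x.re ≤ ζ.re - 1/2 ∧ Fz f m a v x = ζ := by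
  have hre : ∀ x ∈ Metric.closedBall (ζ - 1) (1/2), R < x.re ∧ x.re ≤ ζ.re - 1/2 := by
    intro x hx
    rw [mem_closedBall_iff_norm] at hx
    have := (Complex.abs_re_le_norm _).trans hx
    simp only [Complex.sub_re, Complex.one_re] at this
    obtain ⟨h1, h2⟩ := abs_le.1 this
    constructor <;> linarith
  have hc : ζ - 1 ∈ Metric.closedBall (ζ - 1) (1/2) := Metric.mem_closedBall_self (by norm_num)
  obtain ⟨x, hx, hxe⟩ := surj_half (h := Fz f m a v) (b := ζ - 1) (ρ := 1/2) (by norm_num) (fun x hx y hy => by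
    simpa using h.lip x y (hre x hx).1 (hre y hy).1 1) (w := ζ) (by
      have := h.near (ζ - 1) (hre _ hc).1
      have e : ζ - Fz f m a v (ζ - 1) = -(Fz f m a v (ζ - 1) - (ζ - 1) - 1) := by ring
      rw [e, norm_neg]
      linarith)
  exact ⟨x, (hre x hx).1, (hre x hx).2, hxe⟩

lemma go_back (h : Petal f m a v R r) {ζ : ℂ} (hζ : R < ζ.re) :
    ∃ (n : ℕ) (x : ℂ), R < x.re ∧ x.re ≤ R + 2 ∧ (Fz f m a v)^[n] x = ζ := by
  have key : ∀ (N : ℕ) (ζ : ℂ), R < ζ.re → ζ.re ≤ R + 2 + N / 2 →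
    ∃ (n : ℕ) (x : ℂ), R < x.re ∧ x.re ≤ R + 2 ∧ (Fz f m a v)^[n] x = ζ := by
    intro N
    induction N with
    | zero => intro ζ h1 h2; exact ⟨0, ζ, h1, by simpa using h2, rfl⟩
    | succ N ih =>
      intro ζ h1 h2
      by_cases h3 : ζ.re ≤ R + 2
      · exact ⟨0, ζ, h1, h3, rfl⟩
      · push Not at h3
        obtain ⟨y, hy1, hy2, hy3⟩ := h.F_surj (ζ := ζ) (by linarith)
        push_cast at h2
        obtain ⟨n, x, hx1, hx2, hx3⟩ := ih y hy1 (by linarith)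
        exact ⟨n+1, x, hx1, hx2, by rw [Function.iterate_succ_apply', hx3, hy3]⟩
  obtain ⟨N, hN⟩ := exists_nat_gt (2 * (ζ.re - R - 2))
  exact key N ζ hζ (by linarith)

lemma fat_iter (h : Petal f m a v R r) {Φ : ℂ → ℂ} (hΦ : FatC f m a v R Φ) {ζ : ℂ} (hζ : R < ζ.re) (n : ℕ) :
    Φ ((Fz f m a v)^[n] ζ) = Φ ζ + n := by
  induction n with
  | zero => simp
  | succ n ih =>
    rw [Function.iterate_succ_apply', hΦ.2.1 _ (h.iter_lt hζ n), ih]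
    push_cast; ring

lemma fat_dist {Φ : ℂ → ℂ} (hΦ : FatC f m a v R Φ) {ζ ζ' : ℂ} (hζ : R < ζ.re) (hζ' : R < ζ'.re) :
    ‖ζ - ζ'‖ ≤ 2 * ‖Φ ζ - Φ ζ'‖ := by
  have h1 := hΦ.2.2 ζ ζ' hζ hζ'
  have h2 : ζ - ζ' = (Φ ζ - Φ ζ') - ((Φ ζ - Φ ζ') - (ζ - ζ')) := by ring
  have h3 := norm_sub_le (Φ ζ - Φ ζ') ((Φ ζ - Φ ζ') - (ζ - ζ'))
  rw [← h2] at h3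
  linarith

lemma fat_inj {Φ : ℂ → ℂ} (hΦ : FatC f m a v R Φ) {ζ ζ' : ℂ} (hζ : R < ζ.re) (hζ' : R < ζ'.re)
    (he : Φ ζ = Φ ζ') : ζ = ζ' := by
  have := fat_dist hΦ hζ hζ'
  rw [he, sub_self, norm_zero, mul_zero] at this
  exact sub_eq_zero.1 (norm_le_zero_iff.1 this)

lemma fat_im (h : Petal f m a v R r) {Φ : ℂ → ℂ} (hΦ : FatC f m a v R Φ) (A : ℝ) :
    ∃ M : ℝ, ∀ ζ : ℂ, R < ζ.re → M ≤ |(Φ ζ).im| → ∃ (n : ℕ) (x : ℂ), R < x.re ∧ x.re ≤ R + 2 ∧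
      (Fz f m a v)^[n] x = ζ ∧ A ≤ |x.im| := by
  set ζ1 : ℂ := ((R + 1 : ℝ) : ℂ) with hζ1
  have hζ1R : R < ζ1.re := by simp [hζ1]
  refine ⟨|(Φ ζ1).im| + 3/2 * (A + 2), fun ζ hζ hM => ?_⟩
  obtain ⟨n, x, hx1, hx2, hx3⟩ := h.go_back hζ
  refine ⟨n, x, hx1, hx2, hx3, ?_⟩
  have h1 := h.fat_iter hΦ hx1 n
  rw [hx3] at h1
  have h2 : (Φ ζ).im = (Φ x).im := by rw [h1]; simp
  rw [h2] at hM
  have h3 := hΦ.2.2 x ζ1 hx1 hζ1R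
  have h4 : ‖Φ x - Φ ζ1‖ ≤ 3/2 * ‖x - ζ1‖ := by
    have e : Φ x - Φ ζ1 = ((Φ x - Φ ζ1) - (x - ζ1)) + (x - ζ1) := by ring
    rw [e]
    refine (norm_add_le _ _).trans ?_
    linarith
  have h5 : |(Φ x).im| - |(Φ ζ1).im| ≤ ‖Φ x - Φ ζ1‖ := by
    refine (abs_sub_abs_le_abs_sub _ _).trans ?_
    rw [← Complex.sub_im]
    exact Complex.abs_im_le_norm _
  have h6 := Complex.norm_le_abs_re_add_abs_im (x - ζ1)
  have h7 : |(x - ζ1).re| ≤ 2 := by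
    rw [abs_le]; simp [hζ1]; constructor <;> linarith
  have h8 : (x - ζ1).im = x.im := by simp [hζ1]
  rw [h8] at h6
  linarith

lemma inv (h : Petal f m a v R r) {Φ : ℂ → ℂ} (hΦ : FatC f m a v R Φ) (B : ℝ) :
    ∃ (N0 : ℝ) (ψ : ℂ → ℂ), ∀ Z : ℂ, N0 < Z.re → |Z.im| < B →
      R < (ψ Z).re ∧ Φ (ψ Z) = Z ∧ DifferentiableAt ℂ ψ Z ∧ Fz f m a v (ψ Z) = ψ (Z + 1) := by
  classical
  set ζ1 : ℂ := ((R + 1 : ℝ) : ℂ) with hζ1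
  have hζ1R : R < ζ1.re := by simp [hζ1]
  set B' : ℝ := |B| + ‖Φ ζ1‖ + 1 with hB'
  have hB'0 : 0 < B' := by positivity
  -- surjectivity
  obtain ⟨N, hN⟩ := exists_nat_gt (4/3 * (2 * B'))
  have hs : ∀ Z : ℂ, (N:ℝ) + ‖Φ ζ1‖ < Z.re → |Z.im| < B → ∃ ζ : ℂ, R < ζ.re ∧ Φ ζ = Z := by
    intro Z hZ1 hZ2
    set n : ℕ := ⌊Z.re - (Φ ζ1).re⌋₊ with hn
    have hpos : (N:ℝ) ≤ Z.re - (Φ ζ1).re := by linarith [Complex.re_le_norm (Φ ζ1)]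
    have hn1 : (n:ℝ) ≤ Z.re - (Φ ζ1).re := Nat.floor_le ((Nat.cast_nonneg N).trans hpos)
    have hn2 : Z.re - (Φ ζ1).re < n + 1 := Nat.lt_floor_add_one _
    have hn3 : N ≤ n := Nat.le_floor hpos
    have hn3' : (N:ℝ) ≤ n := by exact_mod_cast hn3
    set b := (Fz f m a v)^[n] ζ1 with hb
    have hbre : R + 2 * B' < b.re := by
      have := h.iter_re hζ1R n
      linarith
    have hball : ∀ x ∈ Metric.closedBall b (2 * B'), R < x.re := by
      intro x hx
      rw [mem_closedBall_iff_norm] at hx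
      have := (Complex.abs_re_le_norm _).trans hx
      rw [Complex.sub_re] at this
      linarith [(abs_le.1 this).1]
    obtain ⟨x, hx, hxe⟩ := surj_half (h := Φ) (b := b) (ρ := 2 * B') (by positivity)
      (fun x hx y hy => hΦ.2.2 x y (hball x hx) (hball y hy)) (w := Z) (by
        rw [hb, h.fat_iter hΦ hζ1R n]
        have h6 := Complex.norm_le_abs_re_add_abs_im (Z - (Φ ζ1 + n))
        have h7 : |(Z - (Φ ζ1 + n)).re| ≤ 1 := by
          rw [abs_le]; simp; constructor <;> linarith
        have h8 : |(Z - (Φ ζ1 + n)).im| ≤ |B| + ‖Φ ζ1‖ := by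
          simp only [Complex.sub_im, Complex.add_im, Complex.natCast_im, add_zero]
          refine (abs_sub _ _).trans ?_
          linarith [le_abs_self B, Complex.abs_im_le_norm (Φ ζ1)]
        linarith)
    exact ⟨x, hball x hx, hxe⟩
  set S : Set ℂ := {Z | (N:ℝ) + ‖Φ ζ1‖ < Z.re ∧ |Z.im| < B} with hS
  have hSo : IsOpen S := (isOpen_lt continuous_const Complex.continuous_re).inter
    (isOpen_lt (Complex.continuous_im.abs) continuous_const)
  choose! ψ hψ1 hψ2 using hs
  refine ⟨(N:ℝ) + ‖Φ ζ1‖, ψ, fun Z hZ1 hZ2 => ⟨hψ1 Z hZ1 hZ2, hψ2 Z hZ1 hZ2, ?_, ?_⟩⟩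
  · have hZS : Z ∈ S := ⟨hZ1, hZ2⟩
    have hcont : ContinuousAt ψ Z := by
      rw [Metric.continuousAt_iff]
      intro ε hε
      obtain ⟨δ, hδ, hδS⟩ := Metric.isOpen_iff.1 hSo Z hZS
      refine ⟨min δ (ε/2), by positivity, fun y hy => ?_⟩
      have hyS : y ∈ S := hδS (hy.trans_le (min_le_left _ _))
      have h1 := fat_dist hΦ (hψ1 y hyS.1 hyS.2) (hψ1 Z hZ1 hZ2)
      rw [hψ2 y hyS.1 hyS.2, hψ2 Z hZ1 hZ2, ← dist_eq_norm, ← dist_eq_norm] at h1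
      have := hy.trans_le (min_le_right _ _)
      linarith
    have hd := (hΦ.1 _ (hψ1 Z hZ1 hZ2)).hasDerivAt
    have hne : deriv Φ (ψ Z) ≠ 0 := by
      intro h0
      have ho : IsOpen {ζ : ℂ | R < ζ.re} := isOpen_lt continuous_const Complex.continuous_re
      have h2 : ‖deriv (fun x => Φ x - x) (ψ Z)‖ ≤ 1/2 := by
        refine norm_deriv_le_of_lip' (by norm_num) ?_
        filter_upwards [ho.mem_nhds (hψ1 Z hZ1 hZ2)] with x hx
        have := hΦ.2.2 x (ψ Z) hx (hψ1 Z hZ1 hZ2)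
        have e : (Φ x - x) - (Φ (ψ Z) - ψ Z) = (Φ x - Φ (ψ Z)) - (x - ψ Z) := by ring
        show ‖(Φ x - x) - (Φ (ψ Z) - ψ Z)‖ ≤ _
        rw [e]; exact this
      have h3 : deriv (fun x => Φ x - x) (ψ Z) = 0 - 1 := by
        have := hd.sub (hasDerivAt_id (ψ Z))
        rw [h0] at this
        exact this.deriv
      rw [h3] at h2
      norm_num at h2
    refine (HasDerivAt.of_local_left_inverse hcont hd hne ?_).differentiableAt
    filter_upwards [hSo.mem_nhds hZS] with y hy
    exact hψ2 y hy.1 hy.2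
  · have h1 : (N:ℝ) + ‖Φ ζ1‖ < (Z + 1).re := by simp; linarith
    have h2 : |(Z + 1).im| < B := by simpa using hZ2
    refine fat_inj hΦ (h.iter_lt (hψ1 Z hZ1 hZ2) 1) (hψ1 _ h1 h2) ?_
    rw [hψ2 _ h1 h2]
    have := hΦ.2.1 _ (hψ1 Z hZ1 hZ2)
    rw [hψ2 Z hZ1 hZ2] at this
    exact this

end Petal

end

section

/-- A compact set disjoint from a closed connected unbounded set through `0` carries a continuous logarithm. -/
lemma chain_log {X Q : Set ℂ} (hc : IsClosed X) (hcon : IsPreconnected X) (h0 : (0:ℂ) ∈ X)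
    (hub : ∀ A : ℝ, ∃ z ∈ X, A < ‖z‖) (hQ : IsCompact Q) (hd : Disjoint Q X) :
    ∃ L : ℂ → ℂ, ContinuousOn L Q ∧ ∀ z ∈ Q, Complex.exp (L z) = z := by
  obtain ⟨δ, hδ, hdis⟩ := hd.exists_thickenings hQ hc
  have hdist : ∀ z ∈ Q, ∀ a ∈ X, δ ≤ ‖z - a‖ := by
    intro z hz a ha
    by_contra hlt
    push Not at hlt
    refine Set.disjoint_left.1 hdis (Metric.self_subset_thickening hδ _ hz) ?_
    exact Metric.mem_thickening_iff.2 ⟨a, ha, by rwa [dist_eq_norm]⟩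
  set S : ℂ → Prop := fun a => ∃ (L : ℂ → ℂ) (κ : ℂ), κ ≠ 0 ∧ ContinuousOn L Q ∧
    ∀ z ∈ Q, Complex.exp (L z) * (z - a) = κ * z with hS
  have step : ∀ a ∈ X, ∀ b ∈ X, ‖a - b‖ < δ → S a → S b := by
    rintro a ha b hb hab ⟨L, κ, hκ, hL, he⟩
    have hne : ∀ z ∈ Q, z - b ≠ 0 := fun z hz h => by
      have := hdist z hz b hb
      rw [h, norm_zero] at this; linarith
    have hsl : ∀ z ∈ Q, (z - a) / (z - b) ∈ Complex.slitPlane := by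
      intro z hz
      have e : (z - a) / (z - b) = 1 + (b - a) / (z - b) := by
        field_simp [hne z hz]; ring
      rw [e]
      apply Complex.mem_slitPlane_of_norm_lt_one
      rw [norm_div, div_lt_one (norm_pos_iff.2 (hne z hz)), norm_sub_rev]
      exact hab.trans_le (hdist z hz b hb)
    refine ⟨fun z => L z + Complex.log ((z - a) / (z - b)), κ, hκ, ?_, ?_⟩
    · refine hL.add (ContinuousOn.clog ?_ hsl)
      exact ContinuousOn.div (by fun_prop) (by fun_prop) hne
    · intro z hz
      rw [Complex.exp_add, Complex.exp_log (Complex.slitPlane_ne_zero (hsl z hz)), ← he z hz, mul_assoc,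
        div_mul_cancel₀ _ (hne z hz)]
  have hall : ∀ a ∈ X, S a := by
    intro a ha
    have := hcon.induction₂ (fun x y => S x ↔ S y) (fun x hx => by
      filter_upwards [self_mem_nhdsWithin, nhdsWithin_le_nhds (Metric.ball_mem_nhds x hδ)] with y hy hxy
      rw [mem_ball_iff_norm] at hxy
      exact ⟨step x hx y hy (by rwa [norm_sub_rev]), step y hy x hx hxy⟩)
      (fun x y z _ _ _ h1 h2 => h1.trans h2) (fun x y _ _ h => h.symm) h0 ha
    refine this.1 ⟨fun _ => 0, 1, one_ne_zero, continuousOn_const, fun z _ => by simp⟩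
  obtain ⟨A, hA⟩ := hQ.isBounded.exists_norm_le
  obtain ⟨b, hb, hAb⟩ := hub (max A 0)
  obtain ⟨L, κ, hκ, hL, he⟩ := hall b hb
  have hb0 : b ≠ 0 := norm_pos_iff.1 ((le_max_right _ _).trans_lt hAb)
  have hsl : ∀ z ∈ Q, 1 + -(z / b) ∈ Complex.slitPlane := by
    intro z hz
    apply Complex.mem_slitPlane_of_norm_lt_one
    rw [norm_neg, norm_div, div_lt_one (norm_pos_iff.2 hb0)]
    exact ((hA z hz).trans (le_max_left _ _)).trans_lt hAb
  refine ⟨fun z => L z + Complex.log (1 + -(z / b)) + Complex.log (-b / κ), ?_, ?_⟩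
  · refine (hL.add (ContinuousOn.clog (by fun_prop) hsl)).add continuousOn_const
  · intro z hz
    rw [Complex.exp_add, Complex.exp_add, Complex.exp_log (Complex.slitPlane_ne_zero (hsl z hz)),
      Complex.exp_log (div_ne_zero (neg_ne_zero.2 hb0) hκ)]
    have h1 := he z hz
    field_simp
    linear_combination h1

end

section
open Asymptotics

lemma Par.isBigO {f : ℂ → ℂ} {m : ℕ} {a : ℂ} (h : Par f m a) :
    (fun w => f w - w - a * w ^ (m+1)) =O[𝓝 0] (fun w => w ^ (m+2)) := by
  obtain ⟨K, hK⟩ := h.asym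
  exact IsBigO.of_bound K (by simpa using hK)

lemma pow_bigO {i j : ℕ} (h : i ≤ j) : (fun w : ℂ => w ^ j) =O[𝓝 0] (fun w => w ^ i) := by
  refine IsBigO.of_bound 1 ?_
  filter_upwards [Metric.ball_mem_nhds (0:ℂ) one_pos] with w hw
  rw [mem_ball_zero_iff] at hw
  rw [norm_pow, norm_pow, one_mul]
  exact pow_le_pow_of_le_one (norm_nonneg _) hw.le h

lemma Par.inverse {f : ℂ → ℂ} {m : ℕ} {a : ℂ} (h : Par f m a) (h0 : f 0 = 0) (hd : deriv f 0 ≠ 0) :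
    ∃ g : ℂ → ℂ, Par g m (-a) ∧ g 0 = 0 ∧ ∀ᶠ z in 𝓝 (0:ℂ), f (g z) = z := by
  have han : AnalyticAt ℂ f 0 := analyticAt_iff_eventually_differentiableAt.2 h.diff
  have hs := han.hasStrictDerivAt
  have hga := han.analyticAt_localInverse hd
  have hr := hs.eventually_right_inverse hd
  have hg0 : hs.localInverse f _ 0 hd (f 0) = 0 := HasStrictFDerivAt.localInverse_apply_image ..
  set g := hs.localInverse f _ 0 hd with hg
  rw [h0] at hga hr hg0
  refine ⟨g, ⟨h.hm, neg_ne_zero.2 h.ha, analyticAt_iff_eventually_differentiableAt.1 hga, ?_⟩, hg0, hr⟩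
  have hm := h.hm
  have o1 := h.isBigO
  have o2 : (fun w => f w - w) =O[𝓝 0] (fun w => w ^ 2) := by
    have : (fun w => f w - w) = fun w => (f w - w - a * w ^ (m+1)) + a * w ^ (m+1) := by ext; ring
    rw [this]
    exact (o1.trans (pow_bigO (by omega))).add ((pow_bigO (by omega)).const_mul_left a)
  have o3 : f =O[𝓝 0] (fun w => w) := by
    have : f = fun w => (f w - w) + w := by ext; ring
    rw [this]
    have h2 := pow_bigO (i := 1) (j := 2) (by omega)
    simp only [pow_one] at h2
    exact (o2.trans h2).add (isBigO_refl _ _)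
  have o4 : (fun w => f w ^ (m+1) - w ^ (m+1)) =O[𝓝 0] (fun w => w ^ (m+2)) := by
    have e : (fun w => f w ^ (m+1) - w ^ (m+1)) =
      fun w => (∑ i ∈ Finset.range (m+1), f w ^ i * w ^ (m + 1 - 1 - i)) * (f w - w) := by
      ext w; rw [geom_sum₂_mul]
    rw [e]
    have e2 : (fun w : ℂ => w ^ (m+2)) = fun w => w ^ m * w ^ 2 := by ext; ring
    rw [e2]
    refine IsBigO.mul ?_ o2
    refine IsBigO.fun_sum fun i hi => ?_
    have e3 : (fun w : ℂ => w ^ m) = fun w => w ^ i * w ^ (m + 1 - 1 - i) := by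
      ext w; rw [← pow_add]; congr 1; have := Finset.mem_range.1 hi; omega
    rw [e3]
    exact (o3.pow i).mul (isBigO_refl _ _)
  have o5 : (fun w => w - f w - (-a) * (f w) ^ (m+1)) =O[𝓝 0] (fun w => w ^ (m+2)) := by
    have e : (fun w => w - f w - (-a) * (f w) ^ (m+1)) =
      fun w => -(f w - w - a * w ^ (m+1)) + a * (f w ^ (m+1) - w ^ (m+1)) := by ext; ring
    rw [e]
    exact o1.neg_left.add (o4.const_mul_left a)
  have ht : Tendsto g (𝓝 0) (𝓝 0) := by
    have := hga.continuousAt.tendsto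
    rwa [hg0] at this
  have o6 := o5.comp_tendsto ht
  have o7 : g =O[𝓝 0] (fun w => w) := by
    have := hga.differentiableAt.isBigO_sub
    simpa [hg0] using this
  have o8 : (fun z => g z - z - (-a) * z ^ (m+1)) =O[𝓝 0] (fun w => w ^ (m+2)) := by
    refine IsBigO.trans (IsBigO.congr' (o6) ?_ EventuallyEq.rfl) (o7.pow (m+2))
    filter_upwards [hr] with z hz
    simp [hz]
  obtain ⟨K, hK⟩ := o8.bound
  exact ⟨K, by simpa using hK⟩

lemma Pq_zero (ω : ℂ) : Pq ω 0 = 0 := by simp [Pq]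
lemma Pq_iter_zero (ω : ℂ) (n : ℕ) : (Pq ω)^[n] 0 = 0 := by
  induction n with
  | zero => rfl
  | succ n ih => rw [Function.iterate_succ_apply', ih, Pq_zero]

lemma Pq_iter_deriv_zero (ω : ℂ) (n : ℕ) : HasDerivAt (Pq ω)^[n] (ω ^ n) 0 := by
  have : HasDerivAt (Pq ω) ω 0 := by
    have := ((hasDerivAt_id (0:ℂ)).const_mul ω).add ((hasDerivAt_id (0:ℂ)).pow 2)
    simp at this
    exact this
  exact HasDerivAt.iterate 0 this (Pq_zero ω) n

lemma germ {ω : ℂ} (hω : ‖ω‖ = 1) {q : ℕ} (hq : 1 ≤ q) (hprim : IsPrimitiveRoot ω q) :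
    ∃ m a, Par (Pq ω)^[q] m a ∧ q ∣ m := by
  set f := (Pq ω)^[q] with hf
  have hfd : Differentiable ℂ f := Pq_iter_diff ω q
  have hf0 : f 0 = 0 := Pq_iter_zero ω q
  have hf1 : HasDerivAt f 1 0 := by
    have := Pq_iter_deriv_zero ω q
    rwa [hprim.pow_eq_one] at this
  have hfa : AnalyticAt ℂ (fun z => f z - z) 0 := (hfd.analyticAt 0).sub analyticAt_id
  have hne : ¬ ∀ᶠ z in 𝓝 (0:ℂ), f z - z = 0 := by
    intro hev
    have h1 : f = id := AnalyticOnNhd.eq_of_eventuallyEq (𝕜 := ℂ) (fun z _ => hfd.analyticAt z)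
      (fun z _ => analyticAt_id) (z₀ := 0) (hev.mono fun z hz => sub_eq_zero.1 hz)
    have h2 : ∀ n : ℕ, 1 ≤ n → 3 < ‖(Pq ω)^[n] 3‖ := by
      intro n hn
      induction n, hn using Nat.le_induction with
      | base =>
        have := Pq_escape hω (z := 3) (by norm_num)
        simpa using this
      | succ n hn ih =>
        rw [Function.iterate_succ_apply']
        exact ih.trans (Pq_escape hω (by linarith))
    have h3 := h2 q hq
    rw [← hf, h1] at h3
    norm_num at h3
  obtain ⟨n, g, hg, hg0, he⟩ := hfa.exists_eventuallyEq_pow_smul_nonzero_iff.2 hne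
  simp only [sub_zero, smul_eq_mul] at he
  have hn : 2 ≤ n := by
    by_contra hlt
    push Not at hlt
    interval_cases n
    · have := he.self_of_nhds
      simp [hf0] at this
      exact hg0 this.symm
    · have h1 : HasDerivAt (fun z => f z - z) (1 - 1) 0 := hf1.sub (hasDerivAt_id 0)
      have h2 : HasDerivAt (fun z => z ^ 1 * g z) (1 * g 0 + 0 ^ 1 * deriv g 0) 0 := by
        have := (hasDerivAt_id (0:ℂ)).mul hg.differentiableAt.hasDerivAt
        simp only [pow_one]
        exact this
      have h3 := h1.unique (h2.congr_of_eventuallyEq he)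
      simp at h3
      exact hg0 h3.symm
  obtain ⟨m, rfl⟩ : ∃ m, n = m + 1 := ⟨n - 1, by omega⟩
  refine ⟨m, g 0, ⟨by omega, hg0, Eventually.of_forall hfd, ?_⟩, ?_⟩
  · have o1 : (fun z => g z - g 0) =O[𝓝 0] (fun z : ℂ => z) := by
      simpa using hg.differentiableAt.isBigO_sub
    have o2 : (fun z => f z - z - g 0 * z ^ (m+1)) =O[𝓝 0] (fun z => z ^ (m+2)) := by
      have e2 : (fun w : ℂ => w ^ (m+2)) = fun w => w ^ (m+1) * w := by ext; ring
      rw [e2]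
      refine ((isBigO_refl (fun w : ℂ => w ^ (m+1)) _).mul o1).congr' ?_ EventuallyEq.rfl
      filter_upwards [he] with z hz
      rw [hz]; ring
    obtain ⟨K, hK⟩ := o2.bound
    exact ⟨K, by simpa using hK⟩
  · apply hprim.dvd_of_pow_eq_one
    have hPc : Continuous (Pq ω) := (Pq_diff ω).continuous
    have hPt : Tendsto (Pq ω) (𝓝 0) (𝓝 0) := by
      have := hPc.tendsto 0
      rwa [Pq_zero] at this
    have hev : ∀ᶠ z in 𝓝[≠] (0:ℂ), g z * (ω + f z + z) = (ω + z) ^ (m+1) * g (Pq ω z) := by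
      filter_upwards [nhdsWithin_le_nhds he, nhdsWithin_le_nhds (hPt.eventually he),
        self_mem_nhdsWithin] with z h1 h2 hz
      have hcomm : f (Pq ω z) = Pq ω (f z) := by
        rw [hf, ← Function.iterate_succ_apply, Function.iterate_succ_apply']
      rw [hcomm, Pq_fac (ω := ω) (z := z)] at h2
      have h3 : Pq ω (f z) - z * (ω + z) = (f z - z) * (ω + f z + z) := by simp only [Pq]; ring
      rw [h3, h1, mul_pow] at h2
      have hz' : z ^ (m+1) ≠ 0 := pow_ne_zero _ hz
      rw [Pq_fac]
      apply mul_left_cancel₀ hz'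
      linear_combination h2
    have hgc := hg.continuousAt
    have hfc := hfd.continuous
    have t1 : Tendsto (fun z => g z * (ω + f z + z)) (𝓝[≠] 0) (𝓝 (g 0 * (ω + f 0 + 0))) := by
      refine Tendsto.mono_left ?_ nhdsWithin_le_nhds
      exact ContinuousAt.tendsto (f := fun z => g z * (ω + f z + z)) (by fun_prop)
    have t2 : Tendsto (fun z => (ω + z) ^ (m+1) * g (Pq ω z)) (𝓝[≠] 0) (𝓝 ((ω + 0) ^ (m+1) * g 0)) := by
      refine Tendsto.mono_left ?_ nhdsWithin_le_nhds
      refine Tendsto.mul ?_ (hgc.tendsto.comp hPt)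
      exact Continuous.tendsto (f := fun z => (ω + z) ^ (m+1)) (by fun_prop) 0
    have h4 := tendsto_nhds_unique (t1.congr' hev) t2
    rw [hf0, add_zero, add_zero] at h4
    have hω0 : ω ≠ 0 := by rintro rfl; simp at hω
    have h5 : ω * g 0 * (ω ^ m - 1) = 0 := by linear_combination -h4
    exact sub_eq_zero.1 ((mul_eq_zero.1 h5).resolve_left (mul_ne_zero hω0 hg0))

end

section

structure Att (ω : ℂ) (q m : ℕ) (a : ℂ) (R r : ℝ) : Prop where
  hω : ‖ω‖ = 1
  hq : 1 ≤ q
  par : Par (Pq ω)^[q] m a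
  pet : ∀ v, v ^ m = -1 / (m * a) → Petal (Pq ω)^[q] m a v R r

def Om (m : ℕ) (v : ℂ) (R : ℝ) : Set ℂ := phi m v '' {ζ | R < ζ.re}

lemma mem_Om_of_zet {m : ℕ} {a z : ℂ} {R : ℝ} (hm : 1 ≤ m) (ha : a ≠ 0) (hz : z ≠ 0) (hR : 0 < R)
    (h : R < (zet m a z).re) : ∃ v, v ^ m = -1 / (m * a) ∧ z ∈ Om m v R := by
  have hm0 : (m:ℂ) ≠ 0 := by exact_mod_cast (by omega : m ≠ 0)
  have hζ : zet m a z ≠ 0 := by intro h0; rw [h0] at h; simp at h; linarith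
  refine ⟨z * exp (log (zet m a z) / m), ?_, zet m a z, h, ?_⟩
  · rw [mul_pow, ← Complex.exp_nat_mul, mul_div_cancel₀ _ hm0, Complex.exp_log hζ, zet]
    field_simp
  · rw [phi, mul_assoc, ← Complex.exp_add]
    ring_nf
    simp

lemma basin_iff_Pq {ω z : ℂ} : Pq ω z ∈ basin ω ↔ z ∈ basin ω := by
  simp only [basin, basinAug, preFixed, Set.mem_diff, Set.mem_setOf_eq, ← Function.iterate_succ_apply]
  refine and_congr (tendsto_add_atTop_iff_nat (f := fun n => (Pq ω)^[n] z) 1) (not_congr ⟨?_, ?_⟩)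
  · rintro ⟨n, h⟩; exact ⟨n+1, h⟩
  · rintro ⟨n, h⟩; exact ⟨n, by rw [Function.iterate_succ_apply', h, Pq_zero]⟩

lemma basin_iff_iter {ω z : ℂ} (n : ℕ) : (Pq ω)^[n] z ∈ basin ω ↔ z ∈ basin ω := by
  induction n with
  | zero => rfl
  | succ n ih => rw [Function.iterate_succ_apply', basin_iff_Pq, ih]

lemma basin_iff_iter' {ω z : ℂ} (q n : ℕ) : ((Pq ω)^[q])^[n] z ∈ basin ω ↔ z ∈ basin ω := by
  rw [← Function.iterate_mul]; exact basin_iff_iter _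

/-- subsequence along multiples of `q` determines convergence -/
lemma basin_of_sub {ω z : ℂ} {q : ℕ} (hq : 1 ≤ q) (ht : Tendsto (fun n => ((Pq ω)^[q])^[n] z) atTop (𝓝 0))
    (hne : ∀ n, ((Pq ω)^[q])^[n] z ≠ 0) : z ∈ basin ω := by
  refine ⟨?_, ?_⟩
  · show Tendsto _ _ _
    rw [Metric.tendsto_atTop]
    intro ε hε
    have h1 : ∀ j ∈ Finset.range q, ∀ᶠ n in atTop, ‖(Pq ω)^[j] (((Pq ω)^[q])^[n] z)‖ < ε := by
      intro j _
      have := ((Pq_iter_cont ω j).tendsto 0).comp ht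
      rw [Pq_iter_zero] at this
      have := this.norm
      rw [norm_zero] at this
      exact this.eventually_lt_const hε
    have h2 := (Finset.eventually_all (Finset.range q)).2 h1
    obtain ⟨N, hN⟩ := eventually_atTop.1 h2
    refine ⟨q * N, fun n hn => ?_⟩
    have h3 := hN (n / q) ((Nat.le_div_iff_mul_le (by omega)).2 (by rwa [mul_comm])) (n % q)
      (Finset.mem_range.2 (Nat.mod_lt _ (by omega)))
    rw [← Function.iterate_mul, ← Function.iterate_add_apply, Nat.mod_add_div] at h3
    simpa using h3
  · rintro ⟨n, hn⟩
    apply hne n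
    rw [← Function.iterate_mul]
    obtain ⟨k, hk⟩ : ∃ k, q * n = k + n := ⟨q * n - n, by have := Nat.le_mul_of_pos_left n hq; omega⟩
    rw [hk, Function.iterate_add_apply, hn, Pq_iter_zero]

lemma phi_tendsto {m : ℕ} (hm : 1 ≤ m) (v : ℂ) {u : ℕ → ℂ} (hu : Tendsto (fun n => (u n).re) atTop atTop) :
    Tendsto (fun n => phi m v (u n)) atTop (𝓝 0) := by
  have hm0 : (0:ℝ) < m := by exact_mod_cast hm
  have h1 : Tendsto (fun n => ‖v‖ * (u n).re ^ (-(1/m:ℝ))) atTop (𝓝 0) := by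
    simpa using ((tendsto_rpow_neg_atTop (y := 1/(m:ℝ)) (by positivity)).comp hu).const_mul ‖v‖
  refine squeeze_zero_norm' ?_ h1
  filter_upwards [hu.eventually_gt_atTop 0] with n hn
  have hne : u n ≠ 0 := by intro h; rw [h] at hn; simp at hn
  rw [norm_phi m v hne]
  refine mul_le_mul_of_nonneg_left ?_ (norm_nonneg _)
  exact Real.rpow_le_rpow_of_nonpos hn (Complex.re_le_norm _) (by simp)

namespace Att
variable {ω : ℂ} {q m : ℕ} {a : ℂ} {R r : ℝ}

lemma inv_Om (h : Att ω q m a R r) {v z : ℂ} (hv : v ^ m = -1 / (m * a)) (hz : z ∈ Om m v R) (n : ℕ) :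
    ((Pq ω)^[q])^[n] z ∈ Om m v R := by
  obtain ⟨ζ, hζ, rfl⟩ := hz
  rw [← (h.pet v hv).conj_iter hζ n]
  exact ⟨_, (h.pet v hv).iter_lt hζ n, rfl⟩

lemma Om_basin (h : Att ω q m a R r) {v : ℂ} (hv : v ^ m = -1 / (m * a)) : Om m v R ⊆ basin ω := by
  rintro _ ⟨ζ, hζ, rfl⟩
  have hp := h.pet v hv
  refine basin_of_sub h.hq ?_ ?_
  · have : (fun n => ((Pq ω)^[q])^[n] (phi m v ζ)) = fun n => phi m v ((Fz (Pq ω)^[q] m a v)^[n] ζ) := by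
      ext n; rw [hp.conj_iter hζ n]
    rw [this]
    refine phi_tendsto h.par.hm v ?_
    refine tendsto_atTop_mono (fun n => hp.iter_re hζ n) ?_
    refine tendsto_atTop_add_const_left _ _ ?_
    exact tendsto_natCast_atTop_atTop.const_mul_atTop (by norm_num)
  · intro n
    rw [← hp.conj_iter hζ n]
    exact phi_ne_zero h.par.hm h.par.ha hv

lemma Om_open (h : Att ω q m a R r) {v : ℂ} (hv : v ^ m = -1 / (m * a)) : IsOpen (Om m v R) := by
  rw [isOpen_iff_mem_nhds]
  rintro _ ⟨ζ, hζ, rfl⟩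
  have hm := h.par.hm
  have hR := (h.pet v hv).hR
  have hζ' : R < ζ.re := hζ
  have hm0 : (m:ℂ) ≠ 0 := by exact_mod_cast (by omega : m ≠ 0)
  have hne : phi m v ζ ≠ 0 := phi_ne_zero hm h.par.ha hv
  have hζ0 : ζ ≠ 0 := by rintro rfl; simp at hζ'; linarith
  have c1 : ContinuousAt (fun w => ‖w / phi m v ζ - 1‖) (phi m v ζ) := by fun_prop
  have c2 : ContinuousAt (fun w => (zet m a w).re) (phi m v ζ) := by
    refine Complex.continuous_re.continuousAt.comp ?_
    unfold zet
    refine ContinuousAt.div (by fun_prop) (by fun_prop) ?_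
    exact mul_ne_zero (mul_ne_zero hm0 h.par.ha) (pow_ne_zero _ hne)
  have e1 := c1.tendsto.eventually_lt_const (u := 1/(2*(m:ℝ))) (by
    rw [div_self hne, sub_self, norm_zero]
    have : (0:ℝ) < m := by exact_mod_cast hm
    positivity)
  have e2 := c2.tendsto.eventually_const_lt (u := R) (by rw [zet_phi hm h.par.ha hv hζ0]; exact hζ)
  filter_upwards [e1, e2] with w h1 h2
  exact ⟨zet m a w, h2, phi_conj hm h.par.ha hv (by linarith) h1.le⟩

lemma Om_conn (h : Att ω q m a R r) {v : ℂ} (hv : v ^ m = -1 / (m * a)) : IsPreconnected (Om m v R) := by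
  refine IsPreconnected.image (convex_halfSpace_re_gt R).isPreconnected _ ?_
  intro ζ hζ
  have hζ' : R < ζ.re := hζ
  have hR := (h.pet v hv).hR
  exact (phi_diff m v (Or.inl (by linarith))).continuousAt.continuousWithinAt

lemma Om_disj (h : Att ω q m a R r) {v v' z : ℂ} (hv : v ^ m = -1 / (m * a)) (hv' : v' ^ m = -1 / (m * a))
    (hz : z ∈ Om m v R) (hz' : z ∈ Om m v' R) : v = v' := by
  obtain ⟨ζ, hζ, rfl⟩ := hz
  obtain ⟨ζ', hζ', he⟩ := hz'
  have hR := (h.pet v hv).hR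
  have h0 : ∀ ζ : ℂ, R < ζ.re → ζ ≠ 0 := by rintro _ h1 rfl; simp at h1; linarith
  have h1 := zet_phi h.par.hm h.par.ha hv (h0 ζ hζ)
  rw [← he, zet_phi h.par.hm h.par.ha hv' (h0 ζ' hζ')] at h1
  rw [h1] at he
  exact (mul_right_cancel₀ (Complex.exp_ne_zero _) he).symm

lemma reach (h : Att ω q m a R r) (hR : 0 < R) {z : ℂ} (hz : z ∈ basin ω) :
    ∃ v, v ^ m = -1 / (m * a) ∧ ∃ n, ((Pq ω)^[q])^[n] z ∈ Om m v R := by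
  obtain ⟨r1, hr1, C, hC, hstep⟩ := h.par.step
  set u : ℕ → ℂ := fun n => ((Pq ω)^[q])^[n] z with hu
  have ht : Tendsto u atTop (𝓝 0) := by
    have h1 : Tendsto (fun n => (Pq ω)^[n] z) atTop (𝓝 0) := hz.1
    have h2 : Tendsto (fun n : ℕ => q * n) atTop atTop := by
      refine tendsto_atTop_mono (fun n => ?_) tendsto_id
      exact Nat.le_mul_of_pos_left n h.hq
    refine (h1.comp h2).congr fun n => ?_
    simp only [Function.comp, hu, Function.iterate_mul]
  have hne : ∀ n, u n ≠ 0 := fun n h0 => hz.2 ⟨q * n, by rw [Function.iterate_mul]; exact h0⟩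
  have h3 : ∀ᶠ n in atTop, ‖u n‖ < r1 := by
    have := ht.norm; rw [norm_zero] at this
    exact this.eventually_lt_const hr1
  obtain ⟨N, hN⟩ := eventually_atTop.1 h3
  have hs : ∀ k : ℕ, (zet m a (u N)).re + 3/4 * k ≤ (zet m a (u (N + k))).re := by
    intro k
    induction k with
    | zero => simp
    | succ k ih =>
      obtain ⟨-, -, -, h4, h5⟩ := hstep (u (N+k)) (hne _) (hN _ (by omega))
      have e : (Pq ω)^[q] (u (N + k)) = u (N + (k+1)) := by
        simp only [hu, ← add_assoc, Function.iterate_succ_apply']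
      rw [e] at h4
      have h6 := (Complex.abs_re_le_norm _).trans (h4.trans h5)
      rw [Complex.sub_re, Complex.sub_re, Complex.one_re] at h6
      have := (abs_le.1 h6).1
      push_cast
      linarith
  obtain ⟨k, hk⟩ := exists_nat_gt ((R - (zet m a (u N)).re) * (4/3))
  have := hs k
  obtain ⟨v, hv, hvm⟩ := mem_Om_of_zet h.par.hm h.par.ha (hne (N+k)) hR (by linarith)
  exact ⟨v, hv, N + k, hvm⟩

def Lam (ω : ℂ) (q m : ℕ) (v : ℂ) (R : ℝ) : Set ℂ := {z | ∃ n, ((Pq ω)^[q])^[n] z ∈ Om m v R}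

lemma Lam_open (h : Att ω q m a R r) {v : ℂ} (hv : v ^ m = -1 / (m * a)) : IsOpen (Lam ω q m v R) := by
  have : Lam ω q m v R = ⋃ n, ((Pq ω)^[q])^[n] ⁻¹' (Om m v R) := by ext; simp [Lam]
  rw [this]
  refine isOpen_iUnion fun n => (h.Om_open hv).preimage ?_
  exact (Pq_iter_cont ω q).iterate n

lemma Lam_disj (h : Att ω q m a R r) {v v' z : ℂ} (hv : v ^ m = -1 / (m * a)) (hv' : v' ^ m = -1 / (m * a))
    (hz : z ∈ Lam ω q m v R) (hz' : z ∈ Lam ω q m v' R) : v = v' := by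
  obtain ⟨n, hn⟩ := hz
  obtain ⟨n', hn'⟩ := hz'
  have h1 := h.inv_Om hv hn n'
  have h2 := h.inv_Om hv' hn' n
  rw [← Function.iterate_add_apply] at h1 h2
  rw [add_comm] at h2
  exact h.Om_disj hv hv' h1 h2

lemma Lam_basin (h : Att ω q m a R r) {v : ℂ} (hv : v ^ m = -1 / (m * a)) : Lam ω q m v R ⊆ basin ω := by
  rintro z ⟨n, hn⟩
  exact (basin_iff_iter' q n).1 (h.Om_basin hv hn)

lemma basin_open (h : Att ω q m a R r) (hR : 0 < R) : IsOpen (basin ω) := by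
  have : basin ω = ⋃ v : {v : ℂ // v ^ m = -1 / (m * a)}, Lam ω q m v R := by
    ext z
    simp only [mem_iUnion]
    refine ⟨fun hz => ?_, fun ⟨v, hv⟩ => h.Lam_basin v.2 hv⟩
    obtain ⟨v, hv, n, hn⟩ := h.reach hR hz
    exact ⟨⟨v, hv⟩, n, hn⟩
  rw [this]
  exact isOpen_iUnion fun v => h.Lam_open v.2

lemma conn_sub (h : Att ω q m a R r) (hR : 0 < R) {v : ℂ} (hv : v ^ m = -1 / (m * a)) {S : Set ℂ}
    (hS : IsPreconnected S) (hSb : S ⊆ basin ω) {z : ℂ} (hzS : z ∈ S) (hz : z ∈ Lam ω q m v R) :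
    S ⊆ Lam ω q m v R := by
  refine IsPreconnected.subset_left_of_subset_union (h.Lam_open hv)
    (v := ⋃ v' : {v' : ℂ // v' ^ m = -1 / (m * a) ∧ v' ≠ v}, Lam ω q m v' R)
    (isOpen_iUnion fun v' => h.Lam_open v'.2.1) ?_ ?_ ⟨z, hzS, hz⟩ hS
  · rw [Set.disjoint_left]
    intro x hx hx'
    obtain ⟨v', hv'⟩ := mem_iUnion.1 hx'
    exact v'.2.2 (h.Lam_disj v'.2.1 hv hv' hx)
  · intro x hx
    obtain ⟨v', hv', n, hn⟩ := h.reach hR (hSb hx)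
    by_cases he : v' = v
    · left; rw [← he]; exact ⟨n, hn⟩
    · right; exact mem_iUnion.2 ⟨⟨v', hv', he⟩, n, hn⟩

lemma img_sub (h : Att ω q m a R r) {z : ℂ} (hz : z ∈ basin ω) :
    Pq ω '' connectedComponentIn (basin ω) z ⊆ connectedComponentIn (basin ω) (Pq ω z) := by
  refine IsPreconnected.subset_connectedComponentIn
    (isPreconnected_connectedComponentIn.image _ (Pq_diff ω).continuous.continuousOn)
    ⟨z, mem_connectedComponentIn hz, rfl⟩ ?_
  rintro _ ⟨x, hx, rfl⟩
  exact basin_iff_Pq.2 (connectedComponentIn_subset _ _ hx)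

lemma img_eq (h : Att ω q m a R r) (hR : 0 < R) {z : ℂ} (hz : z ∈ basin ω) :
    Pq ω '' connectedComponentIn (basin ω) z = connectedComponentIn (basin ω) (Pq ω z) := by
  refine (h.img_sub hz).antisymm ?_
  have hop : IsOpenMap (Pq ω) := by
    rcases AnalyticOnNhd.is_constant_or_isOpenMap (g := Pq ω) (fun z _ => (Pq_diff ω).analyticAt z) with ⟨w, hw⟩ | h1
    · exfalso
      have h0 := hw 0
      have h1 := hw 1
      have h2 := hw (-1)
      rw [Pq_zero] at h0
      rw [← h0] at h1 h2
      simp only [Pq] at h1 h2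
      have : (2:ℂ) = 0 := by linear_combination h1 + h2
      norm_num at this
    · exact h1
  have hbo := h.basin_open hR
  set A := connectedComponentIn (basin ω) z with hA
  have hAo : IsOpen A := hbo.connectedComponentIn
  have hAb : Bornology.IsBounded A := by
    refine (Metric.isBounded_closedBall (x := (0:ℂ)) (r := 2)).subset fun x hx => ?_
    rw [mem_closedBall_zero_iff]
    exact basin_norm_le h.hω (connectedComponentIn_subset _ _ hx).1
  refine isPreconnected_connectedComponentIn.subset_of_closure_inter_subset (hop A hAo)
    ⟨Pq ω z, mem_connectedComponentIn (basin_iff_Pq.2 hz), z, mem_connectedComponentIn hz, rfl⟩ ?_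
  rintro y ⟨hy, hyC⟩
  have hcl : closure (Pq ω '' A) ⊆ Pq ω '' closure A :=
    closure_minimal (image_mono subset_closure)
      (hAb.isCompact_closure.image (Pq_diff ω).continuous).isClosed
  obtain ⟨x, hx, rfl⟩ := hcl hy
  have hxb : x ∈ basin ω := basin_iff_Pq.1 (connectedComponentIn_subset _ _ hyC)
  obtain ⟨y, hy1, hy2⟩ := mem_closure_iff.1 hx _ (hbo.connectedComponentIn (x := x)) (mem_connectedComponentIn hxb)
  refine ⟨x, ?_, rfl⟩
  rw [hA, connectedComponentIn_eq hy2, ← connectedComponentIn_eq hy1]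
  exact mem_connectedComponentIn hxb

end Att

end

section

lemma sqrt_ball {h : ℂ → ℂ} {x1 x0 b : ℂ} {ρ : ℝ} (hd : ∀ x ∈ Metric.ball x1 ρ, DifferentiableAt ℂ h x)
    (hne : ∀ x ∈ Metric.ball x1 ρ, h x ≠ 0) (hx0 : x0 ∈ Metric.ball x1 ρ) (hb : b ^ 2 = h x0) :
    ∃ s : ℂ → ℂ, (∀ x ∈ Metric.ball x1 ρ, DifferentiableAt ℂ s x) ∧ s x0 = b ∧
      ∀ x ∈ Metric.ball x1 ρ, s x ^ 2 = h x := by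
  have ho : IsOpen (Metric.ball x1 ρ) := Metric.isOpen_ball
  have hdo : DifferentiableOn ℂ h (Metric.ball x1 ρ) := fun x hx => (hd x hx).differentiableWithinAt
  obtain ⟨g, hg⟩ := (((hdo.deriv ho).div hdo hne).isExactOn_ball)
  have hk : ∀ x ∈ Metric.ball x1 ρ, HasDerivAt (fun x => h x * exp (-(g x))) 0 x := by
    intro x hx
    have h1 := (hd x hx).hasDerivAt.mul (hg x hx).neg.cexp
    have e : deriv h x * exp (-(g x)) + h x * (exp (-(g x)) * -(deriv h x / h x)) = 0 := by
      field_simp [hne x hx]; ring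
    have h2 : HasDerivAt (fun x => h x * exp (-(g x)))
      (deriv h x * exp (-(g x)) + h x * (exp (-(g x)) * -(deriv h x / h x))) x := h1
    rwa [e] at h2
  have hconst : ∀ x ∈ Metric.ball x1 ρ, h x * exp (-(g x)) = h x0 * exp (-(g x0)) := fun x hx =>
    ho.is_const_of_deriv_eq_zero (Metric.isPreconnected_ball) (fun x hx => (hk x hx).differentiableAt.differentiableWithinAt)
      (fun x hx => (hk x hx).deriv) hx hx0
  refine ⟨fun x => b * exp ((g x - g x0) / 2), fun x hx => ?_, by simp, fun x hx => ?_⟩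
  · have := (hg x hx).differentiableAt
    fun_prop
  · have h1 := hconst x hx
    rw [mul_pow, ← Complex.exp_nat_mul, hb]
    have e : ((2:ℕ):ℂ) * ((g x - g x0) / 2) = g x + -g x0 := by push_cast; ring
    rw [e, Complex.exp_add]
    have h2 : exp (-(g x)) * exp (g x) = 1 := by rw [← Complex.exp_add]; simp
    linear_combination -exp (g x) * h1 + h x * h2

lemma Pq_crit (ω z : ℂ) : Pq ω z - Pq ω (-ω/2) = (z - (-ω/2)) ^ 2 := by simp only [Pq]; ring

lemma deriv_phi_ne {m : ℕ} {a v ζ0 : ℂ} (hm : 1 ≤ m) (ha : a ≠ 0) (hv : v ^ m = -1 / (m * a)) (hζ : 0 < ζ0.re) :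
    deriv (phi m v) ζ0 ≠ 0 := by
  have hζ00 : ζ0 ≠ 0 := by rintro rfl; simp at hζ
  have hmc : (m:ℂ) ≠ 0 := by exact_mod_cast (by omega : m ≠ 0)
  have h1 := (((Complex.hasDerivAt_log (Or.inl hζ)).neg.div_const (m:ℂ)).cexp.const_mul v)
  have h2 : deriv (phi m v) ζ0 = v * (exp (-log ζ0 / m) * (-ζ0⁻¹ / m)) := h1.deriv
  rw [h2, ← mul_assoc]
  refine mul_ne_zero (phi_ne_zero (ζ := ζ0) hm ha hv) ?_
  exact div_ne_zero (neg_ne_zero.2 (inv_ne_zero hζ00)) hmc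

namespace Att
variable {ω : ℂ} {q m : ℕ} {a : ℂ} {R r : ℝ}

lemma lift_step (h : Att ω q m a R r) (hR : 0 < R) {H : ℂ → ℂ} {x1 x0 y : ℂ} {ρ : ℝ}
    (hd : ∀ x ∈ Metric.ball x1 ρ, DifferentiableAt ℂ H x) (hx0 : x0 ∈ Metric.ball x1 ρ)
    (hy : y ∈ basin ω) (hH0 : H x0 = Pq ω y)
    (hH : ∀ x ∈ Metric.ball x1 ρ, H x ∈ connectedComponentIn (basin ω) (Pq ω y))
    (hc : -ω/2 ∉ connectedComponentIn (basin ω) y) :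
    ∃ H' : ℂ → ℂ, (∀ x ∈ Metric.ball x1 ρ, DifferentiableAt ℂ H' x) ∧ H' x0 = y ∧
      (∀ x ∈ Metric.ball x1 ρ, H' x ∈ connectedComponentIn (basin ω) y) ∧
      ∀ x ∈ Metric.ball x1 ρ, Pq ω (H' x) = H x := by
  obtain ⟨s, hs1, hs2, hs3⟩ := sqrt_ball (h := fun x => H x - Pq ω (-ω/2)) (b := y - (-ω/2))
    (fun x hx => (hd x hx).sub_const _) (fun x hx h0 => by
      have h1 := hH x hx
      rw [sub_eq_zero.1 h0, ← h.img_eq hR hy] at h1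
      obtain ⟨u, hu, he⟩ := h1
      have h2 := Pq_crit ω u
      rw [he, sub_self] at h2
      have h3 := sub_eq_zero.1 (pow_eq_zero_iff (by norm_num) |>.1 h2.symm)
      exact hc (h3 ▸ hu)) hx0 (by rw [← Pq_crit, hH0])
  have hP : ∀ x ∈ Metric.ball x1 ρ, Pq ω (-ω/2 + s x) = H x := by
    intro x hx
    have h1 := Pq_crit ω (-ω/2 + s x)
    rw [add_sub_cancel_left, hs3 x hx] at h1
    exact sub_left_inj.1 h1
  refine ⟨fun x => -ω/2 + s x, fun x hx => (hs1 x hx).const_add _, by simp only [hs2]; ring, ?_, hP⟩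
  have hsub : (fun x => -ω/2 + s x) '' Metric.ball x1 ρ ⊆ connectedComponentIn (basin ω) y := by
    refine IsPreconnected.subset_connectedComponentIn ?_ ⟨x0, hx0, by simp only [hs2]; ring⟩ ?_
    · exact Metric.isPreconnected_ball.image _ fun x hx =>
        ((hs1 x hx).const_add _).continuousAt.continuousWithinAt
    · rintro _ ⟨x, hx, rfl⟩
      rw [← basin_iff_Pq, hP x hx]
      exact connectedComponentIn_subset _ _ (hH x hx)
  exact fun x hx => hsub ⟨x, hx, rfl⟩

lemma lift_iter (h : Att ω q m a R r) (hR : 0 < R) {H : ℂ → ℂ} {x1 x0 : ℂ} {ρ : ℝ}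
    (hd : ∀ x ∈ Metric.ball x1 ρ, DifferentiableAt ℂ H x) (hx0 : x0 ∈ Metric.ball x1 ρ) (n : ℕ) :
    ∀ y ∈ basin ω, H x0 = (Pq ω)^[n] y →
    (∀ x ∈ Metric.ball x1 ρ, H x ∈ connectedComponentIn (basin ω) ((Pq ω)^[n] y)) →
    (∀ j, -ω/2 ∉ connectedComponentIn (basin ω) ((Pq ω)^[j] y)) →
    ∃ H' : ℂ → ℂ, (∀ x ∈ Metric.ball x1 ρ, DifferentiableAt ℂ H' x) ∧ H' x0 = y ∧
      (∀ x ∈ Metric.ball x1 ρ, H' x ∈ connectedComponentIn (basin ω) y) ∧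
      ∀ x ∈ Metric.ball x1 ρ, (Pq ω)^[n] (H' x) = H x := by
  induction n with
  | zero => exact fun y hy h1 h2 h3 => ⟨H, hd, h1, h2, fun _ _ => rfl⟩
  | succ n ih =>
    intro y hy h1 h2 h3
    obtain ⟨H1, a1, a2, a3, a4⟩ := ih (Pq ω y) (basin_iff_Pq.2 hy) h1 h2 (fun j => h3 (j+1))
    obtain ⟨H2, b1, b2, b3, b4⟩ := h.lift_step hR a1 hx0 hy a2 a3 (h3 0)
    refine ⟨H2, b1, b2, b3, fun x hx => ?_⟩
    rw [Function.iterate_succ_apply, b4 x hx, a4 x hx]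

lemma Om_sub_comp (h : Att ω q m a R r) {v z : ℂ} (hv : v ^ m = -1 / (m * a)) (hz : z ∈ Om m v R) :
    Om m v R ⊆ connectedComponentIn (basin ω) z :=
  (h.Om_conn hv).subset_connectedComponentIn hz (h.Om_basin hv)

lemma crit (h : Att ω q m a R r) {v z : ℂ} (hv : v ^ m = -1 / (m * a)) (hz : z ∈ Om m v R) :
    ∃ n, -ω/2 ∈ connectedComponentIn (basin ω) ((Pq ω)^[n] z) := by
  by_contra hcon
  push Not at hcon
  have hp := h.pet v hv
  have hR : 0 < R := by linarith [hp.hR]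
  have hzb := h.Om_basin hv hz
  obtain ⟨ζ0, hζ0, rfl⟩ := hz
  have hζ0' : R < ζ0.re := hζ0
  set F := Fz (Pq ω)^[q] m a v with hF
  have hre : ∀ k, ∀ x ∈ Metric.ball (F^[k] ζ0) ((F^[k] ζ0).re - R), R < x.re := by
    intro k x hx
    rw [mem_ball_iff_norm] at hx
    have := (Complex.abs_re_le_norm _).trans_lt hx
    rw [Complex.sub_re] at this
    linarith [(abs_lt.1 this).1]
  have hctr : ∀ k, F^[k] ζ0 ∈ Metric.ball (F^[k] ζ0) ((F^[k] ζ0).re - R) := fun k =>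
    Metric.mem_ball_self (sub_pos.2 (hp.iter_lt hζ0 k))
  have hcj : ∀ k x, R < x.re → phi m v (F^[k] x) = (Pq ω)^[q * k] (phi m v x) := by
    intro k x hx
    rw [hF, hp.conj_iter hx k, Function.iterate_mul]
  have hex : ∀ k, ∃ H' : ℂ → ℂ, (∀ x ∈ Metric.ball (F^[k] ζ0) ((F^[k] ζ0).re - R), DifferentiableAt ℂ H' x) ∧
      H' (F^[k] ζ0) = phi m v ζ0 ∧
      (∀ x ∈ Metric.ball (F^[k] ζ0) ((F^[k] ζ0).re - R), H' x ∈ connectedComponentIn (basin ω) (phi m v ζ0)) ∧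
      ∀ x ∈ Metric.ball (F^[k] ζ0) ((F^[k] ζ0).re - R), (Pq ω)^[q * k] (H' x) = phi m v x := by
    intro k
    refine h.lift_iter hR (fun x hx => phi_diff m v (Or.inl (hR.trans (hre k x hx)))) (hctr k) (q * k) _ hzb
      (hcj k ζ0 hζ0) (fun x hx => ?_) hcon
    rw [← hcj k ζ0 hζ0]
    exact h.Om_sub_comp hv ⟨_, hp.iter_lt hζ0 k, rfl⟩ ⟨x, hre k x hx, rfl⟩
  choose H hH1 hH2 hH3 hH4 using hex
  refine hp.no_bdd h.par.hm h.par.ha hζ0 H hH1 (fun k x hx => ?_) (fun k => ?_)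
  · have := basin_norm_le h.hω (connectedComponentIn_subset _ _ (hH3 k x hx)).1
    linarith
  · have hT := fun y => (Pq_iter_diff ω (q * k)) y
    have d1 := (hT (H k (F^[k] ζ0))).hasDerivAt.comp (F^[k] ζ0) (hH1 k _ (hctr k)).hasDerivAt
    have d2 := d1.congr_of_eventuallyEq (f₁ := phi m v) (by
      filter_upwards [Metric.isOpen_ball.mem_nhds (hctr k)] with x hx
      exact (hH4 k x hx).symm)
    have hT0 : deriv (Pq ω)^[q * k] (phi m v ζ0) ≠ 0 := by
      intro h0
      rw [hH2, h0, zero_mul] at d2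
      exact deriv_phi_ne h.par.hm h.par.ha hv (hR.trans (hp.iter_lt hζ0 k)) d2.deriv
    have d3 := d2.comp ζ0 (hp.diff_iter hζ0 k).hasDerivAt
    have d4 := (hT (phi m v ζ0)).hasDerivAt.comp ζ0 (phi_diff m v (Or.inl (hR.trans hζ0))).hasDerivAt
    have d5 := d4.congr_of_eventuallyEq (f₁ := phi m v ∘ F^[k]) (by
      have ho : IsOpen {ζ : ℂ | R < ζ.re} := isOpen_lt continuous_const Complex.continuous_re
      filter_upwards [ho.mem_nhds hζ0] with x hx
      exact hcj k x hx)
    have e := d3.unique d5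
    rw [hH2, mul_assoc] at e
    exact mul_left_cancel₀ hT0 e

end Att

end

section

lemma ray_abs {Ψ : ℂ → ℂ} {G : ℂ → ℝ} {D : ℝ} {k : ℕ} {K : Set ℂ} {Z0 : ℂ} (hG : Continuous G) (hG0 : G 0 = 0)
    (hD : 1 < D) (hu : ∀ Z, G (Ψ Z) = D * G (Ψ (Z + 1)))
    (hK : IsCompact K) (hKc : IsPreconnected K) (hk : 1 ≤ k) (hZ0 : Z0 ∈ K) (hZk : Z0 + k ∈ K)
    (hKu : ∀ Z ∈ K, 0 < G (Ψ Z)) (hΨ : ∀ Z, 0 < G (Ψ Z) → ContinuousAt Ψ Z)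
    (ht : ∀ ε : ℝ, 0 < ε → ∃ T : ℝ, ∀ Z, 0 < G (Ψ Z) → T < Z.re → ‖Ψ Z‖ < ε) :
    ∃ X : Set ℂ, IsClosed X ∧ IsPreconnected X ∧ (0:ℂ) ∈ X ∧ (∀ A : ℝ, ∃ z ∈ X, A < ‖z‖) ∧
      (∀ z ∈ X, z ≠ 0 → 0 < G z) ∧ ∀ T : ℝ, ∃ r1 : ℝ, 0 < r1 ∧ ∀ z ∈ X, z ≠ 0 → ‖z‖ < r1 →
        ∃ Z, 0 < G (Ψ Z) ∧ T < Z.re ∧ Ψ Z = z := by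
  have hD0 : 0 < D := by linarith
  have hk0 : (1:ℝ) ≤ k := by exact_mod_cast hk
  have huj : ∀ (j : ℕ) Z, G (Ψ Z) = D ^ j * G (Ψ (Z + j)) := by
    intro j
    induction j with
    | zero => intro Z; simp
    | succ j ih =>
      intro Z
      rw [ih Z, hu (Z + j), pow_succ]
      push_cast
      rw [add_assoc, mul_assoc]
  have huj' : ∀ (i j : ℤ), i ≤ j → ∀ Z, G (Ψ (Z + i)) = D ^ (j - i).toNat * G (Ψ (Z + j)) := by
    intro i j hij Z
    rw [huj (j - i).toNat (Z + i), add_assoc]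
    congr 4
    have : (((j - i).toNat : ℤ) : ℂ) = ((j - i : ℤ) : ℂ) := by rw [Int.toNat_of_nonneg (by omega)]
    rw [Int.cast_natCast] at this
    rw [this]; push_cast; ring_nf
  have hpos : ∀ (i : ℤ) Z, 0 < G (Ψ Z) → 0 < G (Ψ (Z + i)) := by
    intro i Z hZ
    rcases le_total 0 i with h | h
    · have := huj' 0 i h Z
      simp only [Int.cast_zero, add_zero] at this
      rw [this] at hZ
      exact (pos_iff_pos_of_mul_pos hZ).1 (by positivity)
    · rw [huj' i 0 h Z]
      simp only [Int.cast_zero, add_zero]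
      positivity
  set s : ℤ → Set ℂ := fun n => (fun Z : ℂ => Z + ((n * k : ℤ) : ℂ)) '' K with hs
  have hsK : ∀ n, IsCompact (s n) := fun n => hK.image (by fun_prop)
  have hsc : ∀ n, IsPreconnected (s n) := fun n => hKc.image _ (by fun_prop)
  have hsu : ∀ n, ∀ Z ∈ s n, 0 < G (Ψ Z) := by
    rintro n _ ⟨Z, hZ, rfl⟩
    exact hpos _ Z (hKu Z hZ)
  have hΨs : ∀ n, ContinuousOn Ψ (s n) := fun n Z hZ => (hΨ Z (hsu n Z hZ)).continuousWithinAt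
  have hΨK : ∀ n, IsCompact (Ψ '' s n) := fun n => (hsK n).image_of_continuousOn (hΨs n)
  set S : Set ℂ := ⋃ n, s n with hS
  have hSu : ∀ Z ∈ S, 0 < G (Ψ Z) := fun Z hZ => by
    obtain ⟨n, hn⟩ := mem_iUnion.1 hZ; exact hsu n Z hn
  have hSc : IsPreconnected S := by
    refine IsPreconnected.iUnion_of_chain hsc fun n => ?_
    refine ⟨Z0 + k + ((n * k : ℤ) : ℂ), ⟨_, hZk, rfl⟩, Z0, hZ0, ?_⟩
    simp only [Int.succ_eq_succ, Int.succ]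
    push_cast; ring
  have hIc : IsPreconnected (Ψ '' S) := hSc.image _ fun Z hZ => (hΨ Z (hSu Z hZ)).continuousWithinAt
  obtain ⟨b, hb⟩ := hK.isBounded.exists_norm_le
  -- lower bounds
  have hlow : ∀ n : ℤ, ∃ μ > 0, ∀ j ≤ n, ∀ Z ∈ s j, μ * D ^ ((n - j) * k).toNat ≤ G (Ψ Z) := by
    intro n
    obtain ⟨Z1, hZ1, hmin⟩ := (hsK n).exists_isMinOn ⟨_, Z0, hZ0, rfl⟩ (hG.comp_continuousOn (hΨs n))
    refine ⟨G (Ψ Z1), hsu n Z1 hZ1, ?_⟩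
    rintro j hj _ ⟨Z, hZ, rfl⟩
    simp only
    rw [huj' (j * k) (n * k) (by gcongr) Z, mul_comm, ← sub_mul]
    refine mul_le_mul_of_nonneg_left ?_ (by positivity)
    exact hmin ⟨Z, hZ, rfl⟩
  have hlarge : ∀ A : ℝ, ∃ n : ℤ, ∀ j ≤ n, ∀ Z ∈ s j, A < ‖Ψ Z‖ := by
    intro A
    obtain ⟨g, hg⟩ := ((isCompact_closedBall (0:ℂ) A).image hG).isBounded.exists_norm_le
    obtain ⟨μ, hμ, hl⟩ := hlow 0
    obtain ⟨N, hN⟩ := pow_unbounded_of_one_lt (g / μ) hD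
    refine ⟨-N, fun j hj Z hZ => ?_⟩
    by_contra hcon
    push Not at hcon
    have h1 := hg _ ⟨Ψ Z, by simpa using hcon, rfl⟩
    have h2 := hl j (by omega) Z hZ
    have h3 : D ^ N ≤ D ^ ((0 - j) * k).toNat := by
      refine pow_le_pow_right₀ hD.le ?_
      have : (N:ℤ) ≤ (0 - j) * k := by
        have hk' : (1:ℤ) ≤ k := by exact_mod_cast hk
        nlinarith
      omega
    rw [div_lt_iff₀ hμ] at hN
    have h4 : G (Ψ Z) ≤ g := (le_abs_self _).trans h1
    nlinarith
  have htail : ∀ T : ℝ, ∃ n : ℤ, ∀ j, n ≤ j → ∀ Z ∈ s j, T < Z.re := by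
    intro T
    obtain ⟨N, hN⟩ := exists_nat_gt (T + b)
    refine ⟨N, ?_⟩
    rintro j hj _ ⟨Z, hZ, rfl⟩
    have h1 := (abs_le.1 ((Complex.abs_re_le_norm Z).trans (hb Z hZ))).1
    have h2 : (N:ℝ) ≤ (j:ℝ) := by exact_mod_cast hj
    simp only [Complex.add_re, Complex.intCast_re]
    push_cast
    have : (0:ℝ) ≤ N := by positivity
    nlinarith
  have htail2 : ∀ ε : ℝ, 0 < ε → ∃ n : ℤ, ∀ j, n ≤ j → ∀ Z ∈ s j, ‖Ψ Z‖ < ε := by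
    intro ε hε
    obtain ⟨T, hT⟩ := ht ε hε
    obtain ⟨n, hn⟩ := htail T
    exact ⟨n, fun j hj Z hZ => hT Z (hsu j Z hZ) (hn j hj Z hZ)⟩
  have hne : ∀ n, (s n).Nonempty := fun n => ⟨_, Z0, hZ0, rfl⟩
  have h0cl : (0:ℂ) ∈ closure (Ψ '' S) := by
    rw [Metric.mem_closure_iff]
    intro ε hε
    obtain ⟨n, hn⟩ := htail2 ε hε
    obtain ⟨Z, hZ⟩ := hne n
    exact ⟨Ψ Z, ⟨Z, mem_iUnion.2 ⟨n, hZ⟩, rfl⟩, by simpa using hn n le_rfl Z hZ⟩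
  refine ⟨insert 0 (Ψ '' S), ?_, ?_, mem_insert _ _, ?_, ?_, ?_⟩
  · refine isClosed_of_closure_subset fun y hy => ?_
    by_cases hy0 : y = 0
    · rw [hy0]; exact mem_insert _ _
    have hyn : 0 < ‖y‖ := norm_pos_iff.2 hy0
    obtain ⟨n1, hn1⟩ := htail2 (‖y‖/2) (by linarith)
    obtain ⟨n2, hn2⟩ := hlarge (‖y‖ + 1)
    set Y : Set ℂ := ⋃ n ∈ Finset.Icc n2 n1, Ψ '' s n with hY
    have hYc : IsClosed Y := by
      rw [hY]
      exact isClosed_biUnion_finset fun n _ => (hΨK n).isClosed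
    have hYX : Y ⊆ Ψ '' S := by
      intro z hz
      simp only [hY, mem_iUnion] at hz
      obtain ⟨n, -, Z, hZ, rfl⟩ := hz
      exact ⟨Z, mem_iUnion.2 ⟨n, hZ⟩, rfl⟩
    refine Or.inr (hYX ?_)
    rw [← hYc.closure_eq, Metric.mem_closure_iff]
    intro ε hε
    obtain ⟨z, hz, hd⟩ := Metric.mem_closure_iff.1 hy (min ε (min (‖y‖/2) 1)) (by positivity)
    refine ⟨z, ?_, hd.trans_le (min_le_left _ _)⟩
    have hd1 : dist y z < ‖y‖/2 := hd.trans_le ((min_le_right _ _).trans (min_le_left _ _))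
    have hd2 : dist y z < 1 := hd.trans_le ((min_le_right _ _).trans (min_le_right _ _))
    rw [dist_eq_norm] at hd1 hd2
    have e1 := norm_sub_norm_le y z
    have e2 := norm_sub_norm_le z y
    rw [norm_sub_rev] at e2
    rcases hz with rfl | ⟨Z, hZ, rfl⟩
    · simp at hd1; linarith
    obtain ⟨n, hn⟩ := mem_iUnion.1 hZ
    simp only [hY, mem_iUnion]
    refine ⟨n, Finset.mem_Icc.2 ⟨?_, ?_⟩, Z, hn, rfl⟩
    · by_contra hlt
      have := hn2 n (by omega) Z hn
      linarith
    · by_contra hlt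
      have := hn1 n (by omega) Z hn
      linarith
  · refine hIc.subset_closure (subset_insert _ _) ?_
    rintro z (rfl | hz)
    · exact h0cl
    · exact subset_closure hz
  · intro A
    obtain ⟨n, hn⟩ := hlarge A
    obtain ⟨Z, hZ⟩ := hne n
    exact ⟨Ψ Z, Or.inr ⟨Z, mem_iUnion.2 ⟨n, hZ⟩, rfl⟩, hn n le_rfl Z hZ⟩
  · rintro z (rfl | ⟨Z, hZ, rfl⟩) h0
    · exact absurd rfl h0
    · exact hSu Z hZ
  · intro T
    obtain ⟨n, hn⟩ := htail T
    obtain ⟨μ, hμ, hl⟩ := hlow n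
    have hev := (hG.tendsto 0).eventually_lt_const (u := μ) (by rwa [hG0])
    obtain ⟨r1, hr1, hball⟩ := Metric.eventually_nhds_iff.1 hev
    refine ⟨r1, hr1, ?_⟩
    rintro z (rfl | ⟨Z, hZ, rfl⟩) h0 hzr
    · exact absurd rfl h0
    obtain ⟨j, hj⟩ := mem_iUnion.1 hZ
    refine ⟨Z, hSu Z hZ, ?_, rfl⟩
    by_cases hjn : n ≤ j
    · exact hn j hjn Z hj
    · have h1 := hl j (by omega) Z hj
      have h2 := hball (y := Ψ Z) (by simpa using hzr)
      have h3 : 1 ≤ D ^ ((n - j) * k).toNat := one_le_pow₀ hD.le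
      nlinarith

end

section

lemma zet_small {m : ℕ} {a : ℂ} (hm : 1 ≤ m) (ha : a ≠ 0) {r1 : ℝ} (hr : 0 < r1) {z : ℂ}
    (hz : 1 / (m * ‖a‖ * r1 ^ m) + 1 ≤ ‖zet m a z‖) : ‖z‖ < r1 := by
  by_contra hc
  push Not at hc
  have hm0 : (0:ℝ) < m := by exact_mod_cast (by omega : 0 < m)
  have ha0 : 0 < ‖a‖ := norm_pos_iff.2 ha
  have e : ‖zet m a z‖ = 1 / (m * ‖a‖ * ‖z‖ ^ m) := by simp [zet]
  have h1 : 1 / (m * ‖a‖ * ‖z‖ ^ m) ≤ 1 / (m * ‖a‖ * r1 ^ m) := by gcongr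
  linarith

lemma rep_fg {f g : ℂ → ℂ} {m : ℕ} {a w : ℂ} {R r : ℝ} (hp : Petal g m a w R r)
    (hfg : ∀ z, ‖z‖ < r → f (g z) = z) {x : ℂ} (hx : R < x.re) (k : ℕ) :
    f^[k] (phi m w ((Fz g m a w)^[k] x)) = phi m w x := by
  induction k with
  | zero => rfl
  | succ k ih =>
    rw [Function.iterate_succ_apply, Function.iterate_succ_apply', hp.conj _ (hp.iter_lt hx k),
      hfg _ (hp.small _ (hp.iter_lt hx k)), ih]

lemma Gr_f_iter {ω : ℂ} (hω : ‖ω‖ = 1) (q n : ℕ) (z : ℂ) :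
    Gr ω (((Pq ω)^[q])^[n] z) = (2 ^ q) ^ n * Gr ω z := by
  rw [← Function.iterate_mul, Gr_iter hω, pow_mul]

lemma f_iter_diff (ω : ℂ) (q n : ℕ) : Differentiable ℂ ((Pq ω)^[q])^[n] := by
  rw [← Function.iterate_mul]; exact Pq_iter_diff ω _

lemma rep_pos {ω : ℂ} (hω : ‖ω‖ = 1) {q : ℕ} {g : ℂ → ℂ} {m : ℕ} {a w : ℂ} {R r : ℝ} (hm : 1 ≤ m)
    (ha : a ≠ 0) (hp : Petal g m a w R r)
    (hfg : ∀ z, ‖z‖ < r → (Pq ω)^[q] (g z) = z) : ∃ ζ0 : ℂ, R < ζ0.re ∧ 0 < Gr ω (phi m w ζ0) := by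
  by_contra hc
  push Not at hc
  have h0 : ∀ ζ : ℂ, R < ζ.re → 0 = Gr ω (phi m w ζ) := fun ζ hζ =>
    le_antisymm (Gr_nonneg hω _) (hc ζ hζ)
  set ζ0 : ℂ := ((R + 1 : ℝ) : ℂ) with hζ0
  have hζ : R < ζ0.re := by simp [hζ0]
  have hball : ∀ k, ∀ ζ ∈ Metric.ball ((Fz g m a w)^[k] ζ0) (((Fz g m a w)^[k] ζ0).re - R), R < ζ.re := by
    intro k ζ hζ
    rw [Metric.mem_ball, dist_eq_norm] at hζ
    have := (Complex.abs_re_le_norm _).trans_lt hζ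
    rw [abs_lt, Complex.sub_re] at this
    linarith
  have hphd : ∀ ζ : ℂ, R < ζ.re → DifferentiableAt ℂ (phi m w) ζ := fun ζ hζ =>
    phi_diff m w (Or.inl (by linarith [hp.hR]))
  refine hp.no_bdd hm ha hζ (fun k => ((Pq ω)^[q])^[k] ∘ phi m w) ?_ ?_ ?_
  · intro k ζ hζ
    exact (f_iter_diff ω q k _).comp _ (hphd _ (hball k ζ hζ))
  · intro k ζ hζ
    have := Gr_pos_of_large hω _ (h0 ζ (hball k ζ hζ)) (q * k)
    rwa [Function.iterate_mul] at this
  · intro k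
    have h1 : (((Pq ω)^[q])^[k] ∘ phi m w) ∘ (Fz g m a w)^[k] =ᶠ[𝓝 ζ0] phi m w := by
      have ho : IsOpen {ζ : ℂ | R < ζ.re} := isOpen_lt continuous_const Complex.continuous_re
      filter_upwards [ho.mem_nhds hζ] with x hx
      exact rep_fg hp hfg hx k
    rw [← h1.deriv_eq]
    exact (deriv_comp ζ0 ((f_iter_diff ω q k _).comp _ (hphd _ (hp.iter_lt hζ k))) (hp.diff_iter hζ k)).symm

lemma rep_far {ω : ℂ} {q : ℕ} {g : ℂ → ℂ} {m : ℕ} {a w : ℂ} {R r R' r' : ℝ} (h : Att ω q m a R r)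
    (hR : 0 < R) (hp : Petal g m (-a) w R' r')
    (hfg : ∀ z, ‖z‖ < r' → (Pq ω)^[q] (g z) = z) {Φ : ℂ → ℂ} (hΦ : FatC g m (-a) w R' Φ) :
    ∃ M : ℝ, ∀ ζ : ℂ, R' < ζ.re → M ≤ |(Φ ζ).im| → Gr ω (phi m w ζ) = 0 := by
  have hm := h.par.hm
  have ha := h.par.ha
  obtain ⟨r1, hr1, C, hC, hstep⟩ := h.par.step
  set A0 : ℝ := 1 / (m * ‖a‖ * r1 ^ m) + 1 with hA0
  obtain ⟨N, hN⟩ := exists_nat_gt (2 * (R + R' + 2))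
  obtain ⟨M, hM⟩ := hp.fat_im hΦ (A0 + 2 * N)
  refine ⟨M, fun ζ hζ hζM => ?_⟩
  obtain ⟨n, x, hx1, hx2, hx3, hx4⟩ := hM ζ hζ hζM
  have hx0 : x ≠ 0 := by rintro rfl; simp at hx1; linarith [hp.hR]
  set z := phi m w x with hz
  have hz0 : z ≠ 0 := phi_ne_zero hm (neg_ne_zero.2 ha) hp.hv
  have hzx : zet m a z = -x := by
    have := zet_phi hm (neg_ne_zero.2 ha) hp.hv hx0
    rw [← this, zet, zet]
    rw [mul_neg, neg_mul, div_neg, neg_neg]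
  have key : ∀ k : ℕ, k ≤ N → ((Pq ω)^[q])^[k] z ≠ 0 ∧ ‖zet m a (((Pq ω)^[q])^[k] z) + x - k‖ ≤ k / 4 := by
    intro k
    induction k with
    | zero => intro _; exact ⟨hz0, by simp [hzx]⟩
    | succ k ih =>
      intro hk
      obtain ⟨i1, i2⟩ := ih (by omega)
      rw [Function.iterate_succ_apply']
      set y := ((Pq ω)^[q])^[k] z with hy
      have hkN : (k:ℝ) ≤ N := by exact_mod_cast (by omega : k ≤ N)
      have hy1 : ‖y‖ < r1 := by
        apply zet_small hm ha hr1
        have h1 := Complex.abs_im_le_norm (zet m a y + x - k)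
        have h2 : (zet m a y + x - k).im = (zet m a y).im + x.im := by simp
        rw [h2] at h1
        have h3 := Complex.abs_im_le_norm (zet m a y)
        have h4 : |x.im| ≤ |(zet m a y).im + x.im| + |(zet m a y).im| := by
          have := abs_sub ((zet m a y).im + x.im) ((zet m a y).im)
          rwa [add_sub_cancel_left] at this
        have hk0 : (0:ℝ) ≤ k := by positivity
        linarith
      obtain ⟨-, s1, -, s2, s3⟩ := hstep y i1 hy1
      refine ⟨s1, ?_⟩
      have e : zet m a ((Pq ω)^[q] y) + x - ((k+1:ℕ):ℂ) = (zet m a ((Pq ω)^[q] y) - zet m a y - 1) + (zet m a y + x - k) := by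
        push_cast; ring
      rw [e]
      refine (norm_add_le _ _).trans ?_
      push_cast
      linarith
  obtain ⟨k1, k2⟩ := key N le_rfl
  have h5 : R < (zet m a (((Pq ω)^[q])^[N] z)).re := by
    have h1 := (Complex.abs_re_le_norm _).trans k2
    simp at h1
    have := (abs_le.1 h1).1
    linarith
  obtain ⟨v, hv, hvz⟩ := mem_Om_of_zet hm ha k1 hR h5
  have hzb : z ∈ basin ω := (basin_iff_iter' q N).1 (h.Om_basin hv hvz)
  have hfz : ((Pq ω)^[q])^[n] (phi m w ζ) = z := by rw [← hx3]; exact rep_fg hp hfg hx1 n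
  rw [← hfz] at hzb
  exact Gr_basin h.hω ((basin_iff_iter' q n).1 hzb).1

end

section

lemma strip_Psi {ω : ℂ} {q : ℕ} {g : ℂ → ℂ} {m : ℕ} {a w : ℂ} {R' r' : ℝ}
    (hp : Petal g m a w R' r') 
    (hfg : ∀ z, ‖z‖ < r' → (Pq ω)^[q] (g z) = z) {B N0 : ℝ} {Φ ψ : ℂ → ℂ}
    (hψ : ∀ Z : ℂ, N0 < Z.re → |Z.im| < B →
      R' < (ψ Z).re ∧ Φ (ψ Z) = Z ∧ DifferentiableAt ℂ ψ Z ∧ Fz g m a w (ψ Z) = ψ (Z + 1)) :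
    ∃ Ψ : ℂ → ℂ, (∀ Z : ℂ, |Z.im| < B → ∀ n : ℕ, N0 < Z.re + n → Ψ Z = ((Pq ω)^[q])^[n] (phi m w (ψ (Z + n)))) ∧
      (∀ Z : ℂ, |Z.im| < B → DifferentiableAt ℂ Ψ Z) ∧ (∀ Z, Ψ Z = (Pq ω)^[q] (Ψ (Z + 1))) ∧
      (∀ Z : ℂ, B ≤ |Z.im| → Ψ Z = 0) := by
  classical
  set f := (Pq ω)^[q] with hf
  have s1 : ∀ Z : ℂ, N0 < Z.re → |Z.im| < B → f (phi m w (ψ (Z + 1))) = phi m w (ψ Z) := by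
    intro Z h1 h2
    obtain ⟨i1, -, -, i4⟩ := hψ Z h1 h2
    rw [← i4, hp.conj _ i1, hfg _ (hp.small _ i1)]
  have s2 : ∀ n : ℕ, ∀ Z : ℂ, N0 < Z.re → |Z.im| < B → f^[n] (phi m w (ψ (Z + n))) = phi m w (ψ Z) := by
    intro n
    induction n with
    | zero => intro Z _ _; simp
    | succ n ih =>
      intro Z h1 h2
      have h3 := ih (Z + 1) (by simp; linarith) (by simpa using h2)
      have e : Z + ((n+1 : ℕ) : ℂ) = Z + 1 + n := by push_cast; ring
      rw [e, Function.iterate_succ_apply', h3, s1 Z h1 h2]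
  have s3 : ∀ Z : ℂ, |Z.im| < B → ∀ n k : ℕ, n ≤ k → N0 < Z.re + n →
      f^[k] (phi m w (ψ (Z + k))) = f^[n] (phi m w (ψ (Z + n))) := by
    intro Z hZ n k hnk hn
    obtain ⟨d, rfl⟩ := Nat.exists_eq_add_of_le hnk
    have e : Z + ((n + d : ℕ) : ℂ) = Z + n + d := by push_cast; ring
    rw [e, Function.iterate_add_apply, s2 d (Z + n) (by simpa using hn) (by simpa using hZ)]
  have s4 : ∀ Z : ℂ, |Z.im| < B → ∀ n k : ℕ, N0 < Z.re + k → N0 < Z.re + n →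
      f^[k] (phi m w (ψ (Z + k))) = f^[n] (phi m w (ψ (Z + n))) := by
    intro Z hZ n k hk hn
    rcases le_total n k with h | h
    · exact s3 Z hZ n k h hn
    · exact (s3 Z hZ k n h hk).symm
  set nn : ℂ → ℕ := fun Z => ⌈N0 - Z.re⌉₊ + 1 with hnn
  have hnn1 : ∀ Z : ℂ, N0 < Z.re + nn Z := by
    intro Z
    have := Nat.le_ceil (N0 - Z.re)
    simp only [hnn]; push_cast; linarith
  set Ψ : ℂ → ℂ := fun Z => if |Z.im| < B then f^[nn Z] (phi m w (ψ (Z + nn Z))) else 0 with hΨ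
  have p1 : ∀ Z : ℂ, |Z.im| < B → ∀ n : ℕ, N0 < Z.re + n → Ψ Z = f^[n] (phi m w (ψ (Z + n))) := by
    intro Z hZ n hn
    simp only [hΨ, if_pos hZ]
    exact s4 Z hZ _ _ (hnn1 Z) hn
  have f0 : f 0 = 0 := Pq_iter_zero ω q
  refine ⟨Ψ, p1, ?_, ?_, ?_⟩
  · intro Z hZ
    have ho : IsOpen {Y : ℂ | |Y.im| < B ∧ N0 < Y.re + nn Z} := by
      have o1 : IsOpen {Y : ℂ | |Y.im| < B} := isOpen_lt (by fun_prop) continuous_const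
      have o2 : IsOpen {Y : ℂ | N0 < Y.re + nn Z} := isOpen_lt continuous_const (by fun_prop)
      exact o1.inter o2
    have he : Ψ =ᶠ[𝓝 Z] fun Y => f^[nn Z] (phi m w (ψ (Y + nn Z))) := by
      filter_upwards [ho.mem_nhds ⟨hZ, hnn1 Z⟩] with Y hY
      exact p1 Y hY.1 _ hY.2
    refine DifferentiableAt.congr_of_eventuallyEq ?_ he
    obtain ⟨i1, -, i3, -⟩ := hψ (Z + nn Z) (by simpa using hnn1 Z) (by simpa using hZ)
    have d1 : DifferentiableAt ℂ (fun Y => ψ (Y + nn Z)) Z :=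
      DifferentiableAt.comp Z (f := fun Y => Y + (nn Z : ℂ)) i3 (by fun_prop)
    have d2 : DifferentiableAt ℂ (fun Y => phi m w (ψ (Y + nn Z))) Z :=
      DifferentiableAt.comp Z (g := phi m w) (phi_diff m w (Or.inl (by linarith [hp.hR]))) d1
    exact (f_iter_diff ω q (nn Z) _).comp Z d2
  · intro Z
    by_cases hZ : |Z.im| < B
    · have hZ1 : |(Z+1).im| < B := by simpa using hZ
      have h1 := hnn1 Z
      rw [p1 (Z + 1) hZ1 (nn Z) (by simp; linarith), p1 Z hZ (nn Z + 1) (by push_cast; linarith)]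
      have e : Z + ((nn Z+1 : ℕ) : ℂ) = Z + 1 + nn Z := by push_cast; ring
      rw [e, Function.iterate_succ_apply']
    · have hZ1 : ¬ |(Z+1).im| < B := by simpa using hZ
      simp only [hΨ, if_neg hZ, if_neg hZ1, f0]
  · intro Z hZ
    simp only [hΨ, if_neg (not_lt.2 hZ)]

theorem ray {ω : ℂ} {q : ℕ} {m : ℕ} {a w : ℂ} {R r : ℝ} (h : Att ω q m a R r)
    (hω1 : ω ^ q = 1) (hR : 0 < R) (hw : w ^ m = -1 / (m * (-a))) :
    ∃ X : Set ℂ, IsClosed X ∧ IsPreconnected X ∧ 0 ∈ X ∧ (∀ A : ℝ, ∃ z ∈ X, A < ‖z‖) ∧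
      (∀ z ∈ X, z ≠ 0 → 0 < Gr ω z) ∧
      ∃ r1, 0 < r1 ∧ ∀ z ∈ X, z ≠ 0 → ‖z‖ < r1 → ∃ ζ : ℂ, 0 < ζ.re ∧ z = phi m w ζ := by
  have hm := h.par.hm
  have ha := h.par.ha
  have hω := h.hω
  have hG0 : Gr ω 0 = 0 := Gr_eq_zero hω 0 (K := 0) (fun n => by rw [Pq_iter_zero]; simp)
  obtain ⟨g, hg, -, hge⟩ := h.par.inverse (Pq_iter_zero ω q) (by
    rw [(Pq_iter_deriv_zero ω q).deriv, hω1]; exact one_ne_zero)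
  obtain ⟨r', hr', hfg0⟩ := Metric.eventually_nhds_iff_ball.1 hge
  have hfg : ∀ z, ‖z‖ < r' → (Pq ω)^[q] (g z) = z := fun z hz => hfg0 z (by simpa using hz)
  obtain ⟨R', hR', hpet⟩ := hg.petal hr'
  have hp := hpet w hw
  obtain ⟨Φ, hΦ0⟩ := hp.fat
  have hΦ : FatC g m (-a) w R' Φ := hΦ0
  obtain ⟨ζ0, hζ0, hζ0p⟩ := rep_pos hω hm (neg_ne_zero.2 ha) hp hfg
  obtain ⟨M, hM⟩ := rep_far h hR hp hfg hΦ
  obtain ⟨N0, ψ, hψ⟩ := hp.inv hΦ (M + 1)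
  obtain ⟨Ψ, p1, p2, p3, p4⟩ := strip_Psi (ω := ω) (q := q) hp hfg hψ
  have hD : (1:ℝ) < 2 ^ q := one_lt_pow₀ (by norm_num) (by have := h.hq; omega)
  have hu : ∀ Z, Gr ω (Ψ Z) = 2 ^ q * Gr ω (Ψ (Z + 1)) := by
    intro Z
    conv_lhs => rw [p3 Z]
    exact Gr_iter hω q _
  have hM0 : ∀ Z : ℂ, M ≤ |Z.im| → Gr ω (Ψ Z) = 0 := by
    intro Z hZ
    by_cases hB : |Z.im| < M + 1
    · obtain ⟨n, hn⟩ := exists_nat_gt (N0 - Z.re)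
      have hn' : N0 < Z.re + n := by linarith
      obtain ⟨i1, i2, -, -⟩ := hψ (Z + n) (by simpa using hn') (by simpa using hB)
      rw [p1 Z hB n hn', Gr_f_iter hω, hM _ i1 (by rw [i2]; simpa using hZ), mul_zero]
    · rw [p4 Z (not_lt.1 hB), hG0]
  have hpos : ∀ Z : ℂ, 0 < Gr ω (Ψ Z) → |Z.im| < M := by
    intro Z hZ
    by_contra hc
    rw [hM0 Z (not_lt.1 hc)] at hZ
    exact lt_irrefl _ hZ
  have hucont : Continuous (fun Z => Gr ω (Ψ Z)) := by
    rw [continuous_iff_continuousAt]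
    intro Z
    by_cases hB : |Z.im| < M + 1
    · exact (Gr_cont hω).continuousAt.comp (p2 Z hB).continuousAt
    · have ho : IsOpen {Y : ℂ | M < |Y.im|} := isOpen_lt continuous_const (by fun_prop)
      have he : (fun Z => Gr ω (Ψ Z)) =ᶠ[𝓝 Z] fun _ => 0 := by
        filter_upwards [ho.mem_nhds (show M < |Z.im| by linarith)] with Y hY
        exact hM0 Y (le_of_lt hY)
      exact continuousAt_const.congr he.symm
  have hmean : ∀ z, 0 < Gr ω (Ψ z) → ∃ ρ > 0, ∀ r, 0 < r → r < ρ →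
      Gr ω (Ψ z) ≤ Real.circleAverage (fun x => Gr ω (Ψ x)) z r := by
    intro z hz
    refine Gr_mean hω ?_ hz
    have ho : IsOpen {Y : ℂ | |Y.im| < M} := isOpen_lt (by fun_prop) continuous_const
    filter_upwards [ho.mem_nhds (hpos z hz)] with Y hY
    exact p2 Y (by have : |Y.im| < M := hY
                   linarith)
  -- base point
  set Z0 := Φ ζ0 with hZ0d
  have hZ0im : |Z0.im| < M := by
    by_contra hc
    rw [hM ζ0 hζ0 (not_lt.1 hc)] at hζ0p
    exact lt_irrefl _ hζ0p
  have hZ0e : Ψ Z0 = phi m w ζ0 := by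
    obtain ⟨n, hn⟩ := exists_nat_gt (N0 - Z0.re)
    have hn' : N0 < Z0.re + n := by linarith
    have hB : |Z0.im| < M + 1 := by linarith
    obtain ⟨i1, i2, -, -⟩ := hψ (Z0 + n) (by simpa using hn') (by simpa using hB)
    rw [p1 Z0 hB n hn']
    have : ψ (Z0 + n) = (Fz g m (-a) w)^[n] ζ0 := by
      apply Petal.fat_inj hΦ i1 (hp.iter_lt hζ0 n)
      rw [i2, hp.fat_iter hΦ hζ0]
    rw [this, rep_fg hp hfg hζ0]
  have hZ0p : 0 < Gr ω (Ψ Z0) := by rw [hZ0e]; exact hζ0p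
  obtain ⟨k, hk, hkc⟩ := strip_lemma (u := fun Z => Gr ω (Ψ Z)) hucont (fun z => Gr_nonneg hω _) hmean hD hu hM0 hZ0p
  have hopen : IsOpen {z | 0 < Gr ω (Ψ z)} := isOpen_lt continuous_const hucont
  have hoc : IsOpen (connectedComponentIn {z | 0 < Gr ω (Ψ z)} Z0) := hopen.connectedComponentIn
  have hcc : IsConnected (connectedComponentIn {z | 0 < Gr ω (Ψ z)} Z0) :=
    isConnected_connectedComponentIn_iff.2 hZ0p
  have hj := (hoc.isConnected_iff_isPathConnected.1 hcc).joinedIn Z0 (mem_connectedComponentIn hZ0p) _ hkc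
  obtain ⟨γ, hγ⟩ := hj
  have htail : ∀ ε : ℝ, 0 < ε → ∃ T, ∀ Z, 0 < Gr ω (Ψ Z) → T < Z.re → ‖Ψ Z‖ < ε := by
    intro ε hε
    set A0 : ℝ := 1 / (m * ‖-a‖ * ε ^ m) + 1 with hA0
    refine ⟨max N0 (Z0.re + 3/2 * (A0 + ‖ζ0‖)), fun Z hZ hT => ?_⟩
    have hB : |Z.im| < M + 1 := by linarith [hpos Z hZ]
    have hN : N0 < Z.re := (le_max_left _ _).trans_lt hT
    have hT2 := (le_max_right _ _).trans_lt hT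
    obtain ⟨i1, i2, -, -⟩ := hψ Z hN hB
    have e := p1 Z hB 0 (by simpa using hN)
    simp only [Nat.cast_zero, add_zero, Function.iterate_zero, id] at e
    rw [e]
    have hne : ψ Z ≠ 0 := by intro h0; rw [h0] at i1; simp at i1; linarith
    apply zet_small hm (neg_ne_zero.2 ha) hε
    rw [zet_phi hm (neg_ne_zero.2 ha) hw hne]
    have j1 := hΦ.2.2 _ _ i1 hζ0
    rw [i2, ← hZ0d] at j1
    have j2 := norm_add_le ((Z - Z0) - (ψ Z - ζ0)) (ψ Z - ζ0)
    rw [sub_add_cancel] at j2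
    have j3 := (Complex.re_le_norm (Z - Z0))
    rw [Complex.sub_re] at j3
    have j4 := norm_sub_le (ψ Z) ζ0
    linarith
  obtain ⟨X, x1, x2, x3, x4, x5, x6⟩ := ray_abs (Gr_cont hω) hG0 hD hu (isCompact_range γ.continuous)
    (isPreconnected_range γ.continuous) hk ⟨0, γ.source⟩ ⟨1, γ.target⟩
    (by rintro _ ⟨t, rfl⟩; exact connectedComponentIn_subset {z | 0 < Gr ω (Ψ z)} Z0 (hγ t))
    (fun Z hZ => (p2 Z (by linarith [hpos Z hZ])).continuousAt) htail
  refine ⟨X, x1, x2, x3, x4, x5, ?_⟩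
  obtain ⟨r1, hr1, hx⟩ := x6 N0
  refine ⟨r1, hr1, fun z hz hz0 hzr => ?_⟩
  obtain ⟨Z, hZ1, hZ2, rfl⟩ := hx z hz hz0 hzr
  have hB : |Z.im| < M + 1 := by linarith [hpos Z hZ1]
  obtain ⟨i1, i2, -, -⟩ := hψ Z hZ2 hB
  refine ⟨ψ Z, by linarith [hp.hR], ?_⟩
  have := p1 Z hB 0 (by simpa using hZ2)
  simpa using this

end

section

def Bc (ω : ℂ) (m : ℕ) (R : ℝ) (v : ℂ) : Set ℂ := connectedComponentIn (basin ω) (phi m v ((R + 1 : ℝ) : ℂ))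

lemma pt_Om (m : ℕ) (v : ℂ) (R : ℝ) : phi m v ((R + 1 : ℝ) : ℂ) ∈ Om m v R := ⟨_, by simp, rfl⟩

namespace Att
variable {ω : ℂ} {q m : ℕ} {a : ℂ} {R r : ℝ}

lemma pt_basin (h : Att ω q m a R r) {v : ℂ} (hv : v ^ m = -1 / (m * a)) :
    phi m v ((R + 1 : ℝ) : ℂ) ∈ basin ω := h.Om_basin hv (pt_Om m v R)

lemma Om_Bc (h : Att ω q m a R r) {v : ℂ} (hv : v ^ m = -1 / (m * a)) : Om m v R ⊆ Bc ω m R v :=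
  h.Om_sub_comp hv (pt_Om m v R)

lemma Bc_Lam (h : Att ω q m a R r) (hR : 0 < R) {v : ℂ} (hv : v ^ m = -1 / (m * a)) :
    Bc ω m R v ⊆ Lam ω q m v R :=
  h.conn_sub hR hv isPreconnected_connectedComponentIn (connectedComponentIn_subset _ _)
    (mem_connectedComponentIn (h.pt_basin hv)) ⟨0, pt_Om m v R⟩

lemma Bc_disj (h : Att ω q m a R r) (hR : 0 < R) {v v' z : ℂ} (hv : v ^ m = -1 / (m * a))
    (hv' : v' ^ m = -1 / (m * a)) (hz : z ∈ Bc ω m R v) (hz' : z ∈ Bc ω m R v') : v = v' :=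
  h.Lam_disj hv hv' (h.Bc_Lam hR hv hz) (h.Bc_Lam hR hv' hz')

lemma Bc_eq {v z : ℂ} (hz : z ∈ Bc ω m R v) : connectedComponentIn (basin ω) z = Bc ω m R v :=
  (connectedComponentIn_eq hz).symm

lemma Bc_basin {v z : ℂ} (hz : z ∈ Bc ω m R v) : z ∈ basin ω := connectedComponentIn_subset _ _ hz

lemma Bc_open (h : Att ω q m a R r) (hR : 0 < R) {v : ℂ} : IsOpen (Bc ω m R v) :=
  (h.basin_open hR).connectedComponentIn

lemma Bc_conn (h : Att ω q m a R r) {v : ℂ} (hv : v ^ m = -1 / (m * a)) : IsConnected (Bc ω m R v) :=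
  isConnected_connectedComponentIn_iff.2 (h.pt_basin hv)

lemma pt_tendsto (h : Att ω q m a R r) (v : ℂ) : Tendsto (fun n : ℕ => phi m v (n : ℂ)) atTop (𝓝 0) :=
  phi_tendsto h.par.hm v (by simpa using tendsto_natCast_atTop_atTop)

lemma pt_ev (h : Att ω q m a R r) {v : ℂ} (hv : v ^ m = -1 / (m * a)) :
    ∀ᶠ n : ℕ in atTop, phi m v (n : ℂ) ∈ Bc ω m R v := by
  have h1 := (tendsto_natCast_atTop_atTop (R := ℝ)).eventually_gt_atTop R
  filter_upwards [h1] with n hn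
  exact h.Om_Bc hv ⟨n, by simpa using hn, rfl⟩

lemma Bc_zero (h : Att ω q m a R r) {v : ℂ} (hv : v ^ m = -1 / (m * a)) : (0:ℂ) ∈ closure (Bc ω m R v) :=
  mem_closure_of_tendsto (h.pt_tendsto v) (h.pt_ev hv)

lemma dir_mul {v : ℂ} (hqm : q ∣ m) (hω1 : ω ^ q = 1) (hv : v ^ m = -1 / (m * a)) :
    (ω * v) ^ m = -1 / (m * a) := by
  obtain ⟨k, rfl⟩ := hqm
  rw [mul_pow, pow_mul ω, hω1, one_pow, one_mul, hv]

lemma img_Bc (h : Att ω q m a R r) (hR : 0 < R) (hqm : q ∣ m) (hω1 : ω ^ q = 1) {v : ℂ}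
    (hv : v ^ m = -1 / (m * a)) : Pq ω '' Bc ω m R v = Bc ω m R (ω * v) := by
  have hm := h.par.hm
  have ha := h.par.ha
  have hω0 : ω ≠ 0 := by intro h0; have := h.hω; rw [h0] at this; simp at this
  have hm0 : (0:ℝ) < m := by exact_mod_cast hm
  have hv' := dir_mul hqm hω1 hv
  have t1 := h.pt_tendsto v
  have t2 : Tendsto (fun n : ℕ => phi m v (n:ℂ) / ω) atTop (𝓝 0) := by simpa using t1.div_const ω
  have t3 : Tendsto (fun n : ℕ => (1 / (1 + phi m v (n:ℂ) / ω) ^ m).re) atTop (𝓝 1) := by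
    have : Tendsto (fun n : ℕ => (1 / (1 + phi m v (n:ℂ) / ω) ^ m)) atTop (𝓝 (1 / (1 + 0) ^ m)) := by
      refine tendsto_const_nhds.div ((tendsto_const_nhds.add t2).pow m) (by simp)
    have t := (Complex.continuous_re.tendsto _).comp this
    simp only [add_zero, one_pow, div_one, one_re] at t
    exact t
  have e1 := t3.eventually_const_lt (show (1/2:ℝ) < 1 by norm_num)
  have e2 := (tendsto_natCast_atTop_atTop (R := ℝ)).eventually_gt_atTop (2 * R)
  have e3 := (tendsto_zero_iff_norm_tendsto_zero.1 t2).eventually_lt_const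
    (show (0:ℝ) < 1 / (2 * m) by positivity)
  obtain ⟨n, n1, n2, n3, n4⟩ := (e1.and (e2.and (e3.and (h.pt_ev hv)))).exists
  set z := phi m v (n:ℂ) with hz
  have hz0 : z ≠ 0 := phi_ne_zero hm ha hv
  have hn0 : (0:ℝ) < n := by linarith
  have hnc : (n:ℂ) ≠ 0 := by exact_mod_cast hn0.ne'
  have hPz : Pq ω z = ω * z * (1 + z / ω) := by unfold Pq; field_simp
  have hphi : phi m (ω * v) (n:ℂ) = ω * z := by rw [hz]; unfold phi; ring
  have hzz : zet m a (Pq ω z) = n * (1 / (1 + z / ω) ^ m) := by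
    have h1 := zet_phi hm ha hv' hnc
    rw [hphi] at h1
    rw [hPz, ← h1, zet, zet, mul_pow (ω * z)]
    rw [div_mul_div_comm]; ring
  have hmem : Pq ω z ∈ Om m (ω * v) R := by
    refine ⟨zet m a (Pq ω z), ?_, ?_⟩
    · show R < (zet m a (Pq ω z)).re
      rw [hzz]
      have : ((n:ℂ) * (1 / (1 + z / ω) ^ m)).re = n * (1 / (1 + z / ω) ^ m).re := by
        rw [Complex.mul_re]; simp
      rw [this]
      nlinarith
    · refine phi_conj hm ha hv' (ζ := (n:ℂ)) (by simpa using hn0) ?_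
      rw [hphi, hPz, mul_div_cancel_left₀ _ (mul_ne_zero hω0 hz0), add_sub_cancel_left]
      exact n3.le
  rw [← Bc_eq n4, h.img_eq hR (Bc_basin n4), Bc_eq (h.Om_Bc hv' hmem)]

lemma iter_Bc (h : Att ω q m a R r) (hR : 0 < R) (hqm : q ∣ m) (hω1 : ω ^ q = 1) {v z : ℂ}
    (hv : v ^ m = -1 / (m * a)) (hz : z ∈ Bc ω m R v) (n : ℕ) :
    (ω ^ n * v) ^ m = -1 / (m * a) ∧ (Pq ω)^[n] z ∈ Bc ω m R (ω ^ n * v) := by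
  induction n with
  | zero => simpa using ⟨hv, hz⟩
  | succ n ih =>
    have e : ω ^ (n+1) * v = ω * (ω ^ n * v) := by ring
    rw [e, Function.iterate_succ_apply', ← h.img_Bc hR hqm hω1 ih.1]
    exact ⟨dir_mul hqm hω1 ih.1, _, ih.2, rfl⟩

lemma crit_Bc (h : Att ω q m a R r) (hR : 0 < R) (hqm : q ∣ m) (hω1 : ω ^ q = 1) {v : ℂ}
    (hv : v ^ m = -1 / (m * a)) : ∃ n : ℕ, (ω ^ n * v) ^ m = -1 / (m * a) ∧ -ω/2 ∈ Bc ω m R (ω ^ n * v) := by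
  obtain ⟨n, hn⟩ := h.crit hv (pt_Om m v R)
  obtain ⟨h1, h2⟩ := h.iter_Bc hR hqm hω1 hv (mem_connectedComponentIn (h.pt_basin hv)) n
  rw [Bc_eq h2] at hn
  exact ⟨n, h1, hn⟩

lemma m_eq (h : Att ω q m a R r) (hR : 0 < R) (hqm : q ∣ m) (hω1 : ω ^ q = 1) : m = q := by
  have hm := h.par.hm
  obtain ⟨v, hv⟩ := IsAlgClosed.exists_pow_nat_eq (-1 / (m * a) : ℂ) (n := m) (by omega)
  set e := Complex.exp (2 * Real.pi * Complex.I / m) with he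
  have hep : IsPrimitiveRoot e m := Complex.isPrimitiveRoot_exp m (by omega)
  have hv0 : v ≠ 0 := by
    rintro rfl
    rw [zero_pow (by omega)] at hv
    have hmc : (m:ℂ) ≠ 0 := by exact_mod_cast (by omega : m ≠ 0)
    exact div_ne_zero (neg_ne_zero.2 one_ne_zero) (mul_ne_zero hmc h.par.ha) hv.symm
  have hv' : (e * v) ^ m = -1 / (m * a) := by rw [mul_pow, hep.pow_eq_one, one_mul, hv]
  obtain ⟨n, n1, n2⟩ := h.crit_Bc hR hqm hω1 hv
  obtain ⟨k, k1, k2⟩ := h.crit_Bc hR hqm hω1 hv'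
  have h1 := h.Bc_disj hR n1 k1 n2 k2
  have h2 : ω ^ n = ω ^ k * e := by
    apply mul_right_cancel₀ hv0; rw [h1]; ring
  have h3 : e ^ q = 1 := by
    have := congrArg (· ^ q) h2
    simp only [mul_pow, ← pow_mul] at this
    rwa [mul_comm n, mul_comm k, pow_mul, pow_mul, hω1, one_pow, one_pow, one_mul, eq_comm] at this
  exact Nat.dvd_antisymm (hep.dvd_of_pow_eq_one _ h3) hqm

end Att

lemma Pq_sig (ω z : ℂ) : Pq ω (-ω - z) = Pq ω z := by unfold Pq; ring

lemma Pq_eq_iff {ω z u : ℂ} (h : Pq ω z = Pq ω u) : u = z ∨ u = -ω - z := by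
  have : (u - z) * (u - (-ω - z)) = 0 := by unfold Pq at h; linear_combination -h
  rcases mul_eq_zero.1 this with h | h
  · exact Or.inl (sub_eq_zero.1 h)
  · exact Or.inr (sub_eq_zero.1 h)

lemma basin_sig {ω z : ℂ} : -ω - z ∈ basin ω ↔ z ∈ basin ω := by
  rw [← basin_iff_Pq, Pq_sig, basin_iff_Pq]

lemma comp_sig {ω z u : ℂ} (hz : z ∈ basin ω) (hu : u ∈ connectedComponentIn (basin ω) z) :
    -ω - u ∈ connectedComponentIn (basin ω) (-ω - z) := by
  have h1 : IsPreconnected ((fun x => -ω - x) '' connectedComponentIn (basin ω) z) :=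
    isPreconnected_connectedComponentIn.image _ (by fun_prop)
  refine h1.subset_connectedComponentIn ⟨z, mem_connectedComponentIn hz, rfl⟩ ?_ ⟨u, hu, rfl⟩
  rintro _ ⟨x, hx, rfl⟩
  exact basin_sig.2 (connectedComponentIn_subset _ _ hx)

end

section

lemma exp_const {α : Type*} [TopologicalSpace α] {S : Set α} (hS : IsPreconnected S) {F : α → ℂ}
    (hF : ContinuousOn F S) (he : ∀ x ∈ S, ∀ y ∈ S, exp (F x) = exp (F y)) {x y : α} (hx : x ∈ S) (hy : y ∈ S) :
    F x = F y := by
  have hint : ∀ z ∈ S, ∃ n : ℤ, F z = F x + n * (2 * Real.pi * I) := fun z hz =>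
    Complex.exp_eq_exp_iff_exists_int.1 (he z hz x hx)
  set G : α → ℝ := fun z => ((F z - F x).im) / (2 * Real.pi) with hG
  have hGc : ContinuousOn G S := by
    apply ContinuousOn.div_const
    exact Complex.continuous_im.comp_continuousOn (hF.sub continuousOn_const)
  have hGn : ∀ z ∈ S, ∀ n : ℤ, F z = F x + n * (2 * Real.pi * I) → G z = n := by
    intro z hz n hn
    simp only [hG, hn, add_sub_cancel_left]
    have : ((n:ℂ) * (2 * Real.pi * I)).im = n * (2 * Real.pi) := by simp
    rw [this]; field_simp
  have hoc := (hS.image G hGc).ordConnected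
  obtain ⟨n, hn⟩ := hint y hy
  have hy' := hGn y hy n hn
  have hx' : G x = 0 := by simp [hG]
  have key : ∀ t ∈ G '' S, ∃ k : ℤ, t = k := by
    rintro _ ⟨z, hz, rfl⟩
    obtain ⟨k, hk⟩ := hint z hz
    exact ⟨k, hGn z hz k hk⟩
  have n0 : n = 0 := by
    by_contra hne
    rcases lt_or_gt_of_ne hne with h | h
    · have h1 : (n:ℝ) ≤ -1 := by exact_mod_cast (by omega : n ≤ -1)
      obtain ⟨k, hk⟩ := key (-1/2) (hoc.out ⟨y, hy, rfl⟩ ⟨x, hx, rfl⟩ ⟨by rw [hy']; linarith, by rw [hx']; norm_num⟩)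
      have h2 : ((2 * k : ℤ) : ℝ) = ((-1 : ℤ) : ℝ) := by push_cast; linarith
      have := Int.cast_injective h2
      omega
    · have h1 : (1:ℝ) ≤ n := by exact_mod_cast (by omega : 1 ≤ n)
      obtain ⟨k, hk⟩ := key (1/2) (hoc.out ⟨x, hx, rfl⟩ ⟨y, hy, rfl⟩ ⟨by rw [hx']; norm_num, by rw [hy']; linarith⟩)
      have h2 : ((2 * k : ℤ) : ℝ) = ((1 : ℤ) : ℝ) := by push_cast; linarith
      have := Int.cast_injective h2
      omega
  rw [hn, n0]; simp

noncomputable def arc (c : ℂ) (e : ℝ) (s : ℝ) : ℂ := c * exp ((-(e * s) : ℝ) * I)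

lemma arc_avoid {m : ℕ} (hm : 1 ≤ m) {v : ℂ} (hv : v ≠ 0) {ρ e s : ℝ} (hρ : 0 < ρ) (he : e = 1 ∨ e = -1)
    (hs : 0 ≤ s) (hs2 : s + 2 * Real.pi / m ≤ 2 * Real.pi) {ζ : ℂ} (hζ : 0 < ζ.re) :
    arc (v * ρ) e s ≠ phi m (v * exp ((e * Real.pi / m : ℝ) * I)) ζ := by
  intro heq
  have hm0 : (0:ℝ) < m := by exact_mod_cast hm
  have hmc : (m:ℂ) ≠ 0 := by exact_mod_cast hm0.ne'
  have hζ0 : ζ ≠ 0 := by rintro rfl; simp at hζ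
  have hρe : (ρ:ℂ) = exp (Real.log ρ) := by rw [← Complex.ofReal_exp, Real.exp_log hρ]
  unfold arc phi at heq
  rw [mul_assoc, mul_assoc, mul_right_inj' hv, hρe, ← Complex.exp_add, ← Complex.exp_add] at heq
  obtain ⟨n, hn⟩ := Complex.exp_eq_exp_iff_exists_int.1 heq
  have him := congrArg Complex.im hn
  have e1 : (-log ζ / (m:ℂ)).im = -(ζ.arg / m) := by
    have : (-log ζ / (m:ℂ)) = ((1/m : ℝ):ℂ) * (-log ζ) := by push_cast; ring
    rw [this, Complex.im_ofReal_mul]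
    simp [Complex.log_im]; ring
  simp only [Complex.add_im, e1, Complex.ofReal_im, Complex.im_ofReal_mul, Complex.I_im, mul_one, zero_add] at him
  have e2 : ((n:ℂ) * (2 * Real.pi * I)).im = n * (2 * Real.pi) := by simp
  rw [e2] at him
  have ha := Complex.abs_arg_lt_pi_div_two_iff.2 (Or.inl hζ)
  rw [abs_lt] at ha
  have hpi := Real.pi_pos
  have b1 : ζ.arg / m < Real.pi / m := by gcongr; linarith
  have b2 : -(Real.pi / m) < ζ.arg / m := by rw [← neg_div]; gcongr; linarith
  have b3 : 2 * Real.pi / m = 2 * (Real.pi / m) := by ring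
  rw [b3] at hs2
  rcases he with rfl | rfl
  · have h1 : (1 * Real.pi / m : ℝ) = Real.pi / m := by ring
    rw [h1] at him
    have n1 : (n:ℝ) < 0 := by nlinarith
    have n2 : (-1:ℝ) < n := by nlinarith
    have n3 : n < 0 := by exact_mod_cast n1
    have n4 : -1 < n := by exact_mod_cast n2
    omega
  · have h1 : (-1 * Real.pi / m : ℝ) = -(Real.pi / m) := by ring
    rw [h1] at him
    have n1 : (n:ℝ) < 1 := by nlinarith
    have n2 : (0:ℝ) < n := by nlinarith
    have n3 : n < 1 := by exact_mod_cast n1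
    have n4 : 0 < n := by exact_mod_cast n2
    omega

lemma arc_log {c : ℂ} {e S : ℝ} (hS : 0 ≤ S) {L : ℂ → ℂ} {Q : Set ℂ} (hL : ContinuousOn L Q)
    (hLe : ∀ z ∈ Q, exp (L z) = z) (hQ : ∀ s ∈ Icc 0 S, arc c e s ∈ Q) :
    L (arc c e S) - L c = -((e * S : ℝ) : ℂ) * I := by
  have hcont : Continuous (arc c e) := by unfold arc; fun_prop
  have h1 : ContinuousOn (fun s : ℝ => L (arc c e s) + ((e * s : ℝ) : ℂ) * I) (Icc 0 S) := by
    apply ContinuousOn.add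
    · exact hL.comp hcont.continuousOn hQ
    · exact Continuous.continuousOn (by fun_prop)
  have h2 : ∀ s ∈ Icc 0 S, exp (L (arc c e s) + ((e * s : ℝ) : ℂ) * I) = c := by
    intro s hs
    rw [Complex.exp_add, hLe _ (hQ s hs), arc, mul_assoc, ← Complex.exp_add]
    have : ((-(e * s) : ℝ) : ℂ) * I + ((e * s : ℝ) : ℂ) * I = 0 := by push_cast; ring
    rw [this]; simp
  have h3 := exp_const isPreconnected_Icc h1 (fun x hx y hy => (h2 x hx).trans (h2 y hy).symm)
    (x := S) (y := 0) ⟨hS, le_rfl⟩ ⟨le_rfl, hS⟩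
  have h4 : arc c e 0 = c := by simp [arc]
  simp only [h4] at h3
  simp only [mul_zero, Complex.ofReal_zero, zero_mul, add_zero] at h3
  rw [← h3]; ring

end

section

lemma two_rays {X X' Y : Set ℂ} {c b : ℂ} {S S' : ℝ} (hS : 0 ≤ S) (hS' : 0 ≤ S') (hpos : S + S' ≠ 0)
    (hX : IsClosed X ∧ IsPreconnected X ∧ (0:ℂ) ∈ X ∧ (∀ A : ℝ, ∃ z ∈ X, A < ‖z‖))
    (hX' : IsClosed X' ∧ IsPreconnected X' ∧ (0:ℂ) ∈ X' ∧ (∀ A : ℝ, ∃ z ∈ X', A < ‖z‖))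
    (hY : IsOpen Y) (hYc : IsConnected Y) (hcY : c ∈ Y) (hbY : b ∈ Y) (hYX : Disjoint Y X) (hYX' : Disjoint Y X')
    (hb : arc c 1 S = b) (hb' : arc c (-1) S' = b)
    (ha : ∀ s ∈ Icc 0 S, arc c 1 s ∉ X) (ha' : ∀ s ∈ Icc 0 S', arc c (-1) s ∉ X') : False := by
  obtain ⟨γ, hγ⟩ := (hY.isConnected_iff_isPathConnected.1 hYc).joinedIn c hcY b hbY
  have hγs : range γ ⊆ Y := by rintro _ ⟨t, rfl⟩; exact hγ t
  have hcg : c ∈ range γ := ⟨0, γ.source⟩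
  have hbg : b ∈ range γ := ⟨1, γ.target⟩
  have hcont : ∀ e, Continuous (arc c e) := fun e => by unfold arc; fun_prop
  have hQ : ∀ (e T : ℝ), IsCompact (range γ ∪ arc c e '' Icc 0 T) := fun e T =>
    (isCompact_range γ.continuous).union (isCompact_Icc.image (hcont e))
  have hd : ∀ (e T : ℝ) (Z : Set ℂ), Disjoint Y Z → (∀ s ∈ Icc 0 T, arc c e s ∉ Z) →
      Disjoint (range γ ∪ arc c e '' Icc 0 T) Z := by
    intro e T Z h1 h2
    rw [Set.disjoint_union_left]
    refine ⟨h1.mono_left hγs, ?_⟩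
    rw [Set.disjoint_left]
    rintro _ ⟨s, hs, rfl⟩
    exact h2 s hs
  obtain ⟨L, l1, l2⟩ := chain_log hX.1 hX.2.1 hX.2.2.1 hX.2.2.2 (hQ 1 S) (hd 1 S X hYX ha)
  obtain ⟨L', l1', l2'⟩ := chain_log hX'.1 hX'.2.1 hX'.2.2.1 hX'.2.2.2 (hQ (-1) S') (hd (-1) S' X' hYX' ha')
  have e1 := arc_log hS l1 l2 (fun s hs => Or.inr ⟨s, hs, rfl⟩)
  have e2 := arc_log hS' l1' l2' (fun s hs => Or.inr ⟨s, hs, rfl⟩)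
  rw [hb] at e1
  rw [hb'] at e2
  have hex : ∀ x ∈ range γ, exp (L x - L' x) = 1 := by
    intro x hx
    rw [Complex.exp_sub, l2 x (Or.inl hx), l2' x (Or.inl hx), div_self]
    rintro rfl
    exact Set.disjoint_left.1 hYX (hγs hx) hX.2.2.1
  have e3 := exp_const (isPreconnected_range γ.continuous) (F := fun x => L x - L' x)
    ((l1.mono subset_union_left).sub (l1'.mono subset_union_left))
    (fun x hx y hy => (hex x hx).trans (hex y hy).symm) hbg hcg
  have e4 : ((S + S' : ℝ) : ℂ) * I = 0 := by
    push_cast at e1 e2 ⊢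
    linear_combination e1 - e2 - e3
  rcases mul_eq_zero.1 e4 with h | h
  · exact hpos (by exact_mod_cast h)
  · exact I_ne_zero h

lemma Gr_zero' {ω : ℂ} (hω : ‖ω‖ = 1) : Gr ω 0 = 0 :=
  Gr_eq_zero hω 0 (K := 0) (fun n => by rw [Pq_iter_zero]; simp)

lemma phi_real (m : ℕ) (v : ℂ) {n : ℕ} (hn : 0 < n) : ∃ ρ : ℝ, 0 < ρ ∧ ∀ v, phi m v n = v * ρ := by
  refine ⟨Real.exp (-Real.log n / m), Real.exp_pos _, fun v => ?_⟩
  unfold phi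
  congr 1
  rw [Complex.ofReal_exp]
  push_cast
  rfl

namespace Att
variable {ω : ℂ} {q m : ℕ} {a : ℂ} {R r : ℝ}

lemma dir_ne (h : Att ω q m a R r) {v : ℂ} (hv : v ^ m = -1 / (m * a)) : v ≠ 0 := by
  rintro rfl
  have hm := h.par.hm
  rw [zero_pow (by omega)] at hv
  have hmc : (m:ℂ) ≠ 0 := by exact_mod_cast (by omega : m ≠ 0)
  exact div_ne_zero (neg_ne_zero.2 one_ne_zero) (mul_ne_zero hmc h.par.ha) hv.symm

lemma crit_sig {v u : ℂ} (hc : -ω/2 ∈ Bc ω m R v) (hu : u ∈ Bc ω m R v) : -ω - u ∈ Bc ω m R v := by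
  rw [← Bc_eq hc] at hu ⊢
  have := comp_sig (Bc_basin hc) hu
  have e : -ω - -ω/2 = -ω/2 := by ring
  rwa [e] at this

lemma sep (h : Att ω q m a R r) (hR : 0 < R) (hω1 : ω ^ q = 1) {v vc : ℂ} (hv : v ^ m = -1 / (m * a))
    (hvc : vc ^ m = -1 / (m * a)) (hne : v ≠ vc) (hc : -ω/2 ∈ Bc ω m R vc) : -ω ∉ closure (Bc ω m R v) := by
  intro hcl
  have hm := h.par.hm
  have hω := h.hω
  have hm0 : (0:ℝ) < m := by exact_mod_cast hm
  have hmc : (m:ℂ) ≠ 0 := by exact_mod_cast hm0.ne'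
  have hv0 := h.dir_ne hv
  have hpi := Real.pi_pos
  have hω0 : ω ≠ 0 := by intro h0; rw [h0] at hω; simp at hω
  -- angle
  have hep : IsPrimitiveRoot (exp (2 * Real.pi * I / m)) m := Complex.isPrimitiveRoot_exp m (by omega)
  have : NeZero m := ⟨by omega⟩
  obtain ⟨t, ht, hte⟩ := hep.eq_pow_of_pow_eq_one (ξ := vc / v) (by
    rw [div_pow, hv, hvc, div_self]; rw [← hv]; exact pow_ne_zero _ hv0)
  have ht0 : t ≠ 0 := by
    rintro rfl
    rw [pow_zero] at hte
    exact hne ((div_eq_one_iff_eq hv0).1 hte.symm).symm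
  have hvcv : vc = v * exp (2 * Real.pi * I / m) ^ t := by rw [hte]; field_simp
  -- rays
  have hw : ∀ e : ℝ, (e = 1 ∨ e = -1) → (v * exp ((e * Real.pi / m : ℝ) * I)) ^ m = -1 / (m * (-a)) := by
    intro e he
    rw [mul_pow, ← Complex.exp_nat_mul, hv]
    have e1 : (m:ℂ) * (((e * Real.pi / m : ℝ) : ℂ) * I) = e * Real.pi * I := by push_cast; field_simp
    rw [e1]
    have e2 : exp (e * Real.pi * I) = -1 := by
      rcases he with rfl | rfl
      · simp
      · push_cast; rw [neg_one_mul, neg_mul, Complex.exp_neg, Complex.exp_pi_mul_I]; norm_num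
    rw [e2, mul_neg_one, mul_neg (m:ℂ), div_neg]
  obtain ⟨X, x1, x2, x3, x4, x5, r1, hr1, x6⟩ := ray h hω1 hR (hw 1 (Or.inl rfl))
  obtain ⟨X', x1', x2', x3', x4', x5', r2, hr2, x6'⟩ := ray h hω1 hR (hw (-1) (Or.inr rfl))
  -- small points
  have t1 : ∀ᶠ n : ℕ in atTop, ‖phi m v (n:ℂ)‖ < min r1 r2 :=
    (tendsto_zero_iff_norm_tendsto_zero.1 (h.pt_tendsto v)).eventually_lt_const (lt_min hr1 hr2)
  obtain ⟨n, n1, n2, n3, n4⟩ := (t1.and ((h.pt_ev hv).and ((h.pt_ev hvc).and (eventually_gt_atTop 0)))).exists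
  obtain ⟨ρ, hρ, hρv⟩ := phi_real m v n4
  rw [hρv v] at n1 n2
  rw [hρv vc] at n3
  -- -ω off the rays
  have hGω : Gr ω (-ω) = 0 := by
    have := Gr_Pq hω (-ω)
    have e : Pq ω (-ω) = 0 := by unfold Pq; ring
    rw [e, Gr_zero' hω] at this
    linarith
  have hoff : -ω ∉ X ∪ X' := by
    rintro (hh | hh)
    · exact (x5 _ hh (neg_ne_zero.2 hω0)).ne' hGω
    · exact (x5' _ hh (neg_ne_zero.2 hω0)).ne' hGω
  obtain ⟨ε, hε, hball⟩ := Metric.isOpen_iff.1 (x1.union x1').isOpen_compl (-ω) hoff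
  have hb0 : (0:ℂ) ∉ basin ω := fun h0 => h0.2 ⟨0, rfl⟩
  have hBX : ∀ Z : Set ℂ, (∀ z ∈ Z, z ≠ 0 → 0 < Gr ω z) → ∀ u, Disjoint (Bc ω m R u) Z := by
    intro Z hZ u
    rw [Set.disjoint_left]
    intro z hz hzZ
    have hzb := Bc_basin hz
    have hz0 : z ≠ 0 := by rintro rfl; exact hb0 hzb
    exact (hZ z hzZ hz0).ne' (Gr_basin hω hzb.1)
  have hclc : -ω ∈ closure (Bc ω m R vc) := by
    have h0 := h.Bc_zero hvc
    have hcont : Continuous (fun z : ℂ => -ω - z) := by fun_prop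
    have := image_closure_subset_closure_image hcont ⟨0, h0, rfl⟩
    simp only [sub_zero] at this
    refine closure_mono ?_ this
    rintro _ ⟨u, hu, rfl⟩
    exact crit_sig hc hu
  set Y := (Bc ω m R v ∪ Metric.ball (-ω) ε) ∪ Bc ω m R vc with hY
  have hYo : IsOpen Y := ((h.Bc_open hR).union Metric.isOpen_ball).union (h.Bc_open hR)
  have hbc : IsConnected (Metric.ball (-ω) ε) := Metric.isConnected_ball hε
  have hmeet : ∀ u, -ω ∈ closure (Bc ω m R u) → (Bc ω m R u ∩ Metric.ball (-ω) ε).Nonempty := by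
    intro u hu
    rw [inter_comm]
    exact mem_closure_iff.1 hu _ Metric.isOpen_ball (Metric.mem_ball_self hε)
  have hYc : IsConnected Y := by
    refine IsConnected.union ?_ (IsConnected.union (hmeet v hcl) (h.Bc_conn hv) hbc) (h.Bc_conn hvc)
    obtain ⟨x, hx1, hx2⟩ := hmeet vc hclc
    exact ⟨x, Or.inr hx2, hx1⟩
  have hYX : Disjoint Y X := by
    rw [hY, Set.disjoint_union_left, Set.disjoint_union_left]
    refine ⟨⟨hBX X x5 _, ?_⟩, hBX X x5 _⟩
    rw [Set.disjoint_left]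
    exact fun z hz hzX => hball hz (Or.inl hzX)
  have hYX' : Disjoint Y X' := by
    rw [hY, Set.disjoint_union_left, Set.disjoint_union_left]
    refine ⟨⟨hBX X' x5' _, ?_⟩, hBX X' x5' _⟩
    rw [Set.disjoint_left]
    exact fun z hz hzX => hball hz (Or.inr hzX)
  have hnarc : ∀ e s : ℝ, ‖arc (v * ρ) e s‖ = ‖v * ρ‖ := by
    intro e s; rw [arc, norm_mul, Complex.norm_exp_ofReal_mul_I, mul_one]
  have harc0 : ∀ e s : ℝ, arc (v * ρ) e s ≠ 0 := by
    intro e s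
    rw [← norm_ne_zero_iff, hnarc, norm_ne_zero_iff]
    exact mul_ne_zero hv0 (by exact_mod_cast hρ.ne')
  have ht1 : (1:ℝ) ≤ t := by exact_mod_cast (by omega : 1 ≤ t)
  have ht2 : (t:ℝ) + 1 ≤ m := by exact_mod_cast ht
  have hexp : exp (2 * Real.pi * I / m) ^ t = exp ((2 * Real.pi * t / m : ℝ) * I) := by
    rw [← Complex.exp_nat_mul]; congr 1; push_cast; ring
  refine two_rays (X := X) (X' := X') (Y := Y) (c := v * ρ) (b := vc * ρ) (S := 2 * Real.pi * (m - t) / m)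
    (S' := 2 * Real.pi * t / m) ?_ (by positivity) ?_ ⟨x1, x2, x3, x4⟩ ⟨x1', x2', x3', x4'⟩ hYo hYc
    (Or.inl (Or.inl n2)) (Or.inr n3) hYX hYX' ?_ ?_ ?_ ?_
  · have : (0:ℝ) ≤ m - t := by linarith
    positivity
  · have : 2 * Real.pi * (m - t) / m + 2 * Real.pi * t / m = 2 * Real.pi := by field_simp; ring
    rw [this]; positivity
  · rw [arc, hvcv, hexp, mul_right_comm]
    congr 2
    have : ((-(1 * (2 * Real.pi * (m - t) / m)) : ℝ) : ℂ) * I = ((2 * Real.pi * t / m : ℝ) : ℂ) * I - 2 * Real.pi * I := by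
      push_cast; field_simp; ring
    rw [this, Complex.exp_sub, Complex.exp_two_pi_mul_I, div_one]
  · rw [arc, hvcv, hexp, mul_right_comm]
    congr 4
    ring
  · intro s hs hmem
    obtain ⟨ζ, hζ1, hζ2⟩ := x6 _ hmem (harc0 _ _) (by rw [hnarc]; exact n1.trans_le (min_le_left _ _))
    refine arc_avoid hm hv0 hρ (Or.inl rfl) hs.1 ?_ hζ1 hζ2
    have h1 := hs.2
    have : 2 * Real.pi * (m - t) / m + 2 * Real.pi / m ≤ 2 * Real.pi := by
      rw [← add_div, div_le_iff₀ hm0]; nlinarith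
    linarith
  · intro s hs hmem
    obtain ⟨ζ, hζ1, hζ2⟩ := x6' _ hmem (harc0 _ _) (by rw [hnarc]; exact n1.trans_le (min_le_right _ _))
    refine arc_avoid hm hv0 hρ (Or.inr rfl) hs.1 ?_ hζ1 hζ2
    have h1 := hs.2
    have : 2 * Real.pi * t / m + 2 * Real.pi / m ≤ 2 * Real.pi := by
      rw [← add_div, div_le_iff₀ hm0]; nlinarith
    linarith

end Att

end

section

namespace Att
variable {ω : ℂ} {q m : ℕ} {a : ℂ} {R r : ℝ}

lemma uniq (h : Att ω q m a R r) (hR : 0 < R) (hqm : q ∣ m) (hω1 : ω ^ q = 1) (n : ℕ) :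
    ∀ z ∈ basin ω, (∃ v, v ^ m = -1 / (m * a) ∧ (Pq ω)^[n] z ∈ Bc ω m R v) →
      (0:ℂ) ∈ closure (connectedComponentIn (basin ω) z) →
      ∃ v, v ^ m = -1 / (m * a) ∧ connectedComponentIn (basin ω) z = Bc ω m R v := by
  induction n with
  | zero =>
    rintro z hz ⟨v, hv, hzv⟩ _
    exact ⟨v, hv, Bc_eq hzv⟩
  | succ n ih =>
    rintro z hz ⟨v, hv, hzv⟩ hcl
    have hPz : Pq ω z ∈ basin ω := basin_iff_Pq.2 hz
    have hcont : Continuous (Pq ω) := by unfold Pq; fun_prop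
    have hcl' : (0:ℂ) ∈ closure (connectedComponentIn (basin ω) (Pq ω z)) := by
      rw [← h.img_eq hR hz]
      have := image_closure_subset_closure_image hcont ⟨0, hcl, rfl⟩
      rwa [Pq_zero] at this
    obtain ⟨v', hv', he⟩ := ih (Pq ω z) hPz ⟨v, hv, hzv⟩ hcl'
    have hu := (h.iter_Bc hR hqm hω1 hv' (mem_connectedComponentIn (h.pt_basin hv')) (q - 1)).1
    set u := ω ^ (q-1) * v' with hud
    have hωu : ω * u = v' := by
      rw [hud, ← mul_assoc, ← pow_succ', Nat.sub_add_cancel h.hq, hω1, one_mul]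
    have hPzm : Pq ω z ∈ Pq ω '' Bc ω m R u := by
      rw [h.img_Bc hR hqm hω1 hu, hωu, ← he]
      exact mem_connectedComponentIn hPz
    obtain ⟨b, hb, hbz⟩ := hPzm
    rcases Pq_eq_iff hbz with h1 | h1
    · rw [← h1] at hb
      exact ⟨u, hu, Bc_eq hb⟩
    · obtain ⟨k, k1, k2⟩ := h.crit_Bc hR hqm hω1 hv
      by_cases huc : u = ω ^ k * v
      · have := crit_sig (huc ▸ k2) hb
        rw [← h1] at this
        exact ⟨u, hu, Bc_eq this⟩
      · exfalso
        refine h.sep hR hω1 hu k1 huc k2 ?_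
        have hs : Continuous (fun z : ℂ => -ω - z) := by fun_prop
        have := image_closure_subset_closure_image hs ⟨0, hcl, rfl⟩
        simp only [sub_zero] at this
        refine closure_mono ?_ this
        rintro _ ⟨x, hx, rfl⟩
        have h2 := comp_sig hz hx
        have h3 : -ω - z = b := by rw [h1]; ring
        rwa [h3, Bc_eq hb] at h2

end Att

lemma main_aux (p q : ℕ) (hq : 2 ≤ q) (hcop : Nat.Coprime p q)
    (ω : ℂ) (hω : ω = Complex.exp (2 * Real.pi * Complex.I * (p : ℂ) / (q : ℂ))) :
    ∃ B : ZMod q → Set ℂ, Function.Injective B ∧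
      (∀ j, ∃ z ∈ basin ω, B j = connectedComponentIn (basin ω) z) ∧
      (∀ j, (0:ℂ) ∈ closure (B j)) ∧
      (∀ z ∈ basin ω, (0:ℂ) ∈ closure (connectedComponentIn (basin ω) z) →
        ∃ j, connectedComponentIn (basin ω) z = B j) ∧
      (∀ j, Pq ω '' B j ⊆ B (j + (p : ZMod q))) ∧
      (∀ j, (Pq ω)^[q] '' B j ⊆ B j) := by
  have hq0 : q ≠ 0 := by omega
  have : NeZero q := ⟨hq0⟩
  have hqc : (q:ℂ) ≠ 0 := by exact_mod_cast hq0
  set e := Complex.exp (2 * Real.pi * Complex.I / q) with he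
  have hep : IsPrimitiveRoot e q := Complex.isPrimitiveRoot_exp q hq0
  have hωe : ω = e ^ p := by
    rw [hω, he, ← Complex.exp_nat_mul]; congr 1; ring
  have hprim : IsPrimitiveRoot ω q := by rw [hωe]; exact hep.pow_of_coprime p hcop
  have hω1 := hprim.pow_eq_one
  have hnorm : ‖ω‖ = 1 := hprim.norm'_eq_one hq0
  obtain ⟨m, a, par, hqm⟩ := germ hnorm (by omega) hprim
  obtain ⟨R, hR1, hpet⟩ := par.petal (r := 1) one_pos
  have hR : 0 < R := by linarith
  have h : Att ω q m a R 1 := ⟨hnorm, by omega, par, hpet⟩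
  obtain rfl := h.m_eq hR hqm hω1
  obtain ⟨v0, hv0⟩ := IsAlgClosed.exists_pow_nat_eq (-1 / (m * a) : ℂ) (n := m) (by omega)
  have hv00 := h.dir_ne hv0
  have he0 : e ≠ 0 := Complex.exp_ne_zero _
  set v : ZMod m → ℂ := fun j => v0 * e ^ j.val with hvd
  have hdir : ∀ j, v j ^ m = -1 / (m * a) := by
    intro j
    simp only [hvd]
    rw [mul_pow, hv0, pow_right_comm e, hep.pow_eq_one, one_pow, mul_one]
  have hall : ∀ u : ℂ, u ^ m = -1 / (m * a) → ∃ j, u = v j := by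
    intro u hu
    obtain ⟨t, ht, hte⟩ := hep.eq_pow_of_pow_eq_one (ξ := u / v0) (by
      rw [div_pow, hv0, hu, div_self]; rw [← hv0]; exact pow_ne_zero _ hv00)
    refine ⟨(t : ZMod m), ?_⟩
    simp only [hvd]
    rw [ZMod.val_natCast_of_lt ht, hte]; field_simp
  have hmul : ∀ j, ω * v j = v (j + (p : ZMod m)) := by
    intro j
    simp only [hvd]
    rw [ZMod.val_add, ZMod.val_natCast, Nat.add_mod_mod, ← pow_eq_pow_mod _ hep.pow_eq_one, pow_add, hωe]
    ring
  have hstep : ∀ j, Pq ω '' Bc ω m R (v j) ⊆ Bc ω m R (v (j + (p : ZMod m))) := by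
    intro j
    rw [h.img_Bc hR hqm hω1 (hdir j), hmul]
  refine ⟨fun j => Bc ω m R (v j), ?_, ?_, ?_, ?_, hstep, ?_⟩
  · intro i j hij
    have h1 : Bc ω m R (v i) = Bc ω m R (v j) := hij
    obtain ⟨x, hx⟩ := (h.Bc_conn (hdir i)).nonempty
    have h2 := h.Bc_disj hR (hdir i) (hdir j) hx (h1 ▸ hx)
    have h3 := mul_left_cancel₀ hv00 h2
    exact ZMod.val_injective m (hep.pow_inj (ZMod.val_lt i) (ZMod.val_lt j) h3)
  · exact fun j => ⟨_, h.pt_basin (hdir j), rfl⟩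
  · exact fun j => h.Bc_zero (hdir j)
  · intro z hz hcl
    obtain ⟨u, hu, n, hn⟩ := h.reach hR hz
    rw [← Function.iterate_mul] at hn
    obtain ⟨u', hu', he'⟩ := h.uniq hR hqm hω1 _ z hz ⟨u, hu, h.Om_Bc hu hn⟩ hcl
    obtain ⟨j, rfl⟩ := hall u' hu'
    exact ⟨j, he'⟩
  · rintro j _ ⟨x, hx, rfl⟩
    have := (h.iter_Bc hR hqm hω1 (hdir j) hx m).2
    rwa [hω1, one_mul] at this

end

/-- The immediate parabolic basin of `P_ω` consists of exactly
`q` components permuted cyclically with combinatorial rotation number `p/q`: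
there are exactly `q` distinct connected components of `Λ_ω` whose closure
contains `0`, indexed `B j` for `j : ZMod q` so that `P_ω` maps `B j` into
`B (j + p)`; in particular each `B j` is invariant under `P_ω^[q]`. -/
theorem immediate_basin_components
    (p q : ℕ) (hq : 2 ≤ q) (hp0 : 0 < p) (hpq : p < q) (hcop : Nat.Coprime p q)
    (ω : ℂ) (hω : ω = Complex.exp (2 * Real.pi * Complex.I * (p : ℂ) / (q : ℂ))) :
    ∃ B : ZMod q → Set ℂ,
      Function.Injective B ∧
      (∀ j, ∃ z ∈ basin ω, B j = connectedComponentIn (basin ω) z) ∧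
      (∀ j, (0 : ℂ) ∈ closure (B j)) ∧
      (∀ z ∈ basin ω, (0 : ℂ) ∈ closure (connectedComponentIn (basin ω) z) →
        ∃ j, connectedComponentIn (basin ω) z = B j) ∧
      (∀ j, Pq ω '' B j ⊆ B (j + (p : ZMod q))) ∧
      (∀ j, (Pq ω)^[q] '' B j ⊆ B j) := by
  exact main_aux p q hq hcop ω hω
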